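/- arXiv:1410.7449 — 10 statements merged into one kernel-verified Lean document; each statement's English description precedes it below -/
import Mathlib

section
/- For every natural number N there exist constants C(N) and C'(N), depending only on N, with the following property. Let F_q be a finite field with q elements and characteristic p, let f ∈ F_q[t][x] be a square-free polynomial with deg_x f ≤ N and deg_t f ≤ N, and let a, b, c ∈ F_q[t] with gcd(a,b) = 1 and deg a, deg b, deg c ≤ N. Assume that either (i) p > C(N), or (ii) a ≠ 0 and the rational function b/a does not lie in the subfield F_q(t^p) of F_q(t). Then the number of pairs (β₁, β₂) ∈ F_q² such that f(t, a(t)β₁ + b(t)β₂ + c(t)) is not square-free in F_q[t] is at most C'(N)·q. In particular, if q > C'(N) then there exist β₁, β₂ ∈ F_q such that f(t, a(t)β₁ + b(t)β₂ + c(t)) is square-free. -/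
/-- The condition that the rational function `b/a ∈ F(t)` does not lie in the subfield
`F(t^p)` generated over (the image of) `F` by `t^p`, where `p = ringChar F`. -/
def notInFtp (F : Type*) [Field F] (a b : Polynomial F) : Prop :=
  (algebraMap (Polynomial F) (RatFunc F)) b / (algebraMap (Polynomial F) (RatFunc F)) a ∉
    Subfield.closure (Set.range (RatFunc.C (K := F)) ∪ {RatFunc.X ^ ringChar F})

open Polynomial in
/-- Coefficientwise derivative (partial derivative with respect to `t`). -/
noncomputable def dt {F : Type*} [CommRing F] (f : F[X][X]) : F[X][X] :=
  ∑ i ∈ f.support, monomial i (derivative (f.coeff i))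

namespace SqfSparse

open Polynomial

section dt

variable {F : Type*} [CommRing F]

theorem coeff_dt (f : F[X][X]) (n : ℕ) : (dt f).coeff n = derivative (f.coeff n) := by
  unfold dt
  rw [finsetSum_coeff]
  simp only [coeff_monomial]
  rw [Finset.sum_ite_eq']
  split_ifs with h
  · rfl
  · rw [notMem_support_iff.mp h, derivative_zero]

theorem dt_add (f g : F[X][X]) : dt (f + g) = dt f + dt g := by
  ext1 n; simp [coeff_dt]

theorem dt_monomial (n : ℕ) (c : F[X]) : dt (monomial n c) = monomial n (derivative c) := by
  ext1 m
  rw [coeff_dt, coeff_monomial, coeff_monomial]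
  split_ifs <;> simp

theorem dt_C (c : F[X]) : dt (C c) = C (derivative c) := by
  simpa using dt_monomial 0 c

theorem dt_mul (f g : F[X][X]) : dt (f * g) = dt f * g + f * dt g := by
  ext1 n
  rw [coeff_dt, coeff_mul, coeff_add, coeff_mul, coeff_mul, derivative_sum,
    ← Finset.sum_add_distrib]
  refine Finset.sum_congr rfl fun x _ => ?_
  rw [derivative_mul, coeff_dt, coeff_dt]

theorem natDegree_dt_le (f : F[X][X]) : (dt f).natDegree ≤ f.natDegree := by
  rw [natDegree_le_iff_coeff_eq_zero]
  intro n hn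
  rw [coeff_dt, coeff_eq_zero_of_natDegree_lt hn, derivative_zero]

/-- chain rule -/
theorem chain {A : Type*} [CommRing A] (φ : F →+* A) (L : A[X]) (f : F[X][X]) :
    derivative (eval₂ (mapRingHom φ) L f) =
      eval₂ (mapRingHom φ) L (dt f) + eval₂ (mapRingHom φ) L (derivative f) * derivative L := by
  induction f using Polynomial.induction_on' with
  | add p q hp hq =>
    rw [eval₂_add, derivative_add, hp, hq, dt_add, derivative_add, eval₂_add, eval₂_add]; ring
  | monomial n c =>
    rw [dt_monomial, eval₂_monomial, eval₂_monomial, derivative_monomial, eval₂_monomial,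
      derivative_mul, derivative_pow, coe_mapRingHom, derivative_map]
    simp [Polynomial.map_mul]
    ring

end dt

section ker

variable {F : Type*} [Field F]

theorem dvd_dt {h : F[X][X]} (h0 : h ≠ 0) (hd : h ∣ dt h) : dt h = 0 := by
  obtain ⟨e, he⟩ := hd
  by_contra hne
  have he0 : e ≠ 0 := by rintro rfl; simp at he; exact hne he
  have h1 : (dt h).natDegree = h.natDegree + e.natDegree := by rw [he, natDegree_mul h0 he0]
  have h2 := natDegree_dt_le h
  have h3 : e.natDegree = 0 := by omega
  obtain ⟨c, rfl⟩ := natDegree_eq_zero.mp h3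
  have h4 : derivative (h.leadingCoeff) = h.leadingCoeff * c := by
    have := congrArg (fun q => q.coeff h.natDegree) he
    simpa [coeff_dt] using this
  have hc : c ≠ 0 := by rintro rfl; simp at he0
  have hl : h.leadingCoeff ≠ 0 := leadingCoeff_ne_zero.mpr h0
  have h5 := degree_derivative_lt hl
  rw [h4, degree_mul] at h5
  have : (0 : WithBot ℕ) ≤ degree c := zero_le_degree_iff.mpr hc
  have h6 : degree h.leadingCoeff ≤ degree h.leadingCoeff + degree c := le_add_of_nonneg_right this
  exact absurd h5 (not_lt.mpr h6)

theorem dvd_derivative {R : Type*} [CommRing R] [IsDomain R] {h : R[X]} (h0 : h ≠ 0)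
    (hd : h ∣ derivative h) : derivative h = 0 := by
  by_contra hne
  have := degree_le_of_dvd hd hne
  exact absurd (degree_derivative_lt h0) (not_lt.mpr this)

theorem not_irreducible_of_dt (p : ℕ) [Fact p.Prime] [CharP F p] [PerfectRing F p] (h : F[X][X])
    (h1 : dt h = 0) (h2 : derivative h = 0) : ¬ Irreducible h := by
  have hp : p ≠ 0 := (Fact.out : p.Prime).ne_zero
  have e1 := expand_contract p h2 hp
  have hl : contract p h ∈ lifts (frobenius F[X] p) := by
    rw [lifts_iff_coeff_lifts]
    intro n
    rw [coeff_contract hp]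
    have h3 : derivative (h.coeff (n * p)) = 0 := by rw [← coeff_dt, h1, coeff_zero]
    rw [← expand_contract p h3 hp, polynomial_expand_eq]
    exact ⟨_, frobenius_def _ _⟩
  obtain ⟨k, hk⟩ := hl
  have hk' : k.map (frobenius F[X] p) = contract p h := hk
  rw [← e1, ← hk', ← map_expand, map_frobenius_expand]
  exact not_irreducible_pow (Fact.out : p.Prime).ne_one

variable {Ω : Type*} [Field Ω] [Algebra F Ω]

/-- evaluation at a point of the plane -/
noncomputable def ev (F : Type*) [Field F] {Ω : Type*} [Field Ω] [Algebra F Ω] (τ x : Ω) :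
    F[X][X] →+* Ω :=
  eval₂RingHom (aeval (R := F) τ).toRingHom x

theorem ev_C (τ x : Ω) (c : F[X]) : ev F τ x (C c) = aeval τ c := by simp [ev]

theorem ev_apply (τ x : Ω) (f : F[X][X]) : 
    ev F τ x f = eval₂ (aeval (R := F) τ).toRingHom x f := rfl

theorem exists_factor {R S : Type*} [CommRing R] [IsDomain R] [UniqueFactorizationMonoid R]
    [CommRing S] [IsDomain S]
    (φ : R →+* S) (f : R) (hf : f ≠ 0) (h : φ f = 0) : ∃ g, Irreducible g ∧ g ∣ f ∧ φ g = 0 := by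
  induction f using WfDvdMonoid.induction_on_irreducible with
  | zero => exact absurd rfl hf
  | unit u hu => exact absurd h (hu.map φ).ne_zero
  | mul a i ha hi ih =>
    rw [map_mul, mul_eq_zero] at h
    rcases h with h | h
    · exact ⟨i, hi, dvd_mul_right _ _, h⟩
    · obtain ⟨g, h1, h2, h3⟩ := ih ha h
      exact ⟨g, h1, h2.mul_left _, h3⟩

theorem dvd_of_ev {τ x : Ω} (hτ : Transcendental F τ) {h k : F[X][X]} (hi : Irreducible h)
    (h0 : ev F τ x h = 0) (k0 : ev F τ x k = 0) : h ∣ k := by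
  have hinj : Function.Injective (aeval (R := F) τ).toRingHom :=
    transcendental_iff_injective.mp hτ
  have hdeg : h.natDegree ≠ 0 := by
    intro hd
    obtain ⟨c, rfl⟩ := natDegree_eq_zero.mp hd
    rw [ev_C] at h0
    have : c = 0 := hinj (by simpa using h0)
    subst this
    exact hi.ne_zero (by simp)
  have hprim := hi.isPrimitive hdeg
  let K := FractionRing F[X]
  let ψ : K →+* Ω := IsFractionRing.lift hinj
  have hψ : ψ.comp (algebraMap F[X] K) = (aeval (R := F) τ).toRingHom := by
    refine RingHom.ext fun y => ?_
    exact IsFractionRing.lift_algebraMap hinj y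
  have key : ∀ q : F[X][X], eval₂ ψ x (q.map (algebraMap F[X] K)) = ev F τ x q := by
    intro q
    rw [eval₂_map, hψ, ev_apply]
  apply hprim.dvd_of_fraction_map_dvd_fraction_map (K := K)
  by_contra hnd
  have hirr := (hprim.irreducible_iff_irreducible_map_fraction_map (K := K)).mp hi
  obtain ⟨u, v, huv⟩ := (hirr.coprime_iff_not_dvd).mpr hnd
  have := congrArg (eval₂ ψ x) huv
  rw [eval₂_add, eval₂_mul, eval₂_mul, key, key, h0, k0] at this
  simp at this

/-- a squarefree `f` vanishing at a generic point -/
theorem exists_generic {τ x : Ω} (hτ : Transcendental F τ) {f : F[X][X]} (hf : Squarefree f)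
    (h0 : ev F τ x f = 0) : ∃ h : F[X][X], Irreducible h ∧ h ∣ f ∧ ev F τ x h = 0 ∧
      (ev F τ x (dt f) = 0 → dt h = 0) ∧ (ev F τ x (derivative f) = 0 → derivative h = 0) := by
  obtain ⟨h, hi, ⟨k, hk⟩, he⟩ := exists_factor (ev F τ x) f hf.ne_zero h0
  have hnk : ¬ h ∣ k := by
    rintro ⟨l, rfl⟩
    exact hi.not_isUnit (hf h ⟨l, by rw [hk]; ring⟩)
  refine ⟨h, hi, ⟨k, hk⟩, he, fun hd => ?_, fun hd => ?_⟩
  · have := dvd_of_ev hτ hi he hd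
    rw [hk, dt_mul, dvd_add_left (dvd_mul_right _ _)] at this
    exact dvd_dt hi.ne_zero ((hi.prime.dvd_or_dvd this).resolve_right hnk)
  · have := dvd_of_ev hτ hi he hd
    rw [hk, derivative_mul, dvd_add_left (dvd_mul_right _ _)] at this
    exact dvd_derivative hi.ne_zero ((hi.prime.dvd_or_dvd this).resolve_right hnk)

end ker

section core

variable {F : Type*} [Field F] {Ω : Type*} [Field Ω] [Algebra F Ω]

theorem not_alg_pair {B : Fin 2 → Ω} (hB : AlgebraicIndependent F B) {i j : Fin 2} (hij : i ≠ j) :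
    ¬ IsAlgebraic (Algebra.adjoin F {B j}) (B i) := by
  have := hB.transcendental_adjoin (s := {j}) (i := i) (by simpa using hij)
  rwa [Set.image_singleton] at this

theorem not_both_alg {B : Fin 2 → Ω} (hB : AlgebraicIndependent F B) (τ : Ω) :
    ¬ (∀ i, IsAlgebraic (Algebra.adjoin F {τ}) (B i)) := by
  intro h
  let M := AlgebraicIndependent.matroid F Ω
  have hind : M.Indep (Set.range B) := by
    rw [AlgebraicIndependent.matroid_indep_iff]
    exact hB.to_subtype_range
  have hsub : Set.range B ⊆ M.closure {τ} := by
    rw [AlgebraicIndependent.matroid_closure_eq]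
    rintro _ ⟨i, rfl⟩
    exact h i
  have h1 := hind.encard_le_eRk_of_subset hsub
  rw [M.eRk_closure_eq] at h1
  have h2 := h1.trans (M.eRk_le_encard _)
  rw [Set.encard_singleton, ← Set.image_univ, hB.injective.injOn.encard_image] at h2
  simp at h2

theorem aeval_alg (s : Set Ω) (τ : Ω) (hτ : IsAlgebraic (Algebra.adjoin F s) τ) (c : F[X]) :
    IsAlgebraic (Algebra.adjoin F s) (aeval τ c) := by
  have : aeval τ c = aeval τ (c.map (algebraMap F (Algebra.adjoin F s))) := by
    rw [aeval_map_algebraMap]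
  rw [this]
  induction (c.map (algebraMap F (Algebra.adjoin F s))) using Polynomial.induction_on' with
  | add p q hp hq => rw [map_add]; exact hp.add hq
  | monomial n c => rw [aeval_monomial]; exact (isAlgebraic_algebraMap _).mul (hτ.pow n)

theorem gen_alg (τ : Ω) : IsAlgebraic (Algebra.adjoin F {τ}) τ :=
  isAlgebraic_algebraMap (⟨τ, Algebra.subset_adjoin rfl⟩ : Algebra.adjoin F {τ})

/-- `x` is algebraic over `F(τ)` as soon as a polynomial nonvanishing at `τ` kills it. -/
theorem alg_of_ev {τ x : Ω} {f : F[X][X]} (h0 : ev F τ x f = 0) {i : ℕ}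
    (hi : aeval τ (f.coeff i) ≠ 0) : IsAlgebraic (Algebra.adjoin F {τ}) x := by
  let σ : Algebra.adjoin F {τ} := ⟨τ, Algebra.subset_adjoin rfl⟩
  have hσ : ∀ c : F[X], algebraMap (Algebra.adjoin F {τ}) Ω (aeval σ c) = aeval τ c := by
    intro c
    rw [← aeval_algebraMap_apply]
    rfl
  refine ⟨f.map (aeval σ).toRingHom, ?_, ?_⟩
  · intro h
    apply hi
    have := congrArg (fun q => q.coeff i) h
    simp only [coeff_map, coeff_zero] at this
    rw [← hσ]
    have h2 : aeval σ (f.coeff i) = 0 := this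
    rw [h2, map_zero]
  · rw [aeval_def, eval₂_map]
    have : (algebraMap (Algebra.adjoin F {τ}) Ω).comp (aeval (R := F) σ).toRingHom
        = (aeval (R := F) τ).toRingHom := RingHom.ext hσ
    rw [this]
    exact h0

variable {B : Fin 2 → Ω} {a b : F[X]}

theorem lin_not_alg (hB : AlgebraicIndependent F B) (hab : IsCoprime a b) {τ : Ω}
    (hτ : IsAlgebraic F τ) :
    ¬ IsAlgebraic (Algebra.adjoin F {τ}) (aeval τ a * B 0 + aeval τ b * B 1) := by
  intro hx
  have hinj : ∀ s : Set Ω, Function.Injective (algebraMap F (Algebra.adjoin F s)) :=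
    fun s => (algebraMap F (Algebra.adjoin F s)).injective
  have hτ' : ∀ s : Set Ω, IsAlgebraic (Algebra.adjoin F s) τ := fun s => hτ.extendScalars (hinj s)
  have hx' : ∀ s : Set Ω, IsAlgebraic (Algebra.adjoin F s)
      (aeval τ a * B 0 + aeval τ b * B 1) := fun s =>
    IsAlgebraic.adjoin_of_forall_isAlgebraic (s := {τ}) (t := s)
      (by rintro y ⟨hy, -⟩; rw [Set.mem_singleton_iff.mp hy]; exact hτ' s) hx
  have hc : ∀ s c, IsAlgebraic (Algebra.adjoin F s) (aeval τ c) := fun s c => aeval_alg s τ (hτ' s) c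
  by_cases h : aeval τ a = 0
  · have hb : aeval τ b ≠ 0 := by
      intro hb
      obtain ⟨u, v, huv⟩ := hab
      have := congrArg (aeval τ) huv
      simp [h, hb] at this
    apply not_alg_pair hB (i := 1) (j := 0) (by decide)
    have e : B 1 = (aeval τ b)⁻¹ * (aeval τ a * B 0 + aeval τ b * B 1) := by
      rw [h]; field_simp; ring
    rw [e]
    exact (hc _ _).inv.mul (hx' _)
  · apply not_alg_pair hB (i := 0) (j := 1) (by decide)
    have e : B 0 = (aeval τ a)⁻¹ * ((aeval τ a * B 0 + aeval τ b * B 1) - aeval τ b * B 1) := by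
      field_simp; ring
    rw [e]
    exact (hc _ _).inv.mul ((hx' _).sub ((hc _ _).mul (gen_alg _)))

theorem core_alg [PerfectField F] (hB : AlgebraicIndependent F B) (hab : IsCoprime a b) {τ : Ω}
    (hτ : IsAlgebraic F τ) {f : F[X][X]} (hf : Squarefree f) {x y : Ω}
    (hx : x = aeval τ a * B 0 + aeval τ b * B 1)
    (h0 : ev F τ x f = 0) (h1 : ev F τ x (dt f) + ev F τ x (derivative f) * y = 0) : False := by
  have hna := lin_not_alg hB hab hτ
  rw [← hx] at hna
  have hInteg : IsIntegral F τ := hτ.isIntegral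
  have key : ∀ k : F[X][X], ev F τ x k = 0 → C (minpoly F τ) ∣ k := by
    intro k hk
    rw [C_dvd_iff_dvd_coeff]
    intro i
    apply minpoly.dvd
    by_contra hne
    exact hna (alg_of_ev hk hne)
  obtain ⟨k, rfl⟩ := key f h0
  have hm : ev F τ x (C (minpoly F τ)) = 0 := by rw [ev_C, minpoly.aeval]
  rw [dt_mul, derivative_mul, derivative_C, dt_C] at h1
  simp only [map_add, map_mul, hm, zero_mul, add_zero, map_zero] at h1
  have hsep : (minpoly F τ).Separable :=
    PerfectField.separable_of_irreducible (minpoly.irreducible hInteg)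
  rw [ev_C] at h1
  have hk : ev F τ x k = 0 :=
    (mul_eq_zero.mp h1).resolve_left (hsep.aeval_derivative_ne_zero (minpoly.aeval F τ))
  obtain ⟨l, rfl⟩ := key k hk
  have := hf (C (minpoly F τ)) ⟨l, by ring⟩
  rw [isUnit_C] at this
  exact (minpoly.irreducible hInteg).not_isUnit this

theorem core (p : ℕ) [Fact p.Prime] [CharP F p] [PerfectRing F p] [PerfectField F]
    (hB : AlgebraicIndependent F B) (hab : IsCoprime a b)
    {f : F[X][X]} (hf : Squarefree f)
    (H : a * derivative b - derivative a * b ≠ 0 ∨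
      (derivative a = 0 ∧ derivative b = 0 ∧ a.natDegree = 0 ∧ b.natDegree = 0 ∧
        ∀ h : F[X][X], h ∣ f → dt h = 0 → ∃ k : F[X], h = k.map C))
    {τ x y : Ω}
    (hx : x = aeval τ a * B 0 + aeval τ b * B 1)
    (hy : y = aeval τ (derivative a) * B 0 + aeval τ (derivative b) * B 1)
    (h0 : ev F τ x f = 0) (h1 : ev F τ x (dt f) + ev F τ x (derivative f) * y = 0) : False := by
  by_cases hτ : IsAlgebraic F τ
  · exact core_alg hB hab hτ hf hx h0 h1
  obtain ⟨h, hi, hdvd, he, hdt, hdx⟩ := exists_generic hτ hf h0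
  have haev : ∀ c, aeval τ c = 0 → c = 0 := fun c hc =>
    (transcendental_iff.mp hτ) c hc
  rcases H with hW | ⟨da, db, na, nb, hconst⟩
  · have hfx : ev F τ x (derivative f) = 0 := by
      by_contra hne
      obtain ⟨i, hi⟩ : ∃ i, f.coeff i ≠ 0 := by
        by_contra! hall
        exact hf.ne_zero (by ext1 i; simpa using hall i)
      have xalg : IsAlgebraic (Algebra.adjoin F {τ}) x :=
        alg_of_ev h0 (i := i) (fun hc => hi (haev _ hc))
      have evalg : ∀ k : F[X][X], IsAlgebraic (Algebra.adjoin F {τ}) (ev F τ x k) := by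
        intro k
        induction k using Polynomial.induction_on' with
        | add p q hp hq => rw [map_add]; exact hp.add hq
        | monomial n c =>
          rw [ev_apply, eval₂_monomial]
          exact (aeval_alg _ τ (gen_alg τ) c).mul (xalg.pow n)
      have yalg : IsAlgebraic (Algebra.adjoin F {τ}) y := by
        have : y = -(ev F τ x (dt f)) * (ev F τ x (derivative f))⁻¹ := by
          field_simp; linear_combination h1
        rw [this]
        exact (evalg _).neg.mul (evalg _).inv
      have al : ∀ c : F[X], IsAlgebraic (Algebra.adjoin F {τ}) (aeval τ c) :=
        fun c => aeval_alg _ τ (gen_alg τ) c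
      have hw : aeval τ a * aeval τ (derivative b) - aeval τ (derivative a) * aeval τ b ≠ 0 := by
        intro hz
        exact hW (haev _ (by simpa using hz))
      refine not_both_alg hB τ ?_
      intro i
      fin_cases i
      · have : B 0 = (aeval τ (derivative b) * x - aeval τ b * y) *
          (aeval τ a * aeval τ (derivative b) - aeval τ (derivative a) * aeval τ b)⁻¹ := by
          rw [eq_mul_inv_iff_mul_eq₀ hw, hx, hy]; ring
        show IsAlgebraic _ (B 0)
        rw [this]
        exact (((al _).mul xalg).sub ((al _).mul yalg)).mul
          (((al _).mul (al _)).sub ((al _).mul (al _))).inv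
      · have : B 1 = (aeval τ a * y - aeval τ (derivative a) * x) *
          (aeval τ a * aeval τ (derivative b) - aeval τ (derivative a) * aeval τ b)⁻¹ := by
          rw [eq_mul_inv_iff_mul_eq₀ hw, hx, hy]; ring
        show IsAlgebraic _ (B 1)
        rw [this]
        exact (((al _).mul yalg).sub ((al _).mul xalg)).mul
          (((al _).mul (al _)).sub ((al _).mul (al _))).inv
    rw [hfx, zero_mul, add_zero] at h1
    exact not_irreducible_of_dt p h (hdt h1) (hdx hfx) hi
  · rw [hy, da, db] at h1
    simp only [map_zero, zero_mul, add_zero, mul_zero] at h1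
    obtain ⟨k, rfl⟩ := hconst h hdvd (hdt h1)
    have hk0 : k ≠ 0 := by rintro rfl; exact hi.ne_zero (by simp)
    have hxk : aeval x k = 0 := by
      rw [ev_apply, eval₂_map] at he
      have : (aeval (R := F) τ).toRingHom.comp C = algebraMap F Ω := by ext; simp
      rw [this] at he
      exact he
    obtain ⟨α, rfl⟩ := natDegree_eq_zero.mp na
    obtain ⟨β, rfl⟩ := natDegree_eq_zero.mp nb
    apply lin_not_alg hB hab (τ := 0) (isAlgebraic_zero)
    have hx' : aeval (0 : Ω) (C α) * B 0 + aeval (0 : Ω) (C β) * B 1 = x := by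
      rw [hx]; simp only [aeval_C]
    rw [hx']
    exact IsAlgebraic.extendScalars (algebraMap F _).injective ⟨k, hk0, hxk⟩

end core

section degrees

variable {F : Type*} [Field F]

/-- all coefficients have total degree at most `d` -/
def cd (d : ℕ) (G : (MvPolynomial (Fin 2) F)[X]) : Prop := ∀ n, (G.coeff n).totalDegree ≤ d

theorem cd_mono {d e : ℕ} (h : d ≤ e) {G : (MvPolynomial (Fin 2) F)[X]} (hG : cd d G) : cd e G :=
  fun n => (hG n).trans h

theorem cd_add {d : ℕ} {G H : (MvPolynomial (Fin 2) F)[X]} (hG : cd d G) (hH : cd d H) :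
    cd d (G + H) := fun n => by
  rw [coeff_add]
  exact (MvPolynomial.totalDegree_add _ _).trans (max_le (hG n) (hH n))

theorem cd_sum {ι : Type*} (s : Finset ι) {d : ℕ} {G : ι → (MvPolynomial (Fin 2) F)[X]}
    (hG : ∀ i ∈ s, cd d (G i)) : cd d (∑ i ∈ s, G i) := fun n => by
  rw [finsetSum_coeff]
  exact MvPolynomial.totalDegree_finsetSum_le fun i hi => hG i hi n

theorem cd_mul {d e : ℕ} {G H : (MvPolynomial (Fin 2) F)[X]} (hG : cd d G) (hH : cd e H) :
    cd (d + e) (G * H) := fun n => by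
  rw [coeff_mul]
  exact MvPolynomial.totalDegree_finsetSum_le fun i _ =>
    (MvPolynomial.totalDegree_mul _ _).trans (add_le_add (hG _) (hH _))

theorem cd_map (c : F[X]) : cd 0 (c.map (MvPolynomial.C (σ := Fin 2))) := fun n => by
  rw [coeff_map, MvPolynomial.totalDegree_C]

theorem cd_C {d : ℕ} {r : MvPolynomial (Fin 2) F} (h : r.totalDegree ≤ d) : cd d (C r) := fun n => by
  rw [coeff_C]
  split_ifs
  · exact h
  · simp

theorem cd_pow {G : (MvPolynomial (Fin 2) F)[X]} (hG : cd 1 G) (n : ℕ) : cd n (G ^ n) := by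
  induction n with
  | zero => rw [pow_zero, ← C_1]; exact cd_C (by simp)
  | succ n ih => rw [pow_succ]; exact cd_mul ih hG

theorem cd_derivative {d : ℕ} {G : (MvPolynomial (Fin 2) F)[X]} (hG : cd d G) :
    cd d (derivative G) := fun n => by
  rw [coeff_derivative]
  refine (MvPolynomial.totalDegree_mul _ _).trans ?_
  have : ((n : MvPolynomial (Fin 2) F) + 1) = MvPolynomial.C ((n : F) + 1) := by simp
  rw [this, MvPolynomial.totalDegree_C, add_zero]
  exact hG _

theorem totalDegree_resultant {d : ℕ} {G H : (MvPolynomial (Fin 2) F)[X]} (hG : cd d G)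
    (hH : cd d H) (m n : ℕ) : (resultant G H m n).totalDegree ≤ (m + n) * d := by
  unfold resultant
  rw [Matrix.det_apply]
  refine MvPolynomial.totalDegree_finsetSum_le fun σ _ => ?_
  have hent : ∀ i j, (sylvester G H m n i j).totalDegree ≤ d := by
    intro i j
    unfold sylvester
    rw [Matrix.of_apply]
    induction j using Fin.addCases with
    | left j =>
      rw [Fin.addCases_left]
      split_ifs
      · exact hH _
      · simp
    | right j =>
      rw [Fin.addCases_right]
      split_ifs
      · exact hG _
      · simp
  have hp : (∏ i, sylvester G H m n (σ i) i).totalDegree ≤ (m + n) * d := by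
    refine (MvPolynomial.totalDegree_finsetProd _ _).trans ?_
    refine (Finset.sum_le_card_nsmul _ _ d fun i _ => hent _ _).trans ?_
    simp
  rcases Int.units_eq_one_or (Equiv.Perm.sign σ) with h | h <;> rw [h]
  · simpa using hp
  · simpa using hp

theorem schwartz [Fintype F] {D : MvPolynomial (Fin 2) F} (hD : D ≠ 0) {d : ℕ}
    (hd : D.totalDegree ≤ d) :
    Set.ncard {β : F × F | MvPolynomial.eval ![β.1, β.2] D = 0} ≤ d * Fintype.card F := by
  classical
  have h := MvPolynomial.schwartz_zippel_totalDegree hD (Finset.univ : Finset F)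
  have hq : (0 : ℚ≥0) < (Fintype.card F : ℚ≥0) := by exact_mod_cast Fintype.card_pos
  rw [Finset.card_univ, div_le_div_iff₀ (by positivity) hq] at h
  have h2 : (((Fintype.piFinset fun _ : Fin 2 => (Finset.univ : Finset F)).filter
      (fun v => MvPolynomial.eval v D = 0)).card) * Fintype.card F ≤
      D.totalDegree * Fintype.card F ^ 2 := by exact_mod_cast h
  have h3 : (((Fintype.piFinset fun _ : Fin 2 => (Finset.univ : Finset F)).filter
      (fun v => MvPolynomial.eval v D = 0)).card) ≤ D.totalDegree * Fintype.card F := by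
    have : 0 < Fintype.card F := Fintype.card_pos
    refine Nat.le_of_mul_le_mul_right (h2.trans (le_of_eq ?_)) this
    ring
  refine le_trans ?_ (h3.trans (Nat.mul_le_mul_right _ hd))
  rw [← Set.ncard_coe_finset]
  refine Set.ncard_le_ncard_of_injOn (fun β : F × F => ![β.1, β.2]) ?_ ?_ (Finset.finite_toSet _)
  · intro β hβ
    simpa using hβ
  · rintro ⟨a, b⟩ _ ⟨c, d⟩ _ h
    have h0 := congrFun h 0
    have h1 := congrFun h 1
    simp at h0 h1
    rw [h0, h1]

end degrees

section generic

variable {F : Type} [Field F]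

/-- the generic linear form -/
noncomputable def genL (a b : F[X]) : (MvPolynomial (Fin 2) F)[X] :=
  a.map MvPolynomial.C * C (MvPolynomial.X 0) + b.map MvPolynomial.C * C (MvPolynomial.X 1)

/-- the generic value -/
noncomputable def gen (a b : F[X]) (f : F[X][X]) : (MvPolynomial (Fin 2) F)[X] :=
  eval₂ (mapRingHom MvPolynomial.C) (genL a b) f

theorem gen_map (a b : F[X]) (f : F[X][X]) (β : F × F) :
    (gen a b f).map (MvPolynomial.eval ![β.1, β.2]) = eval (a * C β.1 + b * C β.2) f := by
  have hid : (MvPolynomial.eval ![β.1, β.2]).comp (MvPolynomial.C : F →+* _) = RingHom.id F := by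
    ext; simp
  rw [← coe_mapRingHom, gen, hom_eval₂, mapRingHom_comp, hid]
  simp only [genL, coe_mapRingHom, Polynomial.map_add, Polynomial.map_mul, map_map, hid, map_id,
    map_C, MvPolynomial.eval_X, Matrix.cons_val_zero, Matrix.cons_val_one, mapRingHom_id]
  rfl

theorem gen_cd {M : ℕ} (a b : F[X]) (f : F[X][X]) (hf : f.natDegree ≤ M) : cd M (gen a b f) := by
  unfold gen
  rw [eval₂_eq_sum_range]
  refine cd_sum _ fun i hi => ?_
  have hi' : i ≤ M := by rw [Finset.mem_range] at hi; omega
  refine cd_mono (d := 0 + i) (by omega) (cd_mul (cd_map _) (cd_pow ?_ i))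
  refine cd_add (cd_mul (d := 0) (e := 1) (cd_map _) (cd_C ?_))
    (cd_mul (d := 0) (e := 1) (cd_map _) (cd_C ?_))
  · rw [MvPolynomial.totalDegree_X]
  · rw [MvPolynomial.totalDegree_X]

theorem gen_natDegree {M : ℕ} {a b : F[X]} {f : F[X][X]} (hf : f.natDegree ≤ M)
    (hfc : ∀ i, (f.coeff i).natDegree ≤ M) (ha : a.natDegree ≤ M) (hb : b.natDegree ≤ M) :
    (gen a b f).natDegree ≤ M + M * M := by
  unfold gen
  rw [eval₂_eq_sum_range]
  refine natDegree_sum_le_of_forall_le _ _ fun i hi => ?_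
  have hi' : i ≤ M := by rw [Finset.mem_range] at hi; omega
  refine natDegree_mul_le.trans (add_le_add (natDegree_map_le.trans (hfc i)) ?_)
  refine natDegree_pow_le.trans (Nat.mul_le_mul hi' ?_)
  refine (natDegree_add_le _ _).trans (max_le ?_ ?_)
  · exact (natDegree_mul_C_le _ _).trans (natDegree_map_le.trans ha)
  · exact (natDegree_mul_C_le _ _).trans (natDegree_map_le.trans hb)

theorem gen_no_root (p : ℕ) [Fact p.Prime] [CharP F p] [PerfectRing F p] [PerfectField F]
    {a b : F[X]} (hab : IsCoprime a b) {f : F[X][X]} (hf : Squarefree f)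
    (H : a * derivative b - derivative a * b ≠ 0 ∨
      (derivative a = 0 ∧ derivative b = 0 ∧ a.natDegree = 0 ∧ b.natDegree = 0 ∧
        ∀ h : F[X][X], h ∣ f → dt h = 0 → ∃ k : F[X], h = k.map C))
    {Ω : Type} [Field Ω] [Algebra F Ω] (j : MvPolynomial (Fin 2) F →ₐ[F] Ω)
    (hj : Function.Injective j) (τ : Ω) (h0 : eval₂ j.toRingHom τ (gen a b f) = 0)
    (h1 : eval₂ j.toRingHom τ (derivative (gen a b f)) = 0) : False := by
  have hB : AlgebraicIndependent F (fun i => j (MvPolynomial.X i)) :=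
    (MvPolynomial.algebraicIndependent_X (Fin 2) F).map' hj
  have hmap : ∀ c : F[X], eval₂ j.toRingHom τ (c.map MvPolynomial.C) = aeval τ c := by
    intro c
    have : j.toRingHom.comp MvPolynomial.C = algebraMap F Ω := by
      ext r
      exact j.commutes r
    rw [eval₂_map, this, aeval_def]
  have hgen : ∀ k : F[X][X], eval₂ j.toRingHom τ (eval₂ (mapRingHom MvPolynomial.C) (genL a b) k)
      = ev F τ (eval₂ j.toRingHom τ (genL a b)) k := by
    intro k
    have := hom_eval₂ k (mapRingHom MvPolynomial.C) (eval₂RingHom j.toRingHom τ) (genL a b)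
    rw [coe_eval₂RingHom] at this
    rw [this, ev_apply]
    congr 1
    exact RingHom.ext hmap
  refine core p hB hab hf H (τ := τ) (x := eval₂ j.toRingHom τ (genL a b))
    (y := eval₂ j.toRingHom τ (derivative (genL a b))) ?_ ?_ ?_ ?_
  · unfold genL
    rw [eval₂_add, eval₂_mul, eval₂_mul, hmap, hmap, eval₂_C, eval₂_C]; rfl
  · unfold genL
    rw [derivative_add, derivative_mul, derivative_mul, derivative_C, derivative_C, mul_zero,
      mul_zero, add_zero, add_zero, derivative_map, derivative_map,
      eval₂_add, eval₂_mul, eval₂_mul, hmap, hmap, eval₂_C, eval₂_C]; rfl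
  · rw [← hgen]; exact h0
  · unfold gen at h1
    rw [chain, eval₂_add, eval₂_mul, hgen, hgen] at h1
    exact h1

end generic

section final

variable {F : Type} [Field F]

theorem gen_resultant (p : ℕ) [Fact p.Prime] [CharP F p] [PerfectRing F p] [PerfectField F]
    {a b : F[X]} (hab : IsCoprime a b) {f : F[X][X]} (hf : Squarefree f)
    (H : a * derivative b - derivative a * b ≠ 0 ∨
      (derivative a = 0 ∧ derivative b = 0 ∧ a.natDegree = 0 ∧ b.natDegree = 0 ∧
        ∀ h : F[X][X], h ∣ f → dt h = 0 → ∃ k : F[X], h = k.map C)) :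
    gen a b f ≠ 0 ∧ resultant (gen a b f) (derivative (gen a b f)) ≠ 0 := by
  let A := MvPolynomial (Fin 2) F
  let Ω := AlgebraicClosure (FractionRing A)
  let j : A →ₐ[F] Ω := IsScalarTower.toAlgHom F A Ω
  have hj : Function.Injective j := by
    have : Function.Injective (algebraMap A Ω) := by
      rw [IsScalarTower.algebraMap_eq A (FractionRing A) Ω]
      exact (algebraMap (FractionRing A) Ω).injective.comp (IsFractionRing.injective A _)
    exact this
  have key := fun τ : Ω => gen_no_root p hab hf H j hj τ
  constructor
  · intro h
    refine key 0 ?_ ?_ <;> simp [h]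
  · intro h
    have hj' : Function.Injective j.toRingHom := hj
    have h2 : resultant ((gen a b f).map j.toRingHom) ((derivative (gen a b f)).map j.toRingHom)
        = 0 := by
      rw [natDegree_map_eq_of_injective hj', natDegree_map_eq_of_injective hj',
        resultant_map_map, h, map_zero]
    have h3 := (resultant_eq_zero_iff.mp h2).2
    rw [isCoprime_iff_aeval_ne_zero_of_isAlgClosed Ω Ω] at h3
    push Not at h3
    obtain ⟨τ, h4, h5⟩ := h3
    refine key τ ?_ ?_
    · simpa [aeval_def, eval₂_map] using h4
    · simpa [aeval_def, eval₂_map] using h5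

theorem mainc0 [Fintype F] (p : ℕ) [Fact p.Prime] [CharP F p] [PerfectRing F p] [PerfectField F]
    {M : ℕ} {a b : F[X]} (hab : IsCoprime a b) {f : F[X][X]} (hf : Squarefree f)
    (hfd : f.natDegree ≤ M) (hfc : ∀ i, (f.coeff i).natDegree ≤ M)
    (ha : a.natDegree ≤ M) (hb : b.natDegree ≤ M)
    (H : a * derivative b - derivative a * b ≠ 0 ∨
      (derivative a = 0 ∧ derivative b = 0 ∧ a.natDegree = 0 ∧ b.natDegree = 0 ∧
        ∀ h : F[X][X], h ∣ f → dt h = 0 → ∃ k : F[X], h = k.map C)) :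
    Set.ncard {β : F × F | ¬ Squarefree (eval (a * C β.1 + b * C β.2) f)} ≤
      (M + 2 * (M + M * M) * M) * Fintype.card F := by
  obtain ⟨hg0, hr0⟩ := gen_resultant p hab hf H
  set g := gen a b f with hg
  have hcd : cd M g := gen_cd a b f hfd
  have hdeg : g.natDegree ≤ M + M * M := gen_natDegree hfd hfc ha hb
  have hdeg' : (derivative g).natDegree ≤ M + M * M :=
    (natDegree_derivative_le g).trans ((Nat.sub_le _ _).trans hdeg)
  set r := resultant g (derivative g) with hr
  have hD : g.leadingCoeff * r ≠ 0 := mul_ne_zero (leadingCoeff_ne_zero.mpr hg0) hr0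
  have hDd : (g.leadingCoeff * r).totalDegree ≤ M + 2 * (M + M * M) * M := by
    refine (MvPolynomial.totalDegree_mul _ _).trans (add_le_add (hcd _) ?_)
    refine (totalDegree_resultant hcd (cd_derivative hcd) _ _).trans ?_
    exact Nat.mul_le_mul_right _ (by omega)
  refine le_trans (Set.ncard_le_ncard ?_ (Set.toFinite _)) (schwartz hD hDd)
  intro β hβ
  simp only [Set.mem_ofPred_eq] at hβ ⊢
  by_contra hne
  apply hβ
  rw [← gen_map, ← hg]
  set ψ := MvPolynomial.eval ![β.1, β.2] with hψ
  rw [map_mul] at hne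
  have h1 : ψ g.leadingCoeff ≠ 0 := left_ne_zero_of_mul hne
  have h2 : ψ r ≠ 0 := right_ne_zero_of_mul hne
  by_cases hd : g.natDegree = 0
  · have : g.map ψ = C (ψ g.leadingCoeff) := by
      rw [eq_C_of_natDegree_eq_zero hd, map_C, leadingCoeff_C]
    rw [this]
    exact (isUnit_C.mpr h1.isUnit).squarefree
  · obtain ⟨u, v, -, -, e⟩ := exists_mul_add_mul_eq_C_resultant g (derivative g) le_rfl le_rfl
      (Or.inl hd)
    have e2 := congrArg (Polynomial.map ψ) e
    rw [Polynomial.map_add, Polynomial.map_mul, Polynomial.map_mul, map_C, ← hr,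
      ← derivative_map] at e2
    apply Separable.squarefree
    refine ⟨C (ψ r)⁻¹ * u.map ψ, C (ψ r)⁻¹ * v.map ψ, ?_⟩
    have e3 : C (ψ r)⁻¹ * C (ψ r) = (1 : F[X]) := by
      rw [← C_mul, inv_mul_cancel₀ h2, C_1]
    rw [← e3, ← e2]
    ring

theorem squarefree_taylor {c : F[X]} {f : F[X][X]} (hf : Squarefree f) :
    Squarefree (taylor c f) := by
  intro h hh
  have h1 : (taylorEquiv c).symm h * (taylorEquiv c).symm h ∣ f := by
    have := map_dvd (taylorEquiv c).symm hh
    rw [map_mul] at this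
    have e : (taylorEquiv c).symm (taylor c f) = f := (taylorEquiv c).symm_apply_apply f
    rwa [e] at this
  have h2 := (hf _ h1).map (taylorEquiv c)
  simpa using h2

theorem coeff_taylor_natDegree_le {N : ℕ} {c : F[X]} {f : F[X][X]} (hfd : f.natDegree ≤ N)
    (hfc : ∀ i, (f.coeff i).natDegree ≤ N) (hc : c.natDegree ≤ N) (i : ℕ) :
    ((taylor c f).coeff i).natDegree ≤ N + N * N := by
  rw [taylor_coeff, eval_eq_sum_range]
  refine natDegree_sum_le_of_forall_le _ _ fun k hk => ?_
  rw [Finset.mem_range] at hk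
  have h1 := natDegree_hasseDeriv_le f i
  refine natDegree_mul_le.trans (add_le_add ?_ ?_)
  · rw [hasseDeriv_coeff]
    refine natDegree_mul_le.trans ?_
    rw [natDegree_natCast, zero_add]
    exact hfc _
  · exact natDegree_pow_le.trans (Nat.mul_le_mul (by omega) hc)

theorem coeff_swap (f : F[X][X]) (i j : ℕ) :
    ((Bivariate.swap f).coeff i).coeff j = (f.coeff j).coeff i := by
  induction f using Polynomial.induction_on' with
  | add p q hp hq => simp [hp, hq]
  | monomial n c =>
    induction c using Polynomial.induction_on' with
    | add p q hp hq => simp only [map_add, coeff_add, hp, hq]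
    | monomial m r =>
      rw [Bivariate.swap_monomial_monomial]
      simp only [coeff_monomial]
      split_ifs <;> simp_all [coeff_monomial]

theorem natDegree_of_dvd {M : ℕ} {f h : F[X][X]} (hf0 : f ≠ 0)
    (hfc : ∀ i, (f.coeff i).natDegree ≤ M) (hh : h ∣ f) (i : ℕ) : (h.coeff i).natDegree ≤ M := by
  have h1 : (Bivariate.swap h).natDegree ≤ (Bivariate.swap f).natDegree := by
    have h3 : Bivariate.swap h ∣ Bivariate.swap f := by
      obtain ⟨k, hk⟩ := hh
      exact ⟨Bivariate.swap k, by rw [hk, map_mul]⟩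
    refine natDegree_le_of_dvd h3 ?_
    intro h4
    apply hf0
    rw [← Bivariate.swap_swap_apply f, h4, map_zero]
  have h2 : (Bivariate.swap f).natDegree ≤ M := by
    rw [natDegree_le_iff_coeff_eq_zero]
    intro n hn
    ext j
    rw [coeff_swap, coeff_zero]
    exact coeff_eq_zero_of_natDegree_lt ((hfc j).trans_lt hn)
  rw [natDegree_le_iff_coeff_eq_zero]
  intro n hn
  rw [← coeff_swap, coeff_eq_zero_of_natDegree_lt ((h1.trans h2).trans_lt hn), coeff_zero]

theorem const_of_derivative {p : ℕ} [CharP F p] {c : F[X]} (hc : c.natDegree < p)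
    (h : derivative c = 0) : c.natDegree = 0 := by
  by_contra hd
  obtain ⟨n, hn⟩ := Nat.exists_eq_succ_of_ne_zero hd
  have h1 : (derivative c).coeff n = 0 := by rw [h, coeff_zero]
  rw [coeff_derivative] at h1
  have h2 : c.coeff (n + 1) ≠ 0 := by
    rw [← Nat.succ_eq_add_one, ← hn, coeff_natDegree, leadingCoeff_ne_zero]
    rintro rfl
    simp at hd
  have h3 : ((n + 1 : ℕ) : F) ≠ 0 := by
    rw [Ne, CharP.cast_eq_zero_iff F p]
    intro hdvd
    have := Nat.le_of_dvd (Nat.succ_pos n) hdvd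
    omega
  push_cast at h3
  exact (mul_ne_zero h2 h3) h1

theorem wronskian {a b : F[X]} (hab : IsCoprime a b) (ha : a ≠ 0)
    (hW : a * derivative b - derivative a * b = 0) : derivative a = 0 ∧ derivative b = 0 := by
  have h1 : derivative a = 0 := by
    have hd : a ∣ derivative a * b := ⟨derivative b, (sub_eq_zero.mp hW).symm⟩
    have hd2 : a ∣ derivative a := hab.dvd_of_dvd_mul_right hd
    by_contra h0
    exact absurd (degree_le_of_dvd hd2 h0) (not_le.mpr (degree_derivative_lt ha))
  refine ⟨h1, ?_⟩
  rw [h1, zero_mul, sub_zero] at hW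
  exact (mul_eq_zero.mp hW).resolve_left ha

theorem mem_closure {p : ℕ} [Fact p.Prime] [CharP F p] {a : F[X]} (h : derivative a = 0) :
    algebraMap F[X] (RatFunc F) a ∈
      Subfield.closure (Set.range (RatFunc.C (K := F)) ∪ {RatFunc.X ^ p}) := by
  rw [← expand_contract p h (Fact.out : p.Prime).ne_zero, expand_eq_sum, Polynomial.sum, map_sum]
  refine Subfield.sum_mem _ fun i _ => ?_
  rw [map_mul, map_pow, map_pow, RatFunc.algebraMap_C, RatFunc.algebraMap_X]
  refine Subfield.mul_mem _ ?_ (Subfield.pow_mem _ ?_ _)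
  · exact Subfield.subset_closure (Or.inl ⟨_, rfl⟩)
  · exact Subfield.subset_closure (Or.inr rfl)

theorem main_bound [Fintype F] {N : ℕ} {f : F[X][X]} {a b c : F[X]} (hf : Squarefree f)
    (hfd : f.natDegree ≤ N) (hfc : ∀ i, (f.coeff i).natDegree ≤ N) (hab : IsRelPrime a b)
    (ha : a.natDegree ≤ N) (hb : b.natDegree ≤ N) (hc : c.natDegree ≤ N)
    (H : N + N * N < ringChar F ∨ (a ≠ 0 ∧ notInFtp F a b)) {M : ℕ} (hM : M = N + N * N) :
    Set.ncard {β : F × F | ¬ Squarefree (eval (a * C β.1 + b * C β.2 + c) f)} ≤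
      (M + 2 * (M + M * M) * M) * Fintype.card F := by
  have hab' : IsCoprime a b := isRelPrime_iff_isCoprime.mp hab
  have hprime : (ringChar F).Prime := CharP.char_is_prime F (ringChar F)
  have : Fact (ringChar F).Prime := ⟨hprime⟩
  have hsq := squarefree_taylor (c := c) hf
  have hcoef := coeff_taylor_natDegree_le hfd hfc hc
  rw [← hM] at hcoef H
  have hNM : N ≤ M := by rw [hM]; exact Nat.le_add_right _ _
  have := mainc0 (ringChar F) (M := M) hab' hsq ((natDegree_taylor f c).le.trans (hfd.trans hNM))
    hcoef (ha.trans hNM) (hb.trans hNM) ?_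
  · simpa only [taylor_eval] using this
  by_cases hW : a * derivative b - derivative a * b = 0
  swap
  · exact Or.inl hW
  right
  rcases H with H | ⟨ha0, H⟩
  · have hder : derivative a = 0 ∧ derivative b = 0 := by
      by_cases ha0 : a = 0
      · subst ha0
        have hu : IsUnit b := isCoprime_zero_left.mp hab'
        obtain ⟨r, -, rfl⟩ := Polynomial.isUnit_iff.mp hu
        simp
      · exact wronskian hab' ha0 hW
    refine ⟨hder.1, hder.2, const_of_derivative (by omega) hder.1,
      const_of_derivative (by omega) hder.2, ?_⟩
    intro h hh hdt
    have hconst : ∀ i, (h.coeff i).natDegree = 0 := fun i => by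
      refine const_of_derivative ((natDegree_of_dvd hsq.ne_zero hcoef hh i).trans_lt H) ?_
      rw [← coeff_dt, hdt, coeff_zero]
    refine ⟨h.map (evalRingHom 0), ?_⟩
    ext1 i
    rw [coeff_map, coeff_map, coe_evalRingHom, eq_C_of_natDegree_eq_zero (hconst i), eval_C]
  · obtain ⟨h1, h2⟩ := wronskian hab' ha0 hW
    exact absurd (Subfield.div_mem _ (mem_closure h2) (mem_closure h1)) H

end final

end SqfSparse

/-- For every `N` there are constants `C N` and `C' N` such that for every
finite field `F_q` of characteristic `p`, every square-free `f ∈ F_q[t][x]` with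
`deg_x f, deg_t f ≤ N`, and all `a, b, c ∈ F_q[t]` of degree at most `N` with `gcd(a,b) = 1`,
if `p > C N` or (`a ≠ 0` and `b/a ∉ F_q(t^p)`), then the number of pairs `(β₁, β₂) ∈ F_q²`
for which `f(t, a(t)β₁ + b(t)β₂ + c(t))` is not square-free is at most `C' N · q`; in
particular if `q > C' N` there exist `β₁, β₂` making the value square-free. -/
theorem squarefree_values_univariate_linear_sparse (N : ℕ) :
    ∃ C C' : ℕ, ∀ (F : Type) [Field F] [Fintype F],
      ∀ (f : Polynomial (Polynomial F)) (a b c : Polynomial F),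
        Squarefree f →
        f.natDegree ≤ N → (∀ i, (f.coeff i).natDegree ≤ N) →
        IsRelPrime a b →
        a.natDegree ≤ N → b.natDegree ≤ N → c.natDegree ≤ N →
        (C < ringChar F ∨ (a ≠ 0 ∧ notInFtp F a b)) →
        Set.ncard {β : F × F |
            ¬ Squarefree (Polynomial.eval (a * Polynomial.C β.1 + b * Polynomial.C β.2 + c) f)}
            ≤ C' * Fintype.card F ∧
        (C' < Fintype.card F →
          ∃ β₁ β₂ : F,
            Squarefree (Polynomial.eval (a * Polynomial.C β₁ + b * Polynomial.C β₂ + c) f)) := by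
  refine ⟨N + N * N, (N + N * N) + 2 * ((N + N * N) + (N + N * N) * (N + N * N)) * (N + N * N),
    ?_⟩
  intro F _ _ f a b c hf hfd hfc hab ha hb hc H
  have hmain := SqfSparse.main_bound hf hfd hfc hab ha hb hc H rfl
  refine ⟨hmain, fun hq => ?_⟩
  by_contra hno
  push Not at hno
  have hall : {β : F × F | ¬ Squarefree
      (Polynomial.eval (a * Polynomial.C β.1 + b * Polynomial.C β.2 + c) f)} = Set.univ :=
    Set.eq_univ_of_forall fun β => hno β.1 β.2
  rw [hall, Set.ncard_univ, Nat.card_eq_fintype_card, Fintype.card_prod] at hmain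
  exact absurd (Nat.le_of_mul_le_mul_right hmain Fintype.card_pos) (not_le.mpr hq)
end

section
/- For every natural number N there exists a constant C(N), depending only on N, with the following property. Let F_q be a finite field with q elements, let d ≥ 1, let f ∈ F_q[t][x₁,…,x_d] be square-free with total degree in (x₁,…,x_d) at most N and deg_t f ≤ N, and let m₁,…,m_d be integers with 2 ≤ m_i ≤ N for all i. Then the number of d-tuples (u₁,…,u_d), where each u_i ∈ F_q[t] is monic of degree m_i, such that f(t, u₁(t),…, u_d(t)) is not square-free in F_q[t], is at most C(N)·q^{(m₁+⋯+m_d) − 1}. In particular, if q > C(N) then there exist monic polynomials u_i of degree m_i (i = 1,…,d) such that f(t, u₁(t),…, u_d(t)) is square-free. -/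
namespace SFV
open MvPolynomial

lemma pderiv_eq_zero_of_dvd {σ F : Type*} [Field F] (P : MvPolynomial σ F) (i : σ)
    (h : P ∣ pderiv i P) : pderiv i P = 0 := by
  classical
  by_contra hne
  obtain ⟨Q, hQ⟩ := h
  have hP0 : P ≠ 0 := by rintro rfl; simp at hne
  have hQ0 : Q ≠ 0 := by rintro rfl; simp [hQ] at hne
  have h1 : (pderiv i P).totalDegree = P.totalDegree + Q.totalDegree := by
    rw [hQ]; exact totalDegree_mul_of_isDomain hP0 hQ0
  have h2 : ∀ s ∈ (pderiv i P).support, (s.sum fun _ e => e) + 1 ≤ P.totalDegree := by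
    intro s hs
    have h3 : s + Finsupp.single i 1 ∈ P.support := by
      rw [mem_support_iff] at hs ⊢
      rw [coeff_pderiv] at hs
      exact left_ne_zero_of_mul hs
    have h4 := le_totalDegree h3
    rw [Finsupp.sum_add_index' (by simp) (by simp)] at h4
    simpa using h4
  obtain ⟨s0, hs0⟩ : (pderiv i P).support.Nonempty := by
    simpa [Finset.nonempty_iff_ne_empty] using hne
  have h5 := h2 s0 hs0
  have h6 : (pderiv i P).totalDegree ≤ P.totalDegree - 1 :=
    Finset.sup_le fun s hs => by have := h2 s hs; omega
  omega

lemma not_irreducible_of_pderiv {σ F : Type*} [Field F] [Finite F] (P : MvPolynomial σ F)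
    (h : ∀ i, pderiv i P = 0) : ¬ Irreducible P := by
  classical
  obtain ⟨p, hp⟩ := CharP.exists F
  have : Fact p.Prime := ⟨CharP.char_is_prime F p⟩
  have hdvd : ∀ s ∈ P.support, ∀ i, p ∣ s i := by
    intro s hs i
    by_cases hsi : s i = 0
    · simp [hsi]
    have h1 := congrArg (coeff (s - Finsupp.single i 1)) (h i)
    rw [coeff_pderiv, coeff_zero, tsub_add_cancel_of_le] at h1
    · rcases mul_eq_zero.1 h1 with h2 | h2
      · exact absurd h2 (mem_support_iff.1 hs)
      · rw [← CharP.cast_eq_zero_iff F p]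
        rw [← h2]
        have : s i = (s i - 1) + 1 := by omega
        conv_lhs => rw [this]
        simp
    · simp; omega
  have hroot : ∀ c : F, ∃ b : F, b ^ p = c := fun c => (surjective_frobenius F p) c
  choose r hr using hroot
  have key : P = (∑ s ∈ P.support, monomial (s.mapRange (· / p) (by simp)) (r (coeff s P))) ^ p := by
    rw [sum_pow_char]
    conv_lhs => rw [P.as_sum]
    refine Finset.sum_congr rfl fun s hs => ?_
    rw [monomial_pow, hr]
    have hs' : p • s.mapRange (· / p) (by simp) = s := by
      ext i
      simp [Nat.mul_div_cancel' (hdvd s hs i)]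
    rw [hs']
  rw [key]
  exact not_irreducible_pow (Fact.out : p.Prime).one_lt.ne'

lemma no_common {σ F : Type*} [Field F] [Finite F] (f P : MvPolynomial σ F) (hf : Squarefree f)
    (h0 : P ∣ f) (h : ∀ i, P ∣ pderiv i f) : IsUnit P := by
  by_contra hu
  have hf0 : f ≠ 0 := hf.ne_zero
  have hP0 : P ≠ 0 := fun h' => hf0 (by simpa [h'] using h0)
  obtain ⟨R, hR, hRP⟩ := WfDvdMonoid.exists_irreducible_factor hu hP0
  obtain ⟨Q, rfl⟩ := hRP.trans h0
  refine not_irreducible_of_pderiv R (fun i => pderiv_eq_zero_of_dvd R i ?_) hR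
  have h1 := hRP.trans (h i)
  rw [pderiv_mul] at h1
  have h2 : R ∣ pderiv i R * Q := (dvd_add_left (dvd_mul_right _ _)).1 h1
  rcases hR.prime.dvd_or_dvd h2 with h3 | h3
  · exact h3
  · exact absurd (hf R (mul_dvd_mul_left R h3)) hR.not_isUnit

lemma resultant_ne_zero_of_isRelPrime {R : Type*} [CommRing R] [IsDomain R]
    [UniqueFactorizationMonoid R] (g h : Polynomial R) (hg : g ≠ 0)
    (hrel : IsRelPrime g h) : g.resultant h ≠ 0 := by
  intro h0
  obtain ⟨v, hv0, hv⟩ := (Matrix.exists_mulVec_eq_zero_iff (M := g.sylvester h g.natDegree h.natDegree)).2 h0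
  rw [← Polynomial.toMatrix_sylvesterMap' g h le_rfl le_rfl] at hv
  set b₁ := (((Polynomial.degreeLT.basis R g.natDegree).prod (Polynomial.degreeLT.basis R h.natDegree)).reindex finSumFinEquiv) with hb
  set b₂ := (Polynomial.degreeLT.basis R (g.natDegree + h.natDegree))
  set L := Polynomial.sylvesterMap g h le_rfl le_rfl
  have h1 := LinearMap.toMatrix_mulVec_repr b₁ b₂ L (b₁.equivFun.symm v)
  have h2 : (b₁.repr (b₁.equivFun.symm v) : _ → R) = v :=
    b₁.equivFun.apply_symm_apply v
  rw [h2, hv] at h1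
  have h3 : L (b₁.equivFun.symm v) = 0 := by
    apply b₂.repr.injective
    rw [map_zero]
    exact DFunLike.coe_injective h1.symm
  have h4 : b₁.equivFun.symm v ≠ 0 := b₁.equivFun.symm.map_ne_zero_iff.2 hv0
  generalize b₁.equivFun.symm v = x at h3 h4
  obtain ⟨⟨p, hp⟩, ⟨q, hq⟩⟩ := x
  have h5 : g * q + h * p = 0 := by
    simpa [L] using congrArg Subtype.val h3
  rw [Polynomial.mem_degreeLT] at hp hq
  have h6 : g ∣ h * p := ⟨-q, by linear_combination h5⟩
  have h7 : g ∣ p := hrel.dvd_of_dvd_mul_left h6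
  have h8 : p = 0 := by
    by_contra hp0
    have := Polynomial.degree_le_of_dvd h7 hp0
    rw [Polynomial.degree_eq_natDegree hg] at this
    exact absurd hp (not_lt.2 this)
  subst h8
  have h9 : q = 0 := by simpa [hg] using h5
  subst h9
  exact h4 rfl

lemma totalDegree_det_le {σ F : Type*} [Field F] {n k : ℕ}
    (M : Matrix (Fin n) (Fin n) (MvPolynomial σ F)) (hM : ∀ i j, (M i j).totalDegree ≤ k) :
    M.det.totalDegree ≤ n * k := by
  rw [Matrix.det_apply]
  refine totalDegree_finsetSum_le fun s _ => ?_
  have : (∏ i, M (s i) i).totalDegree ≤ n * k :=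
    (totalDegree_finsetProd _ _).trans ((Finset.sum_le_sum fun i _ => hM _ _).trans (by simp))
  rcases Int.units_eq_one_or (Equiv.Perm.sign s) with h | h
  · simpa [h] using this
  · simpa [h] using this

lemma totalDegree_resultant_le {σ F : Type*} [Field F] {k : ℕ}
    (g h : Polynomial (MvPolynomial σ F)) (m n : ℕ) (hg : ∀ i, (g.coeff i).totalDegree ≤ k)
    (hh : ∀ i, (h.coeff i).totalDegree ≤ k) :
    (g.resultant h m n).totalDegree ≤ (m + n) * k := by
  refine totalDegree_det_le _ fun i j => ?_
  simp only [Polynomial.sylvester, Matrix.of_apply]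
  induction j using Fin.addCases with
  | left j => simp only [Fin.addCases_left]; split_ifs <;> simp [hh]
  | right j => simp only [Fin.addCases_right]; split_ifs <;> simp [hg]

lemma count_zeros {σ F : Type*} [Fintype σ] [Field F] [Fintype F] [DecidableEq F] [DecidableEq σ]
    (D : MvPolynomial σ F) (hD : D ≠ 0) (hσ : 0 < Fintype.card σ) :
    (Finset.univ.filter fun v : σ → F => eval v D = 0).card
      ≤ D.totalDegree * Fintype.card F ^ (Fintype.card σ - 1) := by
  classical
  let e := Fintype.equivFin σ
  have hD' : rename e D ≠ 0 := by
    rw [Ne, map_eq_zero_iff _ (rename_injective _ e.injective)]; exact hD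
  have h := schwartz_zippel_totalDegree hD' (Finset.univ : Finset F)
  have hcard : (Finset.univ.filter fun v : σ → F => eval v D = 0).card =
     (Finset.filter (fun f => eval f (rename e D) = 0)
      (Fintype.piFinset fun _ : Fin (Fintype.card σ) => (Finset.univ : Finset F))).card := by
    refine Finset.card_bij (fun v _ => v ∘ e.symm) ?_ ?_ ?_
    · intro v hv
      simp only [Finset.mem_filter, Finset.mem_univ, true_and] at hv
      simp [eval_rename, Function.comp_assoc, hv]
    · intro a _ b _ hab
      funext x
      simpa using congrFun hab (e x)
    · intro b hb
      refine ⟨b ∘ e, ?_, ?_⟩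
      · simpa [eval_rename] using hb
      · funext x; simp
  rw [← hcard, Finset.card_univ] at h
  have hq : (0 : ℚ≥0) < Fintype.card F := by exact_mod_cast Fintype.card_pos
  rw [div_le_div_iff₀ (by positivity) hq] at h
  have h' : (Finset.univ.filter fun v : σ → F => eval v D = 0).card * Fintype.card F ≤
     (rename e D).totalDegree * Fintype.card F ^ Fintype.card σ := by exact_mod_cast h
  have h2 : (rename e D).totalDegree ≤ D.totalDegree := totalDegree_rename_le _ _
  obtain ⟨n, hn⟩ : ∃ n, Fintype.card σ = n + 1 := ⟨_, (Nat.succ_pred_eq_of_pos hσ).symm⟩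
  replace h' := h'.trans (Nat.mul_le_mul_right _ h2)
  rw [hn] at h' ⊢
  rw [pow_succ, ← mul_assoc] at h'
  have h3 := Nat.le_of_mul_le_mul_right h' Fintype.card_pos
  simpa using h3

lemma derivative_aeval_mv {ι F S : Type*} [Fintype ι] [CommRing F] [CommRing S] [Algebra F S]
    (w : ι → Polynomial S) (f : MvPolynomial ι F) :
    Polynomial.derivative (aeval w f) =
      ∑ i, aeval w (pderiv i f) * Polynomial.derivative (w i) := by
  classical
  induction f using MvPolynomial.induction_on with
  | C a => simp [Polynomial.algebraMap_apply]
  | add p q hp hq => simp [hp, hq, add_mul, Finset.sum_add_distrib]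
  | mul_X p j hp =>
    have h1 : ∀ i, aeval w (pderiv i (p * X j)) * Polynomial.derivative (w i) =
        aeval w (pderiv i p) * Polynomial.derivative (w i) * w j +
          aeval w p * (if i = j then Polynomial.derivative (w i) else 0) := by
      intro i
      rw [pderiv_mul, map_add, map_mul, map_mul, aeval_X, pderiv_X]
      by_cases hij : i = j
      · subst hij; simp; ring
      · simp [hij, Ne.symm hij]; ring
    rw [Finset.sum_congr rfl fun i _ => h1 i, Finset.sum_add_distrib, ← Finset.sum_mul,
      ← Finset.mul_sum, ← hp, map_mul, aeval_X, Polynomial.derivative_mul]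
    simp

/-- the monic polynomial of degree `m i` with lower coefficients `c ⟨i, j⟩` -/
noncomputable def mon {S : Type*} [CommRing S] {d : ℕ} (m : Fin d → ℕ)
    (c : ((i : Fin d) × Fin (m i)) → S) (i : Fin d) : Polynomial S :=
  Polynomial.X ^ (m i) + ∑ j : Fin (m i), Polynomial.C (c ⟨i, j⟩) * Polynomial.X ^ (j : ℕ)

/-- generic substitution -/
noncomputable def gw (F : Type*) [Field F] {d : ℕ} (m : Fin d → ℕ) :
    Option (Fin d) → Polynomial (MvPolynomial ((i : Fin d) × Fin (m i)) F) :=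
  fun o => o.elim Polynomial.X (mon m X)

section
variable (F : Type*) [Field F] {d : ℕ} (m : Fin d → ℕ)

local notation "A" => MvPolynomial (Option (Fin d)) F
local notation "B" => MvPolynomial ((i : Fin d) × Fin (m i)) (MvPolynomial (Option (Fin d)) F)
local notation "RX" => Polynomial (MvPolynomial ((i : Fin d) × Fin (m i)) F)

noncomputable def tB : B := C (X none)

noncomputable def restB (i : Fin d) : B :=
  tB F m ^ (m i) + ∑ j : Fin (m i), if (j : ℕ) = 0 then 0 else X ⟨i, j⟩ * tB F m ^ (j : ℕ)

noncomputable def cB (ij : (i : Fin d) × Fin (m i)) : B :=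
  if (ij.2 : ℕ) = 0 then C (X (some ij.1)) - restB F m ij.1 else X ij

noncomputable def Phi : RX →+* B :=
  Polynomial.eval₂RingHom (aeval (cB F m)).toRingHom (tB F m)

noncomputable def Psi : B →+* RX :=
  eval₂Hom (aeval (gw F m) : A →ₐ[F] RX).toRingHom (fun ij => Polynomial.C (X ij))

lemma Phi_X : Phi F m Polynomial.X = tB F m := by simp [Phi]
lemma Phi_C (ij) : Phi F m (Polynomial.C (X ij)) = cB F m ij := by simp [Phi]

lemma sum_split {M : Type*} [AddCommGroup M] {n : ℕ} (hn : 2 ≤ n) (a b : Fin n → M)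
    (h : ∀ j : Fin n, (j : ℕ) ≠ 0 → a j = b j) (hb : b ⟨0, by omega⟩ = 0) :
    ∑ j, a j = a ⟨0, by omega⟩ + ∑ j, b j := by
  obtain ⟨k, rfl⟩ : ∃ k, n = k + 1 := ⟨n - 1, by omega⟩
  rw [Fin.sum_univ_succ, Fin.sum_univ_succ]
  have : b 0 = 0 := hb
  rw [this, zero_add]
  congr 1
  exact Finset.sum_congr rfl fun j _ => h _ (by simp)

lemma Phi_gw (hm : ∀ i, 2 ≤ m i) (o) : Phi F m (gw F m o) = C (X o) := by
  cases o with
  | none => simp [gw, Phi_X, tB]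
  | some i =>
    simp only [gw, Option.elim, mon, map_add, map_pow, map_sum, map_mul, Phi_X, Phi_C]
    rw [sum_split (hm i) _ (fun j => if (j : ℕ) = 0 then 0 else X ⟨i, j⟩ * tB F m ^ (j : ℕ))]
    · simp [cB, restB]; abel
    · intro j hj; simp [cB, hj]
    · simp

lemma Phi_derivative_mon (i : Fin d) :
    Phi F m (Polynomial.derivative (mon m X i)) =
      C ((m i : A) * X none ^ (m i - 1)) +
        ∑ j : Fin (m i), C (((j : ℕ) : A) * X none ^ ((j : ℕ) - 1)) * X ⟨i, j⟩ := by
  simp only [mon, Polynomial.derivative_add, Polynomial.derivative_X_pow, map_add, map_mul,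
    map_natCast, map_pow, Polynomial.derivative_sum, map_sum, Polynomial.derivative_C_mul, Phi_X,
    Phi_C, tB]
  congr 1
  refine Finset.sum_congr rfl fun j _ => ?_
  by_cases hj : (j : ℕ) = 0
  · simp [hj]
  · simp [cB, hj]; ring

lemma Psi_Phi (hm : ∀ i, 2 ≤ m i) (p : RX) : Psi F m (Phi F m p) = p := by
  have ht : Psi F m (tB F m) = Polynomial.X := by simp [Psi, tB, gw]
  suffices h : (Psi F m).comp (Phi F m) = RingHom.id _ from RingHom.congr_fun h p
  apply Polynomial.ringHom_ext'
  · apply MvPolynomial.ringHom_ext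
    · intro r
      have h1 : Phi F m (Polynomial.C (C r)) = C (C r) := by
        simp [Phi, MvPolynomial.algebraMap_apply, MvPolynomial.algebraMap_eq]
      simp only [RingHom.comp_apply, h1, RingHom.id_apply]
      simp [Psi, Polynomial.algebraMap_apply, MvPolynomial.algebraMap_eq]
    · rintro ⟨i, j⟩
      have hY : ∀ ij, Psi F m (X ij) = Polynomial.C (X ij) := by simp [Psi]
      have hx : Psi F m (C (X (some i))) = mon m X i := by simp [Psi, gw]
      simp only [RingHom.comp_apply, Phi_C, RingHom.id_apply]
      by_cases hj : (j : ℕ) = 0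
      · have hj' : j = ⟨0, by have := hm i; omega⟩ := Fin.ext hj
        simp only [cB, hj, if_true, map_sub, hx, restB, map_add, map_pow, ht, map_sum]
        rw [mon, sum_split (hm i) _ (fun j => Psi F m (if (j : ℕ) = 0 then 0 else
          X ⟨i, j⟩ * tB F m ^ (j : ℕ)))]
        · simp [hj']
        · intro j hj; simp [hj, hY, ht]
        · simp
      · simp [cB, hj, hY]
  · simp [Phi_X, ht]

lemma Phi_aeval (hm : ∀ i, 2 ≤ m i) (f : A) : Phi F m (aeval (gw F m) f) = C f := by
  suffices h : (Phi F m).comp (aeval (gw F m) : A →ₐ[F] RX).toRingHom = C from RingHom.congr_fun h f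
  apply MvPolynomial.ringHom_ext
  · intro r
    simp [Phi, Polynomial.algebraMap_apply, MvPolynomial.algebraMap_apply, MvPolynomial.algebraMap_eq]
  · intro o; simp [Phi_gw F m hm]

lemma isRelPrime_generic [Finite F] (hm : ∀ i, 2 ≤ m i) (f : A) (hf : Squarefree f) :
    IsRelPrime (aeval (gw F m) f) (Polynomial.derivative (aeval (gw F m) f)) := by
  classical
  intro P h1 h2
  rw [derivative_aeval_mv] at h2
  replace h1 := map_dvd (Phi F m) h1
  replace h2 := map_dvd (Phi F m) h2
  rw [Phi_aeval F m hm] at h1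
  simp only [map_add, map_sum, map_mul, Phi_aeval F m hm, Fintype.sum_option] at h2
  suffices h : IsUnit (Phi F m P) by
    have := h.map (Psi F m)
    rwa [Psi_Phi F m hm] at this
  generalize Phi F m P = Q at h1 h2
  have hQ : Q = C (Q.coeff 0) := by
    rw [← totalDegree_eq_zero_iff_eq_C]
    obtain ⟨T, hT⟩ := h1
    have hf0 : (C f : B) ≠ 0 := by simpa using hf.ne_zero
    have := totalDegree_mul_of_isDomain (f := Q) (g := T) (by rintro rfl; simp [hT] at hf0)
      (by rintro rfl; simp [hT] at hf0)
    rw [← hT, totalDegree_C] at this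
    omega
  generalize Q.coeff 0 = q at hQ
  subst hQ
  refine IsUnit.map C ?_
  rw [C_dvd_iff_dvd_coeff] at h1
  have h0 : q ∣ f := by simpa using h1 0
  have hD : Phi F m (Polynomial.derivative (gw F m none)) = 1 := by simp [gw]
  have hS : ∀ i, gw F m (some i) = mon m X i := fun i => rfl
  simp only [hD, hS, Phi_derivative_mon, mul_one] at h2
  have hsome : ∀ i, q ∣ pderiv (some i) f := by
    intro i
    have h3 := (C_dvd_iff_dvd_coeff _ _).1 h2 (Finsupp.single ⟨i, ⟨1, hm i⟩⟩ 1)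
    have h4 : ∀ i' (j : Fin (m i')), ((⟨i', j⟩ : (i : Fin d) × Fin (m i)) = ⟨i, ⟨1, hm i⟩⟩) ↔
        i' = i ∧ (j : ℕ) = 1 := by
      intro i' j
      constructor
      · rintro ⟨⟩; simp
      · rintro ⟨rfl, h⟩
        congr 1
        exact Fin.ext h
    have h5 : ∀ i', coeff (Finsupp.single ⟨i, ⟨1, hm i⟩⟩ 1)
       (C ((m i' : A) * X none ^ (m i' - 1)) +
        ∑ j : Fin (m i'), C (((j : ℕ) : A) * X none ^ ((j : ℕ) - 1)) *
          (X ⟨i', j⟩ : B)) = if i' = i then 1 else 0 := by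
      intro i'
      rw [coeff_add, coeff_C, coeff_sum, if_neg (Finsupp.single_ne_zero.2 one_ne_zero).symm, zero_add]
      simp only [coeff_C_mul, coeff_X]
      by_cases hi : i' = i
      · subst hi
        rw [Finset.sum_eq_single ⟨1, hm i'⟩]
        · simp
        · intro j _ hj
          rw [if_neg]
          · simp
          · rw [Finsupp.single_left_inj one_ne_zero, h4]
            rintro ⟨-, h⟩
            exact hj (Fin.ext h)
        · simp
      · rw [if_neg hi]
        refine Finset.sum_eq_zero fun j _ => ?_
        rw [if_neg]
        · simp
        · rw [Finsupp.single_left_inj one_ne_zero, h4]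
          exact fun h => hi h.1
    rw [coeff_add, coeff_C, if_neg (Finsupp.single_ne_zero.2 one_ne_zero).symm, zero_add, coeff_sum] at h3
    simp only [coeff_C_mul, h5] at h3
    simpa using h3
  have hnone : q ∣ pderiv none f := by
    have h3 : (C q : B) ∣ C (pderiv none f) := by
      refine (dvd_add_left (Finset.dvd_sum fun i _ => ?_)).1 h2
      exact Dvd.dvd.mul_right (map_dvd C (hsome i)) _
    rw [C_dvd_iff_dvd_coeff] at h3
    simpa using h3 0
  exact no_common f q hf h0 (fun o => by cases o with | none => exact hnone | some i => exact hsome i)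
end
lemma coeffDeg_mul {σ F : Type*} [Field F] {a b : ℕ} {p q : Polynomial (MvPolynomial σ F)}
    (hp : ∀ i, (p.coeff i).totalDegree ≤ a) (hq : ∀ i, (q.coeff i).totalDegree ≤ b) (i : ℕ) :
    ((p * q).coeff i).totalDegree ≤ a + b := by
  rw [Polynomial.coeff_mul]
  exact totalDegree_finsetSum_le fun x _ =>
    (totalDegree_mul _ _).trans (add_le_add (hp _) (hq _))

lemma coeffDeg_pow {σ F : Type*} [Field F] {p : Polynomial (MvPolynomial σ F)}
    (hp : ∀ i, (p.coeff i).totalDegree ≤ 1) (n i : ℕ) :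
    ((p ^ n).coeff i).totalDegree ≤ n := by
  induction n generalizing i with
  | zero =>
    rw [pow_zero, Polynomial.coeff_one]
    split_ifs <;> simp
  | succ n ih => rw [pow_succ]; exact coeffDeg_mul ih hp i

lemma coeffDeg_prod {σ F ι : Type*} [Field F] (t : Finset ι)
    (p : ι → Polynomial (MvPolynomial σ F)) (n : ι → ℕ)
    (hp : ∀ k i, ((p k).coeff i).totalDegree ≤ n k) (i : ℕ) :
    ((∏ k ∈ t, p k).coeff i).totalDegree ≤ ∑ k ∈ t, n k := by
  classical
  induction t using Finset.induction_on generalizing i with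
  | empty =>
    rw [Finset.prod_empty, Polynomial.coeff_one]
    split_ifs <;> simp
  | insert a s ha ih =>
    rw [Finset.prod_insert ha, Finset.sum_insert ha]
    exact coeffDeg_mul (hp a) ih i

lemma degree_mon_tail {S : Type*} [CommRing S] {d : ℕ} (m : Fin d → ℕ)
    (c : ((i : Fin d) × Fin (m i)) → S) (i : Fin d) :
    (∑ j : Fin (m i), Polynomial.C (c ⟨i, j⟩) * Polynomial.X ^ (j : ℕ)).degree < ((m i : ℕ) : WithBot ℕ) :=
  Polynomial.degree_sum_fin_lt (fun j => c ⟨i, j⟩)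

lemma natDegree_mon {S : Type*} [CommRing S] [Nontrivial S] {d : ℕ} (m : Fin d → ℕ)
    (c : ((i : Fin d) × Fin (m i)) → S) (i : Fin d) : (mon m c i).natDegree = m i :=
  Polynomial.natDegree_eq_of_degree_eq_some (by
    rw [mon, Polynomial.degree_add_eq_left_of_degree_lt]
    · exact Polynomial.degree_X_pow _
    · rw [Polynomial.degree_X_pow]
      exact degree_mon_tail m c i)

lemma monic_mon {S : Type*} [CommRing S] {d : ℕ} (m : Fin d → ℕ)
    (c : ((i : Fin d) × Fin (m i)) → S) (i : Fin d) : (mon m c i).Monic :=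
  Polynomial.monic_X_pow_add (degree_mon_tail m c i)

lemma mon_coeff {S : Type*} [CommRing S] {d : ℕ} (m : Fin d → ℕ) (u : Fin d → Polynomial S)
    (hu : ∀ i, (u i).Monic ∧ (u i).natDegree = m i) :
    mon m (fun ij => (u ij.1).coeff ij.2) = u := by
  funext i
  have h := (hu i).1.as_sum
  rw [(hu i).2, Finset.sum_range] at h
  exact h.symm

lemma map_mon {S T : Type*} [CommRing S] [CommRing T] (φ : S →+* T) {d : ℕ} (m : Fin d → ℕ)
    (c : ((i : Fin d) × Fin (m i)) → S) (i : Fin d) :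
    (mon m c i).map φ = mon m (φ ∘ c) i := by
  simp [mon, Polynomial.map_sum]

lemma coeffDeg_mon (F : Type*) [Field F] {d : ℕ} (m : Fin d → ℕ) (i : Fin d) (k : ℕ) :
    ((mon m (X : _ → MvPolynomial ((i : Fin d) × Fin (m i)) F) i).coeff k).totalDegree ≤ 1 := by
  rw [mon, Polynomial.coeff_add, Polynomial.finsetSum_coeff]
  refine (totalDegree_add _ _).trans (max_le ?_ (totalDegree_finsetSum_le fun j _ => ?_))
  · rw [Polynomial.coeff_X_pow]; split_ifs <;> simp
  · rw [Polynomial.coeff_C_mul, Polynomial.coeff_X_pow]; split_ifs <;> simp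

/-- the generic value of `f` -/
noncomputable def gen {F : Type*} [Field F] {d : ℕ} (m : Fin d → ℕ)
    (f : MvPolynomial (Fin d) (Polynomial F)) :
    Polynomial (MvPolynomial ((i : Fin d) × Fin (m i)) F) :=
  eval₂ (Polynomial.mapRingHom C) (mon m X) f

lemma gen_eq_aeval {F : Type*} [Field F] {d : ℕ} (m : Fin d → ℕ)
    (f : MvPolynomial (Option (Fin d)) F) :
    gen m (optionEquivRight F (Fin d) f) = aeval (gw F m) f := by
  suffices h : (eval₂Hom (Polynomial.mapRingHom C) (mon m X)).comp
      (optionEquivRight F (Fin d)).toAlgHom.toRingHom =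
      (aeval (gw F m) : _ →ₐ[F] Polynomial (MvPolynomial ((i : Fin d) × Fin (m i)) F)).toRingHom
    from RingHom.congr_fun h f
  apply MvPolynomial.ringHom_ext
  · intro r
    simp [optionEquivRight_C, Polynomial.algebraMap_apply, MvPolynomial.algebraMap_eq]
  · rintro (_ | i)
    · simp [optionEquivRight_X_none, gw]
    · simp [optionEquivRight_X_some, gw]

lemma gen_relPrime {F : Type*} [Field F] [Finite F] {d : ℕ} (m : Fin d → ℕ) (hm : ∀ i, 2 ≤ m i)
    (f : MvPolynomial (Fin d) (Polynomial F)) (hf : Squarefree f) :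
    IsRelPrime (gen m f) (gen m f).derivative := by
  obtain ⟨f', rfl⟩ := (optionEquivRight F (Fin d)).surjective f
  rw [gen_eq_aeval]
  refine isRelPrime_generic F m hm f' fun x hx => ?_
  have h := hf (optionEquivRight F (Fin d) x) (by rw [← map_mul]; exact map_dvd _ hx)
  have h' := h.map (optionEquivRight F (Fin d)).symm
  rwa [AlgEquiv.symm_apply_apply] at h'

lemma map_gen {F : Type*} [Field F] {d : ℕ} (m : Fin d → ℕ)
    (f : MvPolynomial (Fin d) (Polynomial F)) (v : ((i : Fin d) × Fin (m i)) → F) :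
    (gen m f).map (eval v) = eval (mon m v) f := by
  suffices h : (Polynomial.mapRingHom (eval v)).comp
      (eval₂Hom (Polynomial.mapRingHom C) (mon m X)) = eval (mon m v) from RingHom.congr_fun h f
  apply MvPolynomial.ringHom_ext
  · intro r
    simp only [RingHom.comp_apply, coe_eval₂Hom, eval₂_C, eval_C, Polynomial.coe_mapRingHom,
      Polynomial.map_map]
    convert Polynomial.map_id
    ext; simp
  · intro i
    simp only [RingHom.comp_apply, coe_eval₂Hom, eval₂_X, eval_X, Polynomial.coe_mapRingHom,
      map_mon]
    congr 1
    funext x; simp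

lemma sum_le_of_mem {d N : ℕ} {S : Type*} [CommRing S] {f : MvPolynomial (Fin d) S}
    (hN : f.totalDegree ≤ N) {s} (hs : s ∈ f.support) : ∑ i, s i ≤ N := by
  have := (le_totalDegree hs).trans hN
  rwa [Finsupp.sum_fintype _ _ (by simp)] at this

lemma gen_natDegree {F : Type*} [Field F] {d N : ℕ} (m : Fin d → ℕ)
    (f : MvPolynomial (Fin d) (Polynomial F)) (hN : f.totalDegree ≤ N)
    (hc : ∀ s, (f.coeff s).natDegree ≤ N) (hmN : ∀ i, m i ≤ N) :
    (gen m f).natDegree ≤ N + N * N := by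
  rw [gen, eval₂_eq']
  refine Polynomial.natDegree_sum_le_of_forall_le _ _ fun s hs => ?_
  refine Polynomial.natDegree_mul_le.trans (add_le_add ?_ ?_)
  · exact (Polynomial.natDegree_map_le).trans (hc s)
  · refine (Polynomial.natDegree_prod_le _ _).trans ?_
    calc ∑ i, (mon m X i ^ s i).natDegree ≤ ∑ i, s i * N := Finset.sum_le_sum fun i _ => by
          refine Polynomial.natDegree_pow_le.trans ?_
          rw [natDegree_mon]
          exact Nat.mul_le_mul_left _ (hmN i)
      _ ≤ N * N := by
          rw [← Finset.sum_mul]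
          exact Nat.mul_le_mul_right _ (sum_le_of_mem hN hs)

lemma gen_coeffDeg {F : Type*} [Field F] {d N : ℕ} (m : Fin d → ℕ)
    (f : MvPolynomial (Fin d) (Polynomial F)) (hN : f.totalDegree ≤ N) (k : ℕ) :
    ((gen m f).coeff k).totalDegree ≤ N := by
  rw [gen, eval₂_eq', Polynomial.finsetSum_coeff]
  refine totalDegree_finsetSum_le fun s hs => ?_
  have h1 := coeffDeg_prod Finset.univ (fun i => mon m X i ^ s i) (fun i => s i)
    (fun i => coeffDeg_pow (coeffDeg_mon F m i) (s i))
  have h2 : ∀ i, ((Polynomial.mapRingHom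
      (C : F →+* MvPolynomial ((i : Fin d) × Fin (m i)) F) (f.coeff s)).coeff i).totalDegree ≤ 0 := by
    intro i; simp
  have h3 := coeffDeg_mul h2 h1 k
  rw [zero_add] at h3
  exact h3.trans (sum_le_of_mem hN hs)

lemma coeffDeg_derivative {σ F : Type*} [Field F] {a : ℕ} {p : Polynomial (MvPolynomial σ F)}
    (hp : ∀ i, (p.coeff i).totalDegree ≤ a) (i : ℕ) :
    (p.derivative.coeff i).totalDegree ≤ a := by
  rw [Polynomial.coeff_derivative]
  refine (totalDegree_mul _ _).trans ?_
  have : ((i : MvPolynomial σ F) + 1) = C ((i : F) + 1) := by simp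
  rw [this, totalDegree_C]
  simpa using hp (i + 1)

lemma exists_disc {F : Type*} [Field F] [Finite F] {d N : ℕ} (m : Fin d → ℕ) (hm : ∀ i, 2 ≤ m i)
    (f : MvPolynomial (Fin d) (Polynomial F)) (hf : Squarefree f) (hN : f.totalDegree ≤ N)
    (hc : ∀ s, (f.coeff s).natDegree ≤ N) (hmN : ∀ i, m i ≤ N) :
    ∃ D : MvPolynomial ((i : Fin d) × Fin (m i)) F, D ≠ 0 ∧
      D.totalDegree ≤ 2 * (N + N * N) * N ∧
      ∀ v, ¬ Squarefree (eval (mon m v) f) → eval v D = 0 := by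
  have hrel := gen_relPrime m hm f hf
  have hdeg := gen_natDegree m f hN hc hmN
  have hco := gen_coeffDeg m f hN
  simp only [← map_gen]
  generalize gen m f = g at *
  have hg0 : g ≠ 0 := by
    rintro rfl
    simp [isRelPrime_zero_left] at hrel
  refine ⟨g.resultant g.derivative, resultant_ne_zero_of_isRelPrime g _ hg0 hrel, ?_, ?_⟩
  · refine (totalDegree_resultant_le g _ _ _ hco (coeffDeg_derivative hco)).trans ?_
    have := Polynomial.natDegree_derivative_le g
    exact Nat.mul_le_mul_right _ (by omega)
  · intro v hv
    by_cases hn : g.natDegree = 0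
    · exfalso
      rw [Polynomial.derivative_of_natDegree_zero hn, isRelPrime_zero_right] at hrel
      exact hv (hrel.map (Polynomial.mapRingHom (eval v))).squarefree
    obtain ⟨p, q, -, -, h⟩ := Polynomial.exists_mul_add_mul_eq_C_resultant g g.derivative le_rfl
      le_rfl (Or.inl hn)
    have h' := congrArg (Polynomial.map (eval v)) h
    simp only [Polynomial.map_add, Polynomial.map_mul, Polynomial.map_C,
      ← Polynomial.derivative_map] at h'
    unfold Squarefree at hv
    push Not at hv
    obtain ⟨x, ⟨y, hy⟩, hxu⟩ := hv
    by_contra hne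
    apply hxu
    have hdv : x ∣ Polynomial.C (eval v (g.resultant g.derivative)) := by
      rw [← h', hy]
      refine dvd_add ⟨x * y * p.map (eval v), by ring⟩ (Dvd.dvd.mul_right ?_ _)
      simp only [Polynomial.derivative_mul]
      exact ⟨2 * Polynomial.derivative x * y + x * Polynomial.derivative y, by ring⟩
    exact isUnit_of_dvd_unit hdv (Polynomial.isUnit_C.2 (isUnit_iff_ne_zero.2 hne))

end SFV


/-- For every `N` there is a constant `C N` such that for every finite field
`F_q`, every `d ≥ 1`, every square-free `f ∈ F_q[t][x₁,…,x_d]` with `deg_t f ≤ N` and total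
degree in `x₁,…,x_d` at most `N`, and all `m₁,…,m_d` with `2 ≤ m_i ≤ N`, the number of
`d`-tuples of monic polynomials `u_i` of degree `m_i` such that `f(t, u₁(t),…,u_d(t))` is not
square-free is at most `C N · q^{m₁+⋯+m_d − 1}`; in particular if `q > C N` some such tuple
makes the value square-free. -/
theorem squarefree_values_multivariate_monic (N : ℕ) :
    ∃ C : ℕ, ∀ (F : Type) [Field F] [Fintype F] (d : ℕ),
      1 ≤ d →
      ∀ (f : MvPolynomial (Fin d) (Polynomial F)) (m : Fin d → ℕ),
        Squarefree f →
        f.totalDegree ≤ N → (∀ s, (f.coeff s).natDegree ≤ N) →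
        (∀ i, 2 ≤ m i) → (∀ i, m i ≤ N) →
        Set.ncard {u : Fin d → Polynomial F |
            (∀ i, (u i).Monic ∧ (u i).natDegree = m i) ∧
              ¬ Squarefree (MvPolynomial.eval u f)}
            ≤ C * Fintype.card F ^ ((∑ i, m i) - 1) ∧
        (C < Fintype.card F →
          ∃ u : Fin d → Polynomial F, (∀ i, (u i).Monic ∧ (u i).natDegree = m i) ∧
            Squarefree (MvPolynomial.eval u f)) := by
  classical
  refine ⟨2 * (N + N * N) * N, ?_⟩
  intro F _ _ d hd f m hf hN hc hm hmN
  obtain ⟨D, hD0, hDdeg, hD⟩ := SFV.exists_disc m hm f hf hN hc hmN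
  have hcard : Fintype.card ((i : Fin d) × Fin (m i)) = ∑ i, m i := by simp
  have hpos : 0 < ∑ i, m i :=
    Finset.sum_pos (fun i _ => by have := hm i; omega) ⟨⟨0, hd⟩, Finset.mem_univ _⟩
  have hcount := SFV.count_zeros D hD0 (by rw [hcard]; exact hpos)
  rw [hcard] at hcount
  replace hcount := hcount.trans (Nat.mul_le_mul_right _ hDdeg)
  constructor
  · refine le_trans ?_ hcount
    rw [← Set.ncard_coe_finset]
    refine le_trans (Set.ncard_le_ncard (t := SFV.mon m '' _) ?_ ?_) (Set.ncard_image_le ?_)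
    · rintro u ⟨hu, hsq⟩
      have hu' := SFV.mon_coeff m u hu
      refine ⟨_, ?_, hu'⟩
      simp only [Finset.coe_filter, Finset.mem_univ, true_and, Set.mem_setOf_eq]
      apply hD
      rw [hu']
      exact hsq
    · exact (Finset.finite_toSet _).image _
    · exact Finset.finite_toSet _
  · intro hlt
    by_contra hno
    push Not at hno
    have hall : ∀ v, MvPolynomial.eval v D = 0 := fun v =>
      hD v (hno (SFV.mon m v) fun i => ⟨SFV.monic_mon m v i, SFV.natDegree_mon m v i⟩)
    rw [Finset.filter_true_of_mem (fun v _ => hall v), Finset.card_univ, Fintype.card_fun, hcard]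
      at hcount
    obtain ⟨k, hk⟩ : ∃ k, ∑ i, m i = k + 1 := ⟨_, (Nat.succ_pred_eq_of_pos hpos).symm⟩
    rw [hk, Nat.add_sub_cancel, pow_succ, mul_comm] at hcount
    have := Nat.le_of_mul_le_mul_right hcount (pow_pos Fintype.card_pos k)
    omega
end

section
/- Let F be a field of characteristic p (possibly 0) with algebraic closure F̄, and let N ∈ ℕ. There exist constants C(N) and C'(N), depending only on N, with the following property. Let f ∈ F[t][x] be square-free as an element of F̄[t][x], and let a, b, c ∈ F[t] with gcd(a,b) = 1 and deg_x f, deg_t f, deg a, deg b, deg c ≤ N. Then there exists a polynomial P ∈ F[x₁, x₂] of total degree at most C'(N) such that every pair (β₁, β₂) ∈ F² for which f(t, a(t)β₁ + b(t)β₂ + c(t)) is not separable (as a polynomial in t) satisfies P(β₁, β₂) = 0. Moreover, P can be chosen nonzero whenever at least one of the following holds: (i) p = 0 or p > C(N); (ii) a ≠ 0 and b/a ∉ F(t^p). -/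
open Polynomial

/-- coefficientwise derivative -/
noncomputable def dT {E : Type*} [Field E] (f : E[X][X]) : E[X][X] :=
  PolynomialModule.equivPolynomialSelf ((derivative' (R := E)).mapCoeffs f)

lemma dT_coeff {E : Type*} [Field E] (f : E[X][X]) (i : ℕ) :
    (dT f).coeff i = derivative (f.coeff i) := rfl

lemma dT_mul {E : Type*} [Field E] (f g : E[X][X]) : dT (f * g) = f * dT g + g * dT f := by
  unfold dT
  rw [Derivation.leibniz, map_add, map_smul, map_smul]; rfl

lemma dT_add {E : Type*} [Field E] (f g : E[X][X]) : dT (f + g) = dT f + dT g := by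
  ext1 i; simp [dT_coeff]

lemma dT_C {E : Type*} [Field E] (f : E[X]) : dT (C f) = C (derivative f) := by
  ext1 i; simp only [dT_coeff, coeff_C]; split_ifs <;> simp

lemma dT_X {E : Type*} [Field E] : dT (X : E[X][X]) = 0 := by
  ext1 i; simp only [dT_coeff, coeff_X]; split_ifs <;> simp

/-- evaluation at (τ, ξ) -/
noncomputable def ev {E L : Type*} [Field E] [Field L] [Algebra E L] (τ ξ : L) : E[X][X] →+* L :=
  eval₂RingHom (aeval (R := E) τ).toRingHom ξ

section
variable {E L : Type*} [Field E] [Field L] [Algebra E L]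

@[simp] lemma ev_C (τ ξ : L) (q : E[X]) : ev τ ξ (C q) = aeval τ q := by simp [ev]
@[simp] lemma ev_X (τ ξ : L) : ev (E := E) τ ξ X = ξ := by simp [ev]

lemma ev_eq_aeval_map (e : E) (ξ : L) (f : E[X][X]) :
    ev (algebraMap E L e) ξ f = aeval ξ (f.map (evalRingHom e)) := by
  induction f using Polynomial.induction_on' with
  | add p q hp hq => simp [hp, hq]
  | monomial n a =>
    rw [← C_mul_X_pow_eq_monomial]
    simp [aeval_algebraMap_apply]

/-- the curve substitution -/
noncomputable def gL (f : E[X][X]) (A : L[X]) : L[X] :=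
  eval A (f.map (mapRingHom (algebraMap E L)))

lemma gL_eval (f : E[X][X]) (A : L[X]) (τ : L) :
    eval τ (gL f A) = ev τ (eval τ A) f := by
  unfold gL
  induction f using Polynomial.induction_on' with
  | add p q hp hq => simp [hp, hq]
  | monomial n a =>
    rw [← C_mul_X_pow_eq_monomial]
    simp [aeval_def, eval_map]

lemma gL_deriv (f : E[X][X]) (A : L[X]) (τ : L) :
    eval τ (derivative (gL f A)) = ev τ (eval τ A) (dT f)
      + ev τ (eval τ A) (derivative f) * eval τ (derivative A) := by
  induction f using Polynomial.induction_on' with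
  | add p q hp hq =>
    have : gL (p + q) A = gL p A + gL q A := by simp [gL]
    rw [this, dT_add]; simp [hp, hq]; ring
  | monomial n a =>
    have h1 : gL (monomial n a) A = a.map (algebraMap E L) * A ^ n := by simp [gL]
    have h2 : dT (monomial n a) = monomial n (derivative a) := by
      ext1 i; simp only [dT_coeff, coeff_monomial]; split_ifs <;> simp
    rw [h1, h2, ← C_mul_X_pow_eq_monomial, ← C_mul_X_pow_eq_monomial]
    simp [aeval_def, eval_map, derivative_map, derivative_pow]
    ring

/-- divisibility by irreducible vanishing at a generic point -/
lemma irr_dvd {τ ξ : L} (hτ : Transcendental E τ) {h k : E[X][X]} (hh : Irreducible h)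
    (h0 : ev τ ξ h = 0) (k0 : ev τ ξ k = 0) : h ∣ k := by
  have hinj : Function.Injective (aeval (R := E) τ) := transcendental_iff_injective.1 hτ
  have hd : h.natDegree ≠ 0 := by
    intro hd
    rw [natDegree_eq_zero] at hd
    obtain ⟨r, rfl⟩ := hd
    rw [ev_C] at h0
    have : r = 0 := hinj (by simpa using h0)
    subst this
    simp at hh
  have hp := hh.isPrimitive hd
  let ψ : RatFunc E →+* L := IsFractionRing.lift (A := E[X]) (g := (aeval (R := E) τ).toRingHom) hinj
  have hψ : ∀ q : E[X], ψ (algebraMap _ _ q) = aeval τ q := fun q => by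
    simp [ψ]
  have key : ∀ f : E[X][X], eval₂ ψ ξ (f.map (algebraMap E[X] (RatFunc E))) = ev τ ξ f := by
    intro f
    rw [eval₂_map]
    unfold ev
    simp only [coe_eval₂RingHom]
    congr 1
    exact RingHom.ext hψ
  have hirr := (hp.irreducible_iff_irreducible_map_fraction_map (K := RatFunc E)).1 hh
  refine hp.dvd_of_fraction_map_dvd_fraction_map (K := RatFunc E) ?_
  by_contra hnd
  obtain ⟨u, v, huv⟩ := (hirr.coprime_iff_not_dvd.2 hnd)
  have := congrArg (eval₂ ψ ξ) huv
  simp only [eval₂_add, eval₂_mul, key, h0, k0, mul_zero, add_zero, eval₂_one] at this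
  exact zero_ne_one this

lemma exists_factor {τ ξ : L} (hτ : Transcendental E τ) {f : E[X][X]} (hf : Squarefree f)
    (h0 : ev τ ξ f = 0) : ∃ h k : E[X][X], f = h * k ∧ Irreducible h ∧ ev τ ξ h = 0 ∧
      ev τ ξ k ≠ 0 := by
  have hf0 : f ≠ 0 := hf.ne_zero
  have : ∃ h : E[X][X], Irreducible h ∧ h ∣ f ∧ ev τ ξ h = 0 := by
    clear hf
    induction f using UniqueFactorizationMonoid.induction_on_prime with
    | h₁ => exact absurd rfl hf0
    | h₂ x hx => exact absurd h0 (hx.map (ev τ ξ)).ne_zero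
    | h₃ a p ha hp ih =>
      rw [map_mul, mul_eq_zero] at h0
      rcases h0 with h0 | h0
      · exact ⟨p, hp.irreducible, dvd_mul_right _ _, h0⟩
      · obtain ⟨h, h1, h2, h3⟩ := ih h0 ha
        exact ⟨h, h1, h2.mul_left _, h3⟩
  obtain ⟨h, h1, ⟨k, rfl⟩, h3⟩ := this
  refine ⟨h, k, rfl, h1, h3, fun hk => h1.not_isUnit (hf h ?_)⟩
  exact mul_dvd_mul_left _ (irr_dvd hτ h1 h3 hk)

lemma dT_zero_of_dvd {h : E[X][X]} (hd : h ∣ dT h) : dT h = 0 := by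
  by_contra hne
  obtain ⟨q, hq⟩ := hd
  have hh : h ≠ 0 := by rintro rfl; simp at hq; exact hne hq
  have hq0 : q ≠ 0 := by rintro rfl; simp at hq; exact hne hq
  have hle : (dT h).natDegree ≤ h.natDegree := by
    rw [natDegree_le_iff_coeff_eq_zero]
    intro i hi
    rw [dT_coeff, coeff_eq_zero_of_natDegree_lt hi, derivative_zero]
  rw [hq, natDegree_mul hh hq0] at hle
  have hq1 : q.natDegree = 0 := by omega
  obtain ⟨r, rfl⟩ := natDegree_eq_zero.1 hq1
  have := congrArg (fun z => coeff z h.natDegree) hq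
  simp only [dT_coeff, coeff_mul_C, coeff_natDegree] at this
  have hl : h.leadingCoeff ≠ 0 := leadingCoeff_ne_zero.2 hh
  have hr : r ≠ 0 := by simpa using hq0
  have h2 := degree_derivative_lt hl
  rw [this, degree_mul] at h2
  have h3 := zero_le_degree_iff.2 hr
  have : h.leadingCoeff.degree ≤ h.leadingCoeff.degree + r.degree := le_add_of_nonneg_right h3
  exact absurd h2 (not_lt.2 this)

lemma derivative_zero_of_dvd {h : E[X][X]} (hd : h ∣ derivative h) : derivative h = 0 := by
  by_contra hne
  have hh : h ≠ 0 := by rintro rfl; simp at hne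
  exact absurd (degree_le_of_dvd hd hne) (not_le.2 (degree_derivative_lt hh))

lemma pth_power {R : Type*} [CommRing R] [IsDomain R] (p : ℕ) [Fact p.Prime] [CharP R p]
    {r : R[X]} (hr : derivative r = 0) (hc : ∀ i, ∃ z, z ^ p = r.coeff i) :
    ∃ s : R[X], s ^ p = r := by
  have hp : p.Prime := Fact.out
  have h1 := expand_contract p hr hp.ne_zero
  have : contract p r ∈ lifts (frobenius R p) := by
    rw [lifts_iff_coeff_lifts]
    intro n
    rw [coeff_contract hp.ne_zero]
    exact hc _
  obtain ⟨s, hs⟩ := this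
  refine ⟨s, ?_⟩
  rw [← map_frobenius_expand, map_expand, ← h1]
  congr 1

lemma no_both_zero [IsAlgClosed E] {h : E[X][X]} (hh : Irreducible h) (hx : derivative h = 0)
    (ht : dT h = 0) : False := by
  have hc : ∀ i, derivative (h.coeff i) = 0 := fun i => by rw [← dT_coeff, ht, coeff_zero]
  obtain ⟨p, hp⟩ := ExpChar.exists E
  cases hp with
  | zero =>
    have h1 := derivative_eq_zero.1 hx
    obtain ⟨r, rfl⟩ := natDegree_eq_zero.1 h1
    have h2 := derivative_eq_zero.1 (by simpa using hc 0 : derivative r = 0)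
    obtain ⟨s, rfl⟩ := natDegree_eq_zero.1 h2
    have : s ≠ 0 := by rintro rfl; simp at hh
    exact hh.not_isUnit (by simpa using this)
  | prime hp =>
    have : Fact p.Prime := ⟨hp⟩
    have h3 : ∃ s : E[X][X], s ^ p = h := by
      refine pth_power p hx fun i => ?_
      obtain ⟨s, hs⟩ := pth_power p (hc i) fun j => IsAlgClosed.exists_pow_nat_eq _ hp.pos
      exact ⟨s, hs⟩
    obtain ⟨s, rfl⟩ := h3
    exact not_irreducible_pow hp.ne_one hh

lemma not_alg_pair {β₁ β₂ : L} (hβ : AlgebraicIndependent E ![β₁, β₂]) (τ : L)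
    (h1 : IsAlgebraic (Algebra.adjoin E {τ}) β₁) (h2 : IsAlgebraic (Algebra.adjoin E {τ}) β₂) :
    False := by
  have hβ' := AlgebraicIndependent.coe_range hβ
  have hI := (AlgebraicIndependent.matroid_indep_iff (R := E) (A := L)).2 hβ'
  have hs : Set.range ![β₁, β₂] ⊆ (AlgebraicIndependent.matroid E L).closure {τ} := by
    rw [AlgebraicIndependent.matroid_closure_eq]
    rintro _ ⟨i, rfl⟩
    fin_cases i
    · exact h1
    · exact h2
  have := hI.encard_le_eRk_of_subset hs
  rw [Matroid.eRk_closure_eq] at this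
  have h3 := this.trans (Matroid.eRk_le_encard _ _)
  have h4 := (AlgebraicIndependent.injective hβ).encard_range
  rw [Set.encard_singleton] at h3
  have h5 := h4.trans h3
  simp at h5

lemma alg_congr {τ x y : L} (h : IsAlgebraic (Algebra.adjoin E {τ}) x) (e : y = x) :
    IsAlgebraic (Algebra.adjoin E {τ}) y := e ▸ h

lemma alg_coe (τ : L) (e : E) : IsAlgebraic (Algebra.adjoin E {τ}) (algebraMap E L e) := by
  have := isAlgebraic_algebraMap (R := Algebra.adjoin E {τ}) (A := L)
    (algebraMap E (Algebra.adjoin E {τ}) e)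
  rwa [← IsScalarTower.algebraMap_apply] at this

lemma alg_aeval (τ : L) (q : E[X]) : IsAlgebraic (Algebra.adjoin E {τ}) (aeval τ q) :=
  isAlgebraic_algebraMap (R := Algebra.adjoin E {τ}) (A := L)
    ⟨aeval τ q, aeval_mem_adjoin_singleton E τ⟩

lemma alg_self (τ : L) : IsAlgebraic (Algebra.adjoin E {τ}) τ := by
  simpa using alg_aeval τ (X : E[X])

lemma alg_ev {τ ξ : L} (hξ : IsAlgebraic (Algebra.adjoin E {τ}) ξ) (f : E[X][X]) :
    IsAlgebraic (Algebra.adjoin E {τ}) (ev τ ξ f) := by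
  induction f using Polynomial.induction_on' with
  | add p q hp hq => rw [map_add]; exact hp.add hq
  | monomial n a =>
    rw [← C_mul_X_pow_eq_monomial, map_mul, map_pow, ev_C, ev_X]
    exact (alg_aeval τ a).mul (hξ.pow n)

lemma alg_of_ev {τ ξ : L} (hτ : Transcendental E τ) {f : E[X][X]} (hf : f ≠ 0)
    (h0 : ev τ ξ f = 0) : IsAlgebraic (Algebra.adjoin E {τ}) ξ := by
  let ρ : E[X] →+* Algebra.adjoin E {τ} :=
    (aeval (⟨τ, Algebra.self_mem_adjoin_singleton E τ⟩ : Algebra.adjoin E {τ})).toRingHom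
  have hρ : ∀ q, algebraMap _ L (ρ q) = aeval τ q := by
    intro q
    simp only [ρ, AlgHom.toRingHom_eq_coe, RingHom.coe_coe, ← aeval_algebraMap_apply]
    rfl
  have hinj : Function.Injective ρ := by
    intro x y hxy
    apply transcendental_iff_injective.1 hτ
    rw [← hρ, ← hρ, hxy]
  refine ⟨f.map ρ, (Polynomial.map_ne_zero_iff hinj).2 hf, ?_⟩
  rw [← h0, aeval_def, eval₂_map]
  simp only [ev, coe_eval₂RingHom]
  congr 1
  exact RingHom.ext hρ

lemma lin_trans {β₁ β₂ : L} (hβ : AlgebraicIndependent E ![β₁, β₂]) (u v w : E)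
    (huv : u ≠ 0 ∨ v ≠ 0) :
    Transcendental E (algebraMap E L u * β₁ + algebraMap E L v * β₂ + algebraMap E L w) := by
  intro h
  have hh : ∀ τ : L, IsAlgebraic (Algebra.adjoin E {τ})
      (algebraMap E L u * β₁ + algebraMap E L v * β₂ + algebraMap E L w) := fun τ =>
    h.extendScalars (FaithfulSMul.algebraMap_injective E (Algebra.adjoin E {τ}))
  by_cases hu : u = 0
  · have hv : algebraMap E L v ≠ 0 := by simpa using huv.resolve_left (not_not.2 hu)
    refine not_alg_pair hβ β₁ (alg_self _) ?_
    have := (((hh β₁).sub (alg_coe β₁ w)).sub ((alg_coe β₁ u).mul (alg_self β₁))).mul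
      (alg_coe β₁ v⁻¹)
    refine alg_congr this ?_
    rw [map_inv₀]
    field_simp
    ring
  · have hu : algebraMap E L u ≠ 0 := by simpa using hu
    refine not_alg_pair hβ β₂ ?_ (alg_self _)
    have := (((hh β₂).sub (alg_coe β₂ w)).sub ((alg_coe β₂ v).mul (alg_self β₂))).mul
      (alg_coe β₂ u⁻¹)
    refine alg_congr this ?_
    rw [map_inv₀]
    field_simp
    ring

lemma swap_coeff (h : E[X][X]) (i j : ℕ) :
    ((Bivariate.swap h).coeff j).coeff i = (h.coeff i).coeff j := by
  induction h using Polynomial.induction_on' with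
  | add p q hp hq => simp [hp, hq]
  | monomial n p =>
    induction p using Polynomial.induction_on' with
    | add p q hp hq => simp [hp, hq]
    | monomial m a =>
      rw [Bivariate.swap_monomial_monomial]
      simp only [coeff_monomial]
      split_ifs <;> simp_all [coeff_monomial]

lemma C_dvd_of_ev {e : E} {ξ : L} (hξ : Transcendental E ξ) {f : E[X][X]}
    (h : ev (algebraMap E L e) ξ f = 0) : C (X - C e) ∣ f := by
  rw [ev_eq_aeval_map] at h
  have h0 : f.map (evalRingHom e) = 0 :=
    transcendental_iff_injective.1 hξ (by simpa using h)
  rw [C_dvd_iff_dvd_coeff]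
  intro i
  rw [dvd_iff_isRoot]
  have := congrArg (fun z => coeff z i) h0
  simpa using this

/-- the case where τ is algebraic over E -/
lemma contra_alg {f : E[X][X]} (hf : Squarefree f) (e : E) (ξ δ : L) (hξ : Transcendental E ξ)
    (h0 : ev (algebraMap E L e) ξ f = 0)
    (h1 : ev (algebraMap E L e) ξ (dT f) + ev (algebraMap E L e) ξ (derivative f) * δ = 0) :
    False := by
  obtain ⟨g, rfl⟩ := C_dvd_of_ev hξ h0
  rw [dT_mul, dT_C, derivative_mul] at h1
  simp at h1
  obtain ⟨g', rfl⟩ := C_dvd_of_ev hξ h1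
  have := hf (C (X - C e)) ⟨g', by ring⟩
  rw [isUnit_C] at this
  exact not_isUnit_X_sub_C e this

/-- case of nonconstant direction -/
lemma contra_wronskian [IsAlgClosed E] {f : E[X][X]} (hf : Squarefree f) {τ ξ : L}
    (hτ : Transcendental E τ) (h0 : ev τ ξ f = 0)
    (ht : ev τ ξ (dT f) = 0) (hx : ev τ ξ (derivative f) = 0) : False := by
  obtain ⟨h, k, rfl, hh, hh0, hk⟩ := exists_factor hτ hf h0
  rw [dT_mul] at ht
  rw [derivative_mul] at hx
  simp [hh0, hk] at ht hx
  exact no_both_zero hh (derivative_zero_of_dvd (irr_dvd hτ hh hh0 hx))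
    (dT_zero_of_dvd (irr_dvd hτ hh hh0 ht))

lemma contra_const {g : E[X][X]} (hg : Squarefree g) {τ γ : L} (hτ : Transcendental E τ)
    (hγ : Transcendental E γ) (h0 : ev τ γ g = 0) (ht : ev τ γ (dT g) = 0) (M : ℕ)
    (hM : (Bivariate.swap g).natDegree ≤ M)
    (hd : ∀ r : E[X], r.natDegree ≤ M → derivative r = 0 → r.natDegree = 0) : False := by
  obtain ⟨h, k, rfl, hh, hh0, hk⟩ := exists_factor hτ hg h0
  rw [dT_mul] at ht
  simp [hh0, hk] at ht
  have hz := dT_zero_of_dvd (irr_dvd hτ hh hh0 ht)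
  have hs : Bivariate.swap (h * k) ≠ 0 := by
    simpa using hg.ne_zero
  have hsd : (Bivariate.swap h).natDegree ≤ M := by
    refine (natDegree_le_of_dvd ?_ hs).trans hM
    rw [map_mul]; exact dvd_mul_right _ _
  have hc : ∀ i, (h.coeff i).natDegree = 0 := by
    intro i
    apply hd
    · rw [natDegree_le_iff_coeff_eq_zero]
      intro j hj
      rw [← swap_coeff, coeff_eq_zero_of_natDegree_lt (hsd.trans_lt hj), coeff_zero]
    · rw [← dT_coeff, hz, coeff_zero]
  have : h ∈ lifts (C : E →+* E[X]) := by
    rw [lifts_iff_coeff_lifts]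
    intro i
    obtain ⟨r, hr⟩ := natDegree_eq_zero.1 (hc i)
    exact ⟨r, hr⟩
  obtain ⟨r, rfl⟩ := this
  have hr : aeval γ r = 0 := by
    rw [← hh0]
    simp only [ev, coe_mapRingHom, coe_eval₂RingHom, eval₂_map, aeval_def]
    congr 1
    ext; simp
  have : r = 0 := transcendental_iff_injective.1 hγ (by simpa using hr)
  subst this
  simp at hh

lemma ev_taylor (f : E[X][X]) (c : E[X]) (τ γ : L) :
    ev τ γ (taylor c f) = ev τ (γ + aeval τ c) f := by
  induction f using Polynomial.induction_on' with
  | add p q hp hq => simp [hp, hq]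
  | monomial n a =>
    rw [taylor_monomial, ← C_mul_X_pow_eq_monomial]
    simp

lemma dT_pow {E : Type*} [Field E] (f : E[X][X]) (n : ℕ) : dT (f ^ n) = n * f ^ (n - 1) * dT f := by
  unfold dT
  rw [Derivation.leibniz_pow, map_nsmul, map_smul]; simp [mul_assoc]

lemma dT_taylor (f : E[X][X]) (c : E[X]) :
    dT (taylor c f) = taylor c (dT f) + taylor c (derivative f) * C (derivative c) := by
  induction f using Polynomial.induction_on' with
  | add p q hp hq => rw [map_add, dT_add, dT_add, hp, hq]; simp; ring
  | monomial n a =>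
    have h2 : dT (monomial n a) = monomial n (derivative a) := by
      ext1 i; simp only [dT_coeff, coeff_monomial]; split_ifs <;> simp
    rw [h2, taylor_monomial, taylor_monomial, derivative_monomial, taylor_monomial, dT_mul, dT_pow,
      dT_add, dT_X, dT_C, dT_C]
    simp; ring

lemma taylor_squarefree {f : E[X][X]} (hf : Squarefree f) (c : E[X]) : Squarefree (taylor c f) := by
  rintro x ⟨y, hy⟩
  have h1 : f = taylor (-c) x * taylor (-c) x * taylor (-c) y := by
    rw [← taylor_mul, ← taylor_mul, ← hy, taylor_taylor]; simp
  have h2 : IsUnit (taylor (-c) x) := hf _ ⟨_, h1⟩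
  obtain ⟨z, hz⟩ := isUnit_iff_exists_inv.1 h2
  refine isUnit_iff_exists_inv.2 ⟨taylor c z, ?_⟩
  have h3 := congrArg (taylor c) hz
  rwa [taylor_mul, taylor_taylor, add_neg_cancel, taylor_zero, taylor_one, map_one] at h3

lemma swap_taylor_deg {f : E[X][X]} {c : E[X]} {N : ℕ} (h1 : f.natDegree ≤ N)
    (h2 : ∀ i, (f.coeff i).natDegree ≤ N) (h3 : c.natDegree ≤ N) :
    (Bivariate.swap (taylor c f)).natDegree ≤ N + N * N := by
  conv_lhs => rw [f.as_sum_range]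
  rw [map_sum, map_sum]
  refine natDegree_sum_le_of_forall_le _ _ fun i hi => ?_
  rw [taylor_monomial, map_mul, map_pow, map_add, Bivariate.swap_C, Bivariate.swap_C, Bivariate.swap_Y]
  refine natDegree_mul_le.trans (add_le_add (natDegree_map_le.trans (h2 i)) ?_)
  refine natDegree_pow_le.trans (Nat.mul_le_mul ?_ ?_)
  · have := Finset.mem_range.1 hi; omega
  · refine (natDegree_add_le _ _).trans (max_le (by simp) (natDegree_map_le.trans h3))

theorem gL_coprime [IsAlgClosed E] [IsAlgClosed L] {β₁ β₂ : L}
    (hβ : AlgebraicIndependent E ![β₁, β₂])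
    {f : E[X][X]} (hf : Squarefree f) {a b c : E[X]} (hab : IsCoprime a b) {N : ℕ}
    (h1 : f.natDegree ≤ N) (h2 : ∀ i, (f.coeff i).natDegree ≤ N) (h3 : c.natDegree ≤ N)
    (H : wronskian a b ≠ 0 ∨ (a.natDegree = 0 ∧ b.natDegree = 0 ∧
      (∀ r : E[X], r.natDegree ≤ N + N * N → derivative r = 0 → r.natDegree = 0)))
    {A : L[X]} (hA : A = a.map (algebraMap E L) * C β₁ + b.map (algebraMap E L) * C β₂
      + c.map (algebraMap E L)) :
    IsCoprime (gL f A) (derivative (gL f A)) := by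
  have evA : ∀ τ, eval τ A = aeval τ a * β₁ + aeval τ b * β₂ + aeval τ c := by
    intro τ; simp [hA, eval_map, aeval_def]
  have evA' : ∀ τ, eval τ (derivative A) = aeval τ (derivative a) * β₁ +
      aeval τ (derivative b) * β₂ + aeval τ (derivative c) := by
    intro τ; simp [hA, eval_map, aeval_def, derivative_map]
  by_contra hco
  have : ∃ τ, eval τ (gL f A) = 0 ∧ eval τ (derivative (gL f A)) = 0 := by
    rw [isCoprime_iff_aeval_ne_zero_of_isAlgClosed (k := L) L] at hco
    push Not at hco
    simpa using hco
  obtain ⟨τ, r0, r1⟩ := this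
  rw [gL_eval] at r0
  rw [gL_deriv] at r1
  set ξ := eval τ A with hξ
  by_cases hτ : Transcendental E τ
  · have hξalg : IsAlgebraic (Algebra.adjoin E {τ}) ξ :=
      alg_of_ev hτ hf.ne_zero r0
    rcases H with H | ⟨ha, hb, H⟩
    · by_cases hx : ev τ ξ (derivative f) = 0
      · rw [hx, zero_mul, add_zero] at r1
        exact contra_wronskian hf hτ r0 r1 hx
      · exfalso
        have e1 : aeval τ a * β₁ + aeval τ b * β₂ = ξ - aeval τ c := by
          rw [hξ, evA]; ring
        have e2 : aeval τ (derivative a) * β₁ + aeval τ (derivative b) * β₂ =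
            - ev τ ξ (dT f) * (ev τ ξ (derivative f))⁻¹ - aeval τ (derivative c) := by
          rw [evA'] at r1
          field_simp
          linear_combination r1
        have hP : IsAlgebraic (Algebra.adjoin E {τ}) (aeval τ a * β₁ + aeval τ b * β₂) := by
          rw [e1]; exact hξalg.sub (alg_aeval τ c)
        have hQ : IsAlgebraic (Algebra.adjoin E {τ})
            (aeval τ (derivative a) * β₁ + aeval τ (derivative b) * β₂) := by
          rw [e2]
          exact ((alg_ev hξalg _).neg.mul (alg_ev hξalg _).inv).sub (alg_aeval τ _)
        have hW : aeval τ (wronskian a b) ≠ 0 := by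
          intro h
          exact H (transcendental_iff_injective.1 hτ (by simpa using h))
        have hWi := (alg_aeval τ (wronskian a b)).inv
        have hWe : aeval τ (wronskian a b) = aeval τ a * aeval τ (derivative b)
          - aeval τ (derivative a) * aeval τ b := by simp [wronskian]
        refine not_alg_pair hβ τ ?_ ?_
        · have := ((hP.mul (alg_aeval τ (derivative b))).sub (hQ.mul (alg_aeval τ b))).mul hWi
          refine alg_congr this ?_
          field_simp
          rw [hWe]; ring
        · have := ((hQ.mul (alg_aeval τ a)).sub (hP.mul (alg_aeval τ (derivative a)))).mul hWi
          refine alg_congr this ?_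
          field_simp
          rw [hWe]; ring
    · obtain ⟨u, rfl⟩ := natDegree_eq_zero.1 ha
      obtain ⟨v, rfl⟩ := natDegree_eq_zero.1 hb
      have huv : u ≠ 0 ∨ v ≠ 0 := by
        by_contra! hh
        simp only [hh.1, hh.2, map_zero, isCoprime_zero_left] at hab
        exact not_isUnit_zero hab
      have hγ := lin_trans hβ u v 0 huv
      rw [map_zero, add_zero] at hγ
      have hξ' : ξ = (algebraMap E L u * β₁ + algebraMap E L v * β₂) + aeval τ c := by
        rw [hξ, evA]; simp
      refine contra_const (taylor_squarefree hf c) hτ hγ ?_ ?_ _ (swap_taylor_deg h1 h2 h3) H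
      · rw [ev_taylor, ← hξ', r0]
      · rw [dT_taylor, map_add, map_mul, ev_taylor, ev_taylor, ← hξ', ev_C, ← r1, evA']
        simp
  · have hτ' : IsAlgebraic E τ := by simpa [Transcendental] using hτ
    obtain ⟨e, rfl⟩ : ∃ e : E, algebraMap E L e = τ :=
      minpoly.mem_range_of_degree_eq_one E τ
        (IsAlgClosed.degree_eq_one_of_irreducible E (minpoly.irreducible hτ'.isIntegral))
    refine contra_alg hf e ξ _ ?_ r0 r1
    rw [hξ, evA]
    simp only [aeval_algebraMap_apply]
    refine lin_trans hβ _ _ _ ?_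
    by_contra! hh
    obtain ⟨u, v, huv⟩ := hab
    have := congrArg (eval e) huv
    simp only [coe_aeval_eq_eval] at hh
    simp [hh.1, hh.2] at this
end

lemma exists_L (E : Type) [Field E] : ∃ (L : Type) (_ : Field L) (_ : Algebra E L)
    (_ : IsAlgClosed L) (β₁ β₂ : L), AlgebraicIndependent E ![β₁, β₂] := by
  let L := AlgebraicClosure (FractionRing (MvPolynomial (Fin 2) E))
  refine ⟨L, inferInstance, inferInstance, inferInstance,
    algebraMap (MvPolynomial (Fin 2) E) L (MvPolynomial.X 0),
    algebraMap (MvPolynomial (Fin 2) E) L (MvPolynomial.X 1), ?_⟩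
  have h1 := MvPolynomial.algebraicIndependent_X (Fin 2) E
  have h2 := h1.map' (f := IsScalarTower.toAlgHom E (MvPolynomial (Fin 2) E) L)
    (by
      have h3 : Function.Injective (algebraMap (MvPolynomial (Fin 2) E) L) := by
        rw [IsScalarTower.algebraMap_eq _ (FractionRing (MvPolynomial (Fin 2) E)) L]
        exact (algebraMap (FractionRing (MvPolynomial (Fin 2) E)) L).injective.comp
          (IsFractionRing.injective _ _)
      exact h3)
  have h4 : ![algebraMap (MvPolynomial (Fin 2) E) L (MvPolynomial.X 0),
      algebraMap (MvPolynomial (Fin 2) E) L (MvPolynomial.X 1)] =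
      IsScalarTower.toAlgHom E (MvPolynomial (Fin 2) E) L ∘ MvPolynomial.X := by
    ext i
    fin_cases i <;> rfl
  rw [← h4] at h2
  exact h2

section
variable {F : Type*} [Field F]

lemma small_deriv {E : Type*} [Field E] (p : ℕ) [CharP E p] {M : ℕ} (hp : p = 0 ∨ M < p)
    (r : E[X]) (hr : r.natDegree ≤ M) (hd : derivative r = 0) : r.natDegree = 0 := by
  by_contra h
  obtain ⟨n, hn⟩ := Nat.exists_eq_succ_of_ne_zero h
  have h1 := congrArg (fun z => coeff z n) hd
  simp only [coeff_derivative, coeff_zero] at h1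
  have h2 : r.coeff (n + 1) ≠ 0 := by
    have : r.leadingCoeff ≠ 0 := leadingCoeff_ne_zero.2 (by rintro rfl; simp at h)
    rwa [leadingCoeff, hn] at this
  have h3 : ((n + 1 : ℕ) : E) = 0 := by
    push_cast
    exact (mul_eq_zero.1 h1).resolve_left h2
  rw [CharP.cast_eq_zero_iff E p] at h3
  rcases hp with rfl | hp
  · simp at h3
  · have := Nat.le_of_dvd (by omega) h3
    omega

lemma mem_closure_of_deriv {a : F[X]} (ha : derivative a = 0) :
    algebraMap F[X] (RatFunc F) a ∈
      Subfield.closure (Set.range (RatFunc.C (K := F)) ∪ {RatFunc.X ^ ringChar F}) := by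
  have hC : ∀ z : F, RatFunc.C z ∈
      Subfield.closure (Set.range (RatFunc.C (K := F)) ∪ {RatFunc.X ^ ringChar F}) := fun z =>
    Subfield.subset_closure (Or.inl ⟨z, rfl⟩)
  have hX : (RatFunc.X ^ ringChar F : RatFunc F) ∈
      Subfield.closure (Set.range (RatFunc.C (K := F)) ∪ {RatFunc.X ^ ringChar F}) :=
    Subfield.subset_closure (Or.inr rfl)
  by_cases hp : ringChar F = 0
  · have := small_deriv (ringChar F) (Or.inl hp) a le_rfl ha
    obtain ⟨r, rfl⟩ := natDegree_eq_zero.1 this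
    rw [RatFunc.algebraMap_C]
    exact hC r
  · rw [← expand_contract (ringChar F) ha hp]
    generalize contract (ringChar F) a = q
    induction q using Polynomial.induction_on' with
    | add p q hp hq => rw [map_add, map_add]; exact add_mem hp hq
    | monomial n z =>
      rw [expand_monomial, ← C_mul_X_pow_eq_monomial, map_mul, map_pow, RatFunc.algebraMap_C,
        RatFunc.algebraMap_X, mul_comm n, pow_mul]
      exact mul_mem (hC z) (pow_mem hX n)

/-- generic substitution -/
noncomputable def gA (a b c : F[X]) : (MvPolynomial (Fin 2) F)[X] :=
  a.map MvPolynomial.C * C (MvPolynomial.X 0) + b.map MvPolynomial.C * C (MvPolynomial.X 1)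
    + c.map MvPolynomial.C

noncomputable def gG (f : F[X][X]) (a b c : F[X]) : (MvPolynomial (Fin 2) F)[X] :=
  eval (gA a b c) (f.map (mapRingHom MvPolynomial.C))

lemma gG_map {S : Type*} [CommRing S] (φ : MvPolynomial (Fin 2) F →+* S)
    (f : F[X][X]) (a b c : F[X]) :
    (gG f a b c).map φ = eval (a.map (φ.comp MvPolynomial.C) * C (φ (MvPolynomial.X 0)) +
      b.map (φ.comp MvPolynomial.C) * C (φ (MvPolynomial.X 1)) + c.map (φ.comp MvPolynomial.C))
      (f.map (mapRingHom (φ.comp MvPolynomial.C))) := by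
  have h1 : (gA a b c).map φ = a.map (φ.comp MvPolynomial.C) * C (φ (MvPolynomial.X 0)) +
      b.map (φ.comp MvPolynomial.C) * C (φ (MvPolynomial.X 1)) +
      c.map (φ.comp MvPolynomial.C) := by
    simp [gA, Polynomial.map_map]
  rw [← h1, gG, ← coe_mapRingHom, ← eval_map_apply, Polynomial.map_map, mapRingHom_comp]

lemma gG_natDegree {f : F[X][X]} {a b c : F[X]} {N : ℕ} (h1 : f.natDegree ≤ N)
    (h2 : ∀ i, (f.coeff i).natDegree ≤ N) (ha : a.natDegree ≤ N) (hb : b.natDegree ≤ N)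
    (hc : c.natDegree ≤ N) : (gG f a b c).natDegree ≤ N + N * N := by
  unfold gG
  rw [eval_map, eval₂_eq_sum_range]
  refine natDegree_sum_le_of_forall_le _ _ fun i hi => ?_
  refine natDegree_mul_le.trans (add_le_add (natDegree_map_le.trans (h2 i)) ?_)
  refine natDegree_pow_le.trans (Nat.mul_le_mul ?_ ?_)
  · have := Finset.mem_range.1 hi; omega
  · refine natDegree_add_le_of_degree_le (natDegree_add_le_of_degree_le ?_ ?_)
      (natDegree_map_le.trans hc)
    · exact (natDegree_mul_C_le _ _).trans (natDegree_map_le.trans ha)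
    · exact (natDegree_mul_C_le _ _).trans (natDegree_map_le.trans hb)

/-- all coefficients have total degree at most `d` -/
def tdLE (d : ℕ) (g : (MvPolynomial (Fin 2) F)[X]) : Prop := ∀ i, (g.coeff i).totalDegree ≤ d

lemma tdLE_mul {d e : ℕ} {g h : (MvPolynomial (Fin 2) F)[X]} (hg : tdLE d g) (hh : tdLE e h) :
    tdLE (d + e) (g * h) := by
  intro i
  rw [coeff_mul]
  exact MvPolynomial.totalDegree_finsetSum_le fun x _ =>
    (MvPolynomial.totalDegree_mul _ _).trans (add_le_add (hg _) (hh _))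

lemma tdLE_add {d : ℕ} {g h : (MvPolynomial (Fin 2) F)[X]} (hg : tdLE d g) (hh : tdLE d h) :
    tdLE d (g + h) := by
  intro i
  rw [coeff_add]
  exact (MvPolynomial.totalDegree_add _ _).trans (max_le (hg _) (hh _))

lemma tdLE_map (q : F[X]) : tdLE 0 (q.map (MvPolynomial.C (σ := Fin 2))) := by
  intro i
  rw [coeff_map]; simp

lemma tdLE_C {d : ℕ} {r : MvPolynomial (Fin 2) F} (h : r.totalDegree ≤ d) : tdLE d (C r) := by
  intro i
  rw [coeff_C]; split_ifs <;> simp [h]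

lemma tdLE_mono {d e : ℕ} (h : d ≤ e) {g : (MvPolynomial (Fin 2) F)[X]} (hg : tdLE d g) :
    tdLE e g := fun i => (hg i).trans h

lemma tdLE_gA (a b c : F[X]) : tdLE 1 (gA a b c) := by
  refine tdLE_add (tdLE_add ?_ ?_) (tdLE_mono (by simp) (tdLE_map c))
  · simpa using tdLE_mul (tdLE_map a) (tdLE_C (F := F) (d := 1) (r := MvPolynomial.X 0) (by simp))
  · simpa using tdLE_mul (tdLE_map b) (tdLE_C (F := F) (d := 1) (r := MvPolynomial.X 1) (by simp))

lemma tdLE_pow {g : (MvPolynomial (Fin 2) F)[X]} (hg : tdLE 1 g) (n : ℕ) : tdLE n (g ^ n) := by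
  induction n with
  | zero => simpa using tdLE_C (F := F) (d := 0) (r := 1) (by simp)
  | succ n ih => rw [pow_succ]; exact tdLE_mul ih hg

lemma tdLE_gG {f : F[X][X]} (a b c : F[X]) {N : ℕ} (h1 : f.natDegree ≤ N) :
    tdLE N (gG f a b c) := by
  unfold gG
  rw [eval_map, eval₂_eq_sum_range]
  intro i
  rw [finsetSum_coeff]
  refine MvPolynomial.totalDegree_finsetSum_le fun j hj => ?_
  have := tdLE_mul (tdLE_map (f.coeff j)) (tdLE_pow (tdLE_gA a b c) j) i
  refine this.trans ?_
  have := Finset.mem_range.1 hj; omega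

lemma tdLE_derivative {d : ℕ} {g : (MvPolynomial (Fin 2) F)[X]} (hg : tdLE d g) :
    tdLE d (derivative g) := by
  intro i
  rw [coeff_derivative]
  refine (MvPolynomial.totalDegree_mul _ _).trans ?_
  have : ((i : MvPolynomial (Fin 2) F) + 1).totalDegree = 0 := by
    have := MvPolynomial.totalDegree_C (σ := Fin 2) ((i : F) + 1)
    simpa using this
  rw [this]; exact hg _

lemma td_resultant {d m n : ℕ} {g h : (MvPolynomial (Fin 2) F)[X]} (hg : tdLE d g)
    (hh : tdLE d h) : (resultant g h m n).totalDegree ≤ (m + n) * d := by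
  unfold resultant
  rw [Matrix.det_apply]
  refine MvPolynomial.totalDegree_finsetSum_le fun σ _ => ?_
  have h1 : ∀ i j, (sylvester g h m n i j).totalDegree ≤ d := by
    intro i j
    induction j using Fin.addCases with
    | left j => simp only [sylvester, Matrix.of_apply, Fin.addCases_left]; split_ifs <;> simp [hh _]
    | right j => simp only [sylvester, Matrix.of_apply, Fin.addCases_right]; split_ifs <;> simp [hg _]
  have h2 : (∏ i, sylvester g h m n (σ i) i).totalDegree ≤ (m + n) * d := by
    refine (MvPolynomial.totalDegree_finsetProd _ _).trans ?_
    refine (Finset.sum_le_sum fun i _ => h1 _ _).trans ?_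
    simp
  rcases Int.units_eq_one_or (Equiv.Perm.sign σ) with hs | hs
  · rw [hs]; simpa using h2
  · rw [hs]; simpa using h2

end

theorem main_nonzero (F : Type) [Field F] (f : F[X][X]) (a b c : F[X]) (N : ℕ)
    (hf : Squarefree (f.map (mapRingHom (algebraMap F (AlgebraicClosure F)))))
    (hab : IsCoprime a b) (h1 : f.natDegree ≤ N) (h2 : ∀ i, (f.coeff i).natDegree ≤ N)
    (ha : a.natDegree ≤ N) (hb : b.natDegree ≤ N) (hc : c.natDegree ≤ N)
    (H : (ringChar F = 0 ∨ N + N * N < ringChar F) ∨ (a ≠ 0 ∧ notInFtp F a b)) :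
    resultant (gG f a b c) (derivative (gG f a b c)) (gG f a b c).natDegree
      ((gG f a b c).natDegree + 1) ≠ 0 := by
  let E := AlgebraicClosure F
  obtain ⟨L, _, _, _, β₁, β₂, hβ⟩ := exists_L E
  let φ : MvPolynomial (Fin 2) F →+* L :=
    (MvPolynomial.aeval (R := E) ![β₁, β₂]).toRingHom.comp (MvPolynomial.map (algebraMap F E))
  have hφ : Function.Injective φ :=
    Function.Injective.comp (g := MvPolynomial.aeval (R := E) ![β₁, β₂]) hβ (MvPolynomial.map_injective _ (algebraMap F E).injective)
  have hφC : φ.comp MvPolynomial.C = (algebraMap E L).comp (algebraMap F E) := by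
    ext x; simp [φ]
  have hφ0 : φ (MvPolynomial.X 0) = β₁ := by simp [φ]
  have hφ1 : φ (MvPolynomial.X 1) = β₂ := by simp [φ]
  have hchar : CharP E (ringChar F) := charP_of_injective_algebraMap (algebraMap F E).injective _
  have hco : IsCoprime ((gG f a b c).map φ) (derivative ((gG f a b c).map φ)) := by
    have key := gL_coprime hβ hf (a := a.map (algebraMap F E)) (b := b.map (algebraMap F E))
      (c := c.map (algebraMap F E)) (hab.map (mapRingHom (algebraMap F E))) (N := N)
      (natDegree_map_le.trans h1)
      (fun i => by rw [coeff_map]; exact natDegree_map_le.trans (h2 i))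
      (natDegree_map_le.trans hc) ?_ rfl
    · convert key using 1 <;>
      · rw [gG_map, hφC, hφ0, hφ1, gL]
        simp only [Polynomial.map_map, mapRingHom_comp]
        try rfl
    · by_cases hw : wronskian a b = 0
      · right
        obtain ⟨ha', hb'⟩ := hab.wronskian_eq_zero_iff.1 hw
        rcases H with H | ⟨-, H⟩
        · rw [natDegree_map, natDegree_map]
          have H' : ringChar F = 0 ∨ N < ringChar F := H.imp_right fun h => by
            have := Nat.le_add_right N (N * N); omega
          exact ⟨small_deriv _ H' a ha ha', small_deriv _ H' b hb hb',
            small_deriv (ringChar F) H⟩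
        · exact absurd (div_mem (mem_closure_of_deriv hb') (mem_closure_of_deriv ha')) H
      · left
        have : wronskian (a.map (algebraMap F E)) (b.map (algebraMap F E)) =
            (wronskian a b).map (algebraMap F E) := by simp [wronskian, derivative_map]
        rw [this]
        exact (Polynomial.map_ne_zero_iff (algebraMap F E).injective).2 hw
  intro h0
  have h3 := congrArg φ h0
  rw [map_zero, ← resultant_map_map, ← derivative_map,
    ← natDegree_map_eq_of_injective hφ (gG f a b c)] at h3
  generalize (gG f a b c).map φ = g at hco h3
  have hle : (derivative g).natDegree ≤ g.natDegree := (natDegree_derivative_le g).trans (by omega)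
  obtain ⟨k, hk⟩ := Nat.exists_eq_add_of_le (hle.trans (Nat.le_succ _))
  rw [Nat.succ_eq_add_one] at hk
  rw [hk, resultant_add_right_deg _ _ _ _ _ le_rfl, mul_eq_zero] at h3
  rcases h3 with h3 | h3
  · have h4 := eq_zero_of_pow_eq_zero h3
    rw [coeff_natDegree, leadingCoeff_eq_zero] at h4
    subst h4
    rw [derivative_zero, isCoprime_zero_left] at hco
    exact not_isUnit_zero hco
  · exact resultant_ne_zero _ _ hco h3

/-- For every `N` there are constants `C N`, `C' N` such that for any field
`F` of characteristic `p`, any `f ∈ F[t][x]` square-free over the algebraic closure `F̄` with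
`deg_x f, deg_t f ≤ N`, and any `a, b, c ∈ F[t]` of degree at most `N` with `gcd(a,b) = 1`,
there is a polynomial `P ∈ F[x₁,x₂]` of total degree at most `C' N` vanishing at every
`(β₁,β₂)` for which `f(t, a(t)β₁ + b(t)β₂ + c(t))` is not separable; moreover `P` can be
chosen nonzero whenever `p = 0` or `p > C N`, or `a ≠ 0` and `b/a ∉ F(t^p)`. -/
theorem exists_discriminant_poly_univariate (N : ℕ) :
    ∃ C C' : ℕ, ∀ (F : Type) [Field F],
      ∀ (f : Polynomial (Polynomial F)) (a b c : Polynomial F),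
        Squarefree
          (Polynomial.map (Polynomial.mapRingHom (algebraMap F (AlgebraicClosure F))) f) →
        IsRelPrime a b →
        f.natDegree ≤ N → (∀ i, (f.coeff i).natDegree ≤ N) →
        a.natDegree ≤ N → b.natDegree ≤ N → c.natDegree ≤ N →
        ∃ P : MvPolynomial (Fin 2) F,
          P.totalDegree ≤ C' ∧
          (∀ β₁ β₂ : F,
            ¬ (Polynomial.eval (a * Polynomial.C β₁ + b * Polynomial.C β₂ + c) f).Separable →
            MvPolynomial.eval ![β₁, β₂] P = 0) ∧
          (((ringChar F = 0 ∨ C < ringChar F) ∨ (a ≠ 0 ∧ notInFtp F a b)) → P ≠ 0) := by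
  refine ⟨N + N * N, ((N + N * N) + (N + N * N + 1)) * N, ?_⟩
  intro F _ f a b c hf hab h1 h2 ha hb hc
  refine ⟨resultant (gG f a b c) (derivative (gG f a b c)) (gG f a b c).natDegree
      ((gG f a b c).natDegree + 1), ?_, ?_, ?_⟩
  · refine (td_resultant (tdLE_gG a b c h1) (tdLE_derivative (tdLE_gG a b c h1))).trans ?_
    have := gG_natDegree h1 h2 ha hb hc
    exact Nat.mul_le_mul_right _ (by omega)
  · intro β₁ β₂ hs
    by_contra hne
    apply hs
    obtain ⟨p, q, -, -, hpq⟩ := exists_mul_add_mul_eq_C_resultant (m := (gG f a b c).natDegree)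
      (n := (gG f a b c).natDegree + 1) (gG f a b c) (derivative (gG f a b c)) le_rfl
      ((natDegree_derivative_le _).trans (by omega)) (Or.inr (by omega))
    have h3 := congrArg (Polynomial.map (MvPolynomial.eval ![β₁, β₂])) hpq
    have hG : (gG f a b c).map (MvPolynomial.eval ![β₁, β₂]) =
        Polynomial.eval (a * Polynomial.C β₁ + b * Polynomial.C β₂ + c) f := by
      have : (MvPolynomial.eval ![β₁, β₂]).comp MvPolynomial.C = RingHom.id F := by
        ext; simp
      rw [gG_map, this]
      simp
    rw [Polynomial.map_add, Polynomial.map_mul, Polynomial.map_mul, ← derivative_map, hG,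
      map_C] at h3
    set r := MvPolynomial.eval ![β₁, β₂] (resultant (gG f a b c) (derivative (gG f a b c))
      (gG f a b c).natDegree ((gG f a b c).natDegree + 1)) with hr
    refine ⟨p.map (MvPolynomial.eval ![β₁, β₂]) * Polynomial.C r⁻¹,
      q.map (MvPolynomial.eval ![β₁, β₂]) * Polynomial.C r⁻¹, ?_⟩
    have h4 : Polynomial.C r * Polynomial.C r⁻¹ = 1 := by
      rw [← map_mul, mul_inv_cancel₀ hne, map_one]
    rw [← h4, ← h3]
    ring
  · exact main_nonzero F f a b c N hf hab.isCoprime h1 h2 ha hb hc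
end

section
/- Let F be a field of positive characteristic p with algebraic closure F̄, and let F^{1/p} = F({c^{1/p} : c ∈ F}) be the subfield of F̄ obtained by adjoining all p-th roots of elements of F. For f ∈ F[x₁,…,x_d] the following are equivalent: (1) f is square-free as an element of F̄[x₁,…,x_d]; (2) f is square-free as an element of F^{1/p}[x₁,…,x_d]; (3) f is square-free as an element of F[x₁,…,x_d] and f has no irreducible factor g ∈ F[x₁,…,x_d] lying in F[x₁^p,…,x_d^p]. -/
/-- The subfield `F^{1/p}` of the algebraic closure `F̄` obtained by adjoining to `F` the
`p`-th roots of all elements of `F` (here realized as the subfield generated by all elements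
whose `p`-th power lies in the image of `F`). -/
noncomputable def pthRootClosure (F : Type*) [Field F] (p : ℕ) :
    Subfield (AlgebraicClosure F) :=
  Subfield.closure
    {x : AlgebraicClosure F | x ^ p ∈ Set.range (algebraMap F (AlgebraicClosure F))}

/-- The natural embedding `F →+* F^{1/p}`. -/
noncomputable def toPthRootClosure (F : Type*) [Field F] (p : ℕ) :
    F →+* pthRootClosure F p :=
  RingHom.codRestrict (algebraMap F (AlgebraicClosure F)) (pthRootClosure F p)
    (fun x => Subfield.subset_closure ⟨x ^ p, (map_pow (algebraMap F (AlgebraicClosure F)) x p)⟩)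

open MvPolynomial in
lemma aux_unit {σ K L : Type*} [Field K] [Field L] (φ : K →+* L) (s : MvPolynomial σ K)
    (h : IsUnit (map φ s)) : IsUnit s := by
  rw [MvPolynomial.isUnit_iff] at h ⊢
  simpa [coeff_map] using h

open MvPolynomial in
lemma aux_descend {σ K L : Type*} [Field K] [Field L] (φ : K →+* L) (f : MvPolynomial σ K)
    (h : Squarefree (map φ f)) : Squarefree f := by
  intro s hs
  have h1 : IsUnit (map φ s) := h _ (by rw [← map_mul]; exact map_dvd (map φ) hs)
  exact aux_unit φ s h1

attribute [local instance] MvPolynomial.algebraMvPolynomial in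
open MvPolynomial in
lemma aux_dvd {σ K L : Type*} [Field K] [Field L] [Algebra K L]
    {a b : MvPolynomial σ K} (hab : IsRelPrime a b) {u v : MvPolynomial σ L}
    (h : map (algebraMap K L) a * u = map (algebraMap K L) b * v) :
    map (algebraMap K L) b ∣ u := by
  have : Module.Free (MvPolynomial σ K) (MvPolynomial σ L) :=
    (Algebra.IsPushout.out (R := K) (S := MvPolynomial σ K) (R' := L)
      (S' := MvPolynomial σ L)).free
  let B := Module.Free.chooseBasis (MvPolynomial σ K) (MvPolynomial σ L)
  have h' : a • u = b • v := by
    rw [Algebra.smul_def, Algebra.smul_def]; exact h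
  have hi : ∀ i, b ∣ B.repr u i := by
    intro i
    have := congrArg (fun w => B.repr w i) h'
    simp only [map_smul, Finsupp.smul_apply, smul_eq_mul] at this
    exact hab.symm.dvd_of_dvd_mul_left ⟨_, this⟩
  rw [← B.linearCombination_repr u, Finsupp.linearCombination_apply, Finsupp.sum]
  refine Finset.dvd_sum fun i _ => ?_
  rw [Algebra.smul_def]
  exact Dvd.dvd.mul_right (map_dvd (map (algebraMap K L)) (hi i)) _

open MvPolynomial in
lemma aux_relPrime {σ K L : Type*} [Field K] [Field L] [Algebra K L]
    {a b : MvPolynomial σ K} (hb : b ≠ 0) (hab : IsRelPrime a b) :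
    IsRelPrime (map (algebraMap K L) a) (map (algebraMap K L) b) := by
  rintro h ⟨a', ha⟩ ⟨b', hb'⟩
  have hb0 : map (algebraMap K L) b ≠ 0 := by
    rwa [Ne, map_eq_zero_iff _ (map_injective _ (algebraMap K L).injective)]
  obtain ⟨w, hw⟩ := aux_dvd (L := L) hab (u := b') (v := a') (by rw [ha, hb']; ring)
  have hb'0 : b' ≠ 0 := by rintro rfl; simp [hb'] at hb0
  rw [hb'] at hw
  refine IsUnit.of_mul_eq_one w (mul_left_cancel₀ hb'0 ?_)
  linear_combination -hw

open MvPolynomial in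
lemma aux_pderiv_not_dvd {σ K : Type*} [Field K] {g : MvPolynomial σ K} {j : σ}
    (h0 : pderiv j g ≠ 0) : ¬ g ∣ pderiv j g := by
  rintro ⟨q, hq⟩
  have hg : g ≠ 0 := by rintro rfl; simp at h0
  have hq0 : q ≠ 0 := by rintro rfl; simp [hq] at h0
  have h1 := totalDegree_mul_of_isDomain hg hq0
  rw [← hq] at h1
  have hlt : (pderiv j g).totalDegree + 1 ≤ g.totalDegree := by
    obtain ⟨m, hm, hmd⟩ := Finset.exists_mem_eq_sup (pderiv j g).support
      (support_nonempty.mpr h0) (fun s => s.sum fun _ e => e)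
    have hm' : m + Finsupp.single j 1 ∈ g.support := by
      rw [mem_support_iff, coeff_pderiv] at hm
      exact mem_support_iff.mpr (left_ne_zero_of_mul hm)
    have := le_totalDegree hm'
    rw [Finsupp.sum_add_index' (by simp) (by simp), Finsupp.sum_single_index (by simp)] at this
    rw [totalDegree, hmd]
    exact this
  omega

open MvPolynomial in
lemma aux_expand {σ K : Type*} [Field K] (p : ℕ) [CharP K p] (hp : 0 < p)
    {g : MvPolynomial σ K} (h : ∀ j, pderiv j g = 0) : ∃ g', expand p g' = g := by
  have hd : ∀ m ∈ g.support, ∀ i, p ∣ m i := by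
    intro m hm i
    by_cases h0 : m i = 0
    · simp [h0]
    have hc := congrArg (coeff (m - Finsupp.single i 1)) (h i)
    have hle : Finsupp.single i 1 ≤ m := by
      rw [Finsupp.single_le_iff]; omega
    rw [coeff_pderiv, tsub_add_cancel_of_le hle, coeff_zero] at hc
    rcases mul_eq_zero.mp hc with hc | hc
    · exact absurd hc (mem_support_iff.mp hm)
    · rw [Finsupp.tsub_apply, Finsupp.single_eq_same] at hc
      rw [← CharP.cast_eq_zero_iff K p]
      rw [← hc, ← Nat.cast_succ]; congr 1; omega
  have hm : ∀ m ∈ g.support, monomial m (coeff m g) ∈ (expand (σ := σ) (R := K) p).range := by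
    intro m hm
    refine ⟨monomial (m.mapRange (· / p) (by simp)) (coeff m g), ?_⟩
    change expand p _ = _
    rw [expand_monomial]
    have he : p • m.mapRange (· / p) (by simp) = m := by
      ext i
      simpa using Nat.mul_div_cancel' (hd m hm i)
    rw [he]
  rw [g.as_sum]
  exact Subalgebra.sum_mem _ hm

open MvPolynomial in
lemma aux_main {σ K L : Type*} [Field K] [Field L] [Algebra K L] (p : ℕ) [CharP K p] (hp : 0 < p)
    (f : MvPolynomial σ K) (hf : Squarefree f)
    (h : ¬ ∃ g : MvPolynomial σ K, Irreducible g ∧ g ∣ f ∧ ∃ g', expand p g' = g) :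
    Squarefree (map (algebraMap K L) f) := by
  induction f using UniqueFactorizationMonoid.induction_on_prime with
  | h₁ => exact absurd hf not_squarefree_zero
  | h₂ x hx => exact (hx.map (map (algebraMap K L))).squarefree
  | h₃ k g hk hg ih =>
    rw [squarefree_mul_iff] at hf
    rw [map_mul, squarefree_mul_iff]
    refine ⟨aux_relPrime hk hf.1, ?_, ih hf.2.2 ?_⟩
    · obtain ⟨j, hj⟩ : ∃ j, pderiv j g ≠ 0 := by
        by_contra! hc
        exact h ⟨g, hg.irreducible, dvd_mul_right _ _, aux_expand p hp hc⟩
      have hr := aux_relPrime (L := L) hj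
        (hg.irreducible.isRelPrime_iff_not_dvd.2 (aux_pderiv_not_dvd hj))
      rintro s ⟨q, hq⟩
      refine hr (Dvd.intro (s * q) (by rw [hq]; ring)) ?_
      rw [← pderiv_map, hq, pderiv_mul, pderiv_mul]
      exact ⟨(pderiv j s + pderiv j s) * q + s * pderiv j q, by ring⟩
    · rintro ⟨g', h1, h2, h3⟩
      exact h ⟨g', h1, h2.mul_left _, h3⟩

open MvPolynomial in
lemma aux_root {σ K L : Type*} [Field K] [Field L] (φ : K →+* L) (p : ℕ) [Fact p.Prime] [CharP L p]
    (hφ : ∀ a, ∃ b, b ^ p = φ a) (g : MvPolynomial σ K) :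
    ∃ h, h ^ p = map φ (expand p g) := by
  induction g using MvPolynomial.induction_on with
  | C a => obtain ⟨b, hb⟩ := hφ a; exact ⟨C b, by simp [← hb]⟩
  | add a b ha hb =>
    obtain ⟨x, hx⟩ := ha
    obtain ⟨y, hy⟩ := hb
    exact ⟨x + y, by rw [add_pow_char, hx, hy, map_add, map_add]⟩
  | mul_X a i ha =>
    obtain ⟨x, hx⟩ := ha
    exact ⟨x * X i, by rw [mul_pow, hx]; simp⟩

/-- Let `F` be a field of characteristic `p > 0` with algebraic closure `F̄`.
For `f ∈ F[x₁,…,x_d]` the following are equivalent: (1) `f` is square-free in `F̄[x₁,…,x_d]`;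
(2) `f` is square-free in `F^{1/p}[x₁,…,x_d]`; (3) `f` is square-free in `F[x₁,…,x_d]` and has
no irreducible factor lying in `F[x₁^p,…,x_d^p]`. -/
theorem squarefree_absolute_tfae (F : Type*) [Field F] (p : ℕ) [CharP F p] (hp : 0 < p)
    (d : ℕ) (f : MvPolynomial (Fin d) F) :
    List.TFAE
      [ Squarefree (MvPolynomial.map (algebraMap F (AlgebraicClosure F)) f),
        Squarefree (MvPolynomial.map (toPthRootClosure F p) f),
        Squarefree f ∧
          ¬ ∃ g : MvPolynomial (Fin d) F,
              Irreducible g ∧ g ∣ f ∧ ∃ g', MvPolynomial.expand p g' = g ] := by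
  have hpp : p.Prime := (CharP.char_is_prime_or_zero F p).resolve_right hp.ne'
  have : Fact p.Prime := ⟨hpp⟩
  have : CharP (pthRootClosure F p) p :=
    charP_of_injective_ringHom (toPthRootClosure F p).injective p
  tfae_have 1 → 2 := by
    intro h
    apply aux_descend (pthRootClosure F p).subtype
    rw [MvPolynomial.map_map]
    exact h
  tfae_have 2 → 3 := by
    intro h
    refine ⟨aux_descend _ _ h, ?_⟩
    rintro ⟨g, hg, hgf, g', rfl⟩
    have hroot : ∀ a : F, ∃ b, b ^ p = toPthRootClosure F p a := by
      intro a
      obtain ⟨x, hx⟩ := IsAlgClosed.exists_pow_nat_eq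
        (algebraMap F (AlgebraicClosure F) a) hp
      exact ⟨⟨x, Subfield.subset_closure ⟨a, hx.symm⟩⟩, Subtype.ext hx⟩
    obtain ⟨k, hk⟩ := aux_root (toPthRootClosure F p) p hroot g'
    have hd := map_dvd (MvPolynomial.map (toPthRootClosure F p)) hgf
    rw [← hk] at hd
    have hu : IsUnit k := h k (by rw [← sq]; exact (pow_dvd_pow k hpp.two_le).trans hd)
    have hu' := hu.pow p
    rw [hk] at hu'
    exact hg.not_isUnit (aux_unit _ _ hu')
  tfae_have 3 → 1 := fun h => aux_main p hp f h.1 h.2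
  tfae_finish
end

section
/- Let F be a perfect field with algebraic closure F̄, and let f ∈ F[x₁,…,x_d]. Then f is square-free as an element of F[x₁,…,x_d] if and only if f is square-free as an element of F̄[x₁,…,x_d]. -/
section Helpers

open MvPolynomial

attribute [local instance] MvPolynomial.algebraMvPolynomial

/-- Coprimality (in the form `q ∣ r t → q ∣ t`) is preserved by extension of scalars. -/
theorem aux_regular {F K : Type*} [Field F] [Field K] [Algebra F K] {σ : Type*}
    (q r : MvPolynomial σ F) (h : ∀ t, q ∣ r * t → q ∣ t) (t : MvPolynomial σ K)
    (ht : map (algebraMap F K) q ∣ map (algebraMap F K) r * t) :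
    map (algebraMap F K) q ∣ t := by
  classical
  have e := (Algebra.IsPushout.equiv F (MvPolynomial σ F) K (MvPolynomial σ K)).toLinearEquiv
  have hfree : Module.Free (MvPolynomial σ F) (MvPolynomial σ K) := Module.Free.of_equiv e
  let b := Module.Free.chooseBasis (MvPolynomial σ F) (MvPolynomial σ K)
  obtain ⟨u, hu⟩ := ht
  have hs : ∀ (a : MvPolynomial σ F) (x : MvPolynomial σ K),
      map (algebraMap F K) a * x = a • x := fun a x => (Algebra.smul_def a x).symm
  rw [hs, hs] at hu
  have hd : ∀ i, q ∣ b.repr t i := by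
    intro i
    apply h
    refine ⟨b.repr u i, ?_⟩
    have := congrArg (fun x => b.repr x i) hu
    simpa using this
  rw [← b.linearCombination_repr t, Finsupp.linearCombination_apply, Finsupp.sum]
  refine Finset.dvd_sum fun i _ => ?_
  rw [← hs]
  exact (map_dvd (map (algebraMap F K)) (hd i)).mul_right _

/-- A common nonunit factor over the extension forces divisibility. -/
theorem aux_dvd_s5 {F K : Type*} [Field F] [Field K] [Algebra F K] {σ : Type*}
    (q r : MvPolynomial σ F) (hq : Irreducible q) (g : MvPolynomial σ K) (hg : ¬ IsUnit g)
    (h1 : g ∣ map (algebraMap F K) q) (h2 : g ∣ map (algebraMap F K) r) : q ∣ r := by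
  by_contra hr
  obtain ⟨s, hs⟩ := h1
  obtain ⟨v, hv⟩ := h2
  have hq0 : map (algebraMap F K) q ≠ 0 := fun h0 => hq.ne_zero
    (map_injective _ (algebraMap F K).injective (by simpa using h0))
  have := aux_regular (K := K) q r (fun t ht => (hq.prime.dvd_or_dvd ht).resolve_left hr) s
    ⟨v, by rw [hs, hv]; ring⟩
  obtain ⟨w, hw⟩ := this
  apply hg
  refine IsUnit.of_mul_eq_one w ?_
  apply mul_left_cancel₀ hq0
  calc _ = g * (map (algebraMap F K) q * w) := by ring
    _ = _ := by rw [← hw, mul_one, ← hs]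

theorem aux_pderiv {F : Type*} [Field F] {σ : Type*} (q : MvPolynomial σ F) (i : σ)
    (h : q ∣ pderiv i q) : pderiv i q = 0 := by
  by_contra h0
  obtain ⟨w, hw⟩ := h
  have hq : q ≠ 0 := by rintro rfl; simp at h0
  have hw0 : w ≠ 0 := by rintro rfl; simp [hw] at h0
  have hle : degreeOf i q ≤ degreeOf i (pderiv i q) := by
    rw [hw, degreeOf_mul_eq hq hw0]; omega
  have key : ∀ m ∈ (pderiv i q).support, m i < degreeOf i q := by
    intro m hm
    rw [mem_support_iff, coeff_pderiv] at hm
    have := monomial_le_degreeOf i (mem_support_iff.mpr (left_ne_zero_of_mul hm))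
    simp at this
    omega
  obtain ⟨m, hm⟩ := support_nonempty.mpr h0
  have := (degreeOf_lt_iff (lt_of_le_of_lt (Nat.zero_le _) (key m hm))).mpr key
  omega

theorem aux_not_irreducible {F : Type*} [Field F] [PerfectField F] {σ : Type*}
    (q : MvPolynomial σ F) (h : ∀ i, pderiv i q = 0) : ¬ Irreducible q := by
  intro hq
  have key : ∀ m ∈ q.support, ∀ i, ((m i : ℕ) : F) = 0 := by
    intro m hm i
    by_cases hmi : m i = 0
    · simp [hmi]
    have h1 := congrArg (coeff (m - Finsupp.single i 1)) (h i)
    have h2 : m - Finsupp.single i 1 + Finsupp.single i 1 = m :=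
      tsub_add_cancel_of_le (by simpa using Nat.one_le_iff_ne_zero.mpr hmi)
    rw [coeff_pderiv, h2, coeff_zero] at h1
    have h3 := (mul_eq_zero.mp h1).resolve_left (mem_support_iff.mp hm)
    have h4 : m i = (m - Finsupp.single i 1 : σ →₀ ℕ) i + 1 := by simp; omega
    rw [h4]; exact_mod_cast h3
  obtain ⟨p, hp⟩ := ExpChar.exists F
  rcases hp with _ | hp
  · have : q = C (coeff 0 q) := by
      classical
      ext m
      rw [coeff_C]
      split_ifs with hm
      · rw [hm]
      · by_contra hc
        apply hm
        ext i
        have := key m (mem_support_iff.mpr hc) i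
        simpa using (Nat.cast_eq_zero.mp this).symm
    apply hq.not_isUnit
    rw [this]
    refine (IsUnit.mk0 _ fun h0 => hq.ne_zero ?_).map C
    rw [this, h0, C_0]
  · have hprime := hp
    have : Fact p.Prime := ⟨hprime⟩
    have : ExpChar F p := ExpChar.prime hprime
    have hmem : q ∈ (frobenius (MvPolynomial σ F) p).range := by
      rw [q.as_sum]
      refine Subring.sum_mem _ fun m hm => ?_
      obtain ⟨c, hc⟩ := (PerfectRing.bijective_frobenius (R := F) (p := p)).2 (coeff m q)
      refine ⟨monomial (m.mapRange (· / p) (Nat.zero_div p)) c, ?_⟩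
      have hexp : p • m.mapRange (· / p) (Nat.zero_div p) = m := by
        ext i
        have := (CharP.cast_eq_zero_iff F p (m i)).mp (key m hm i)
        simpa using Nat.mul_div_cancel' this
      rw [frobenius_def, monomial_pow, ← hc, hexp]
    obtain ⟨r, hr⟩ := hmem
    rw [frobenius_def] at hr
    rw [← hr] at hq
    exact not_irreducible_pow hprime.ne_one hq

end Helpers

/-- Over a perfect field `F`, a multivariate polynomial `f ∈ F[x₁,…,x_d]` is
square-free iff it is square-free as an element of `F̄[x₁,…,x_d]`. -/
theorem squarefree_iff_squarefree_algClosure_of_perfect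
    (F : Type*) [Field F] [PerfectField F] (d : ℕ) (f : MvPolynomial (Fin d) F) :
    Squarefree f ↔ Squarefree (MvPolynomial.map (algebraMap F (AlgebraicClosure F)) f) := by
  have hinj : Function.Injective
      (MvPolynomial.map (σ := Fin d) (algebraMap F (AlgebraicClosure F))) :=
    MvPolynomial.map_injective _ (algebraMap F (AlgebraicClosure F)).injective
  constructor
  · intro hf
    have hf0 : f ≠ 0 := hf.ne_zero
    have hf0' := (map_ne_zero_iff _ hinj).mpr hf0
    rw [squarefree_iff_irreducible_sq_not_dvd_of_ne_zero hf0']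
    intro g hg hgf
    have hgp := hg.prime
    have hgf1 := (dvd_mul_right g g).trans hgf
    -- an irreducible factor `q` of `f` that is divisible by `g`
    obtain ⟨q, hq, hqf, hgq⟩ : ∃ q, Irreducible q ∧ q ∣ f ∧
        g ∣ MvPolynomial.map (algebraMap F (AlgebraicClosure F)) q := by
      clear hgf hf hf0'
      induction f using WfDvdMonoid.induction_on_irreducible with
      | zero => exact absurd rfl hf0
      | unit u hu => exact absurd (isUnit_of_dvd_unit hgf1 (hu.map _)) hg.not_isUnit
      | mul a i ha hi ih =>
        rw [map_mul] at hgf1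
        rcases hgp.dvd_or_dvd hgf1 with h | h
        · exact ⟨i, hi, dvd_mul_right _ _, h⟩
        · obtain ⟨q, h1, h2, h3⟩ := ih ha h
          exact ⟨q, h1, h2.mul_left _, h3⟩
    obtain ⟨h, rfl⟩ := hqf
    by_cases hh : g ∣ MvPolynomial.map (algebraMap F (AlgebraicClosure F)) h
    · have := aux_dvd_s5 q h hq g hg.not_isUnit hgq hh
      exact hq.not_isUnit (hf q (mul_dvd_mul_left q this))
    · obtain ⟨s, hs⟩ := hgq
      rw [map_mul, hs, mul_assoc] at hgf
      have h1 := (mul_dvd_mul_iff_left hg.ne_zero).mp hgf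
      obtain ⟨t, rfl⟩ := (hgp.dvd_or_dvd h1).resolve_right hh
      refine aux_not_irreducible q (fun i => aux_pderiv q i ?_) hq
      refine aux_dvd_s5 q _ hq g hg.not_isUnit ⟨_, hs⟩ ?_
      rw [← MvPolynomial.pderiv_map, hs, MvPolynomial.pderiv_mul, MvPolynomial.pderiv_mul]
      exact ⟨MvPolynomial.pderiv i g * t + (MvPolynomial.pderiv i g * t
        + g * MvPolynomial.pderiv i t), by ring⟩
  · intro hf s hs
    have hu := hf (MvPolynomial.map (algebraMap F (AlgebraicClosure F)) s)
      (by rw [← map_mul]; exact map_dvd _ hs)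
    rw [MvPolynomial.isUnit_iff] at hu ⊢
    simpa [MvPolynomial.coeff_map] using hu
end

section
/- Let F be a field and L ⊇ F an algebraic field extension. Let h ∈ L[x₁,…,x_d] be nonconstant and irreducible in L[x₁,…,x_d]. Then there exists h_m ∈ F[x₁,…,x_d] such that: (1) h divides h_m in L[x₁,…,x_d]; and (2) for every f ∈ F[x₁,…,x_d], if h divides f in L[x₁,…,x_d] then h_m divides f in F[x₁,…,x_d]. Equivalently, the ideal ⟨h⟩ ∩ F[x₁,…,x_d] of F[x₁,…,x_d] is a nonzero principal ideal. -/
/-- Let `L ⊇ F` be an algebraic field extension and let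
`h ∈ L[x₁,…,x_d]` be nonconstant and irreducible. Then there exists a nonzero
`h_m ∈ F[x₁,…,x_d]` such that `h ∣ h_m` in `L[x₁,…,x_d]` and every `f ∈ F[x₁,…,x_d]`
divisible by `h` in `L[x₁,…,x_d]` is divisible by `h_m` in `F[x₁,…,x_d]`
(i.e. `⟨h⟩ ∩ F[x₁,…,x_d]` is a nonzero principal ideal). -/
theorem exists_minimal_polynomial_factor (F L : Type*) [Field F] [Field L]
    [Algebra F L] [Algebra.IsAlgebraic F L] (d : ℕ)
    (h : MvPolynomial (Fin d) L) (hconst : 0 < h.totalDegree) (hirr : Irreducible h) :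
    ∃ hm : MvPolynomial (Fin d) F,
      hm ≠ 0 ∧
      h ∣ MvPolynomial.map (algebraMap F L) hm ∧
      ∀ f : MvPolynomial (Fin d) F,
        h ∣ MvPolynomial.map (algebraMap F L) f → hm ∣ f := by
  let : Algebra (MvPolynomial (Fin d) F) (MvPolynomial (Fin d) L) :=
    MvPolynomial.algebraMvPolynomial
  have hmap : algebraMap (MvPolynomial (Fin d) F) (MvPolynomial (Fin d) L) =
      MvPolynomial.map (algebraMap F L) := rfl
  have : Algebra.IsIntegral F L := inferInstance
  have hint : Algebra.IsIntegral (MvPolynomial (Fin d) F) (MvPolynomial (Fin d) L) :=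
    inferInstance
  have : FaithfulSMul (MvPolynomial (Fin d) F) (MvPolynomial (Fin d) L) := by
    rw [faithfulSMul_iff_algebraMap_injective, hmap]
    exact MvPolynomial.map_injective _ (algebraMap F L).injective
  have : Algebra.HasGoingDown (MvPolynomial (Fin d) F) (MvPolynomial (Fin d) L) :=
    inferInstance
  have hprime : Prime h := hirr.prime
  have hP : (Ideal.span {h}).IsPrime := (Ideal.span_singleton_prime hprime.ne_zero).2 hprime
  have hne : (Ideal.span {h}).comap
      (algebraMap (MvPolynomial (Fin d) F) (MvPolynomial (Fin d) L)) ≠ ⊥ :=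
    Ideal.comap_ne_bot_of_integral_mem hprime.ne_zero (Ideal.mem_span_singleton_self h)
      (Algebra.IsIntegral.isIntegral h)
  obtain ⟨p, hp, hpp⟩ := (hP.comap
    (algebraMap (MvPolynomial (Fin d) F) (MvPolynomial (Fin d) L))).exists_mem_prime_of_ne_bot hne
  refine ⟨p, hpp.ne_zero, Ideal.mem_span_singleton.1 hp, ?_⟩
  intro f hf
  have : (Ideal.span {p}).IsPrime := (Ideal.span_singleton_prime hpp.ne_zero).2 hpp
  have hle : Ideal.span {p} ≤ (Ideal.span {h}).under (MvPolynomial (Fin d) F) := by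
    rw [Ideal.span_singleton_le_iff_mem]
    exact hp
  obtain ⟨Q, hQ, hQp, hQo⟩ := Ideal.exists_ideal_le_liesOver_of_le (Ideal.span {h}) hle
  have hQne : Q ≠ ⊥ := by
    rintro rfl
    have h1 : p ∈ (⊥ : Ideal (MvPolynomial (Fin d) L)).under (MvPolynomial (Fin d) F) := by
      rw [← hQo.over]
      exact Ideal.mem_span_singleton_self p
    exact hpp.ne_zero (by simpa using h1)
  obtain ⟨r, hr, hrp⟩ := hQp.exists_mem_prime_of_ne_bot hQne
  have hhr : h ∣ r := Ideal.mem_span_singleton.1 (hQ hr)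
  have hrh : r ∣ h := (hirr.associated_of_dvd hrp.irreducible hhr).symm.dvd
  rw [← Ideal.mem_span_singleton, hQo.over]
  exact Ideal.mem_of_dvd Q (hrh.trans hf) hr
end

section
/- Let F be a field and L ⊇ F an algebraic field extension. Let f ∈ F[x₁,…,x_d] be square-free in F[x₁,…,x_d], and let h ∈ L[x₁,…,x_d] be irreducible with h² ∣ f in L[x₁,…,x_d]. Let f = f₁⋯f_k be a factorization of f into irreducible factors f_i ∈ F[x₁,…,x_d]. Then there exists an index j, 1 ≤ j ≤ k, such that h² divides f_j in L[x₁,…,x_d]; moreover every variable x_i that occurs in f_j occurs in h. -/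
section Helpers

attribute [local instance] MvPolynomial.algebraMvPolynomial

/-- A prime of the base that divides `g * a` upstairs in a free extension, but not `g`,
divides `a`. -/
lemma dvd_of_dvd_algebraMap_mul {R S : Type*} [CommRing R] [CommRing S] [Algebra R S]
    [Module.Free R S] {p g : R} (hp : Prime p) (hg : ¬ p ∣ g) {a : S}
    (h : algebraMap R S p ∣ algebraMap R S g * a) : algebraMap R S p ∣ a := by
  obtain ⟨c, hc⟩ := h
  rw [← Algebra.smul_def, ← Algebra.smul_def] at hc
  let b := Module.Free.chooseBasis R S
  have key : ∀ i, p ∣ b.repr a i := by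
    intro i
    have h1 := congrArg (fun x => b.repr x i) hc
    simp only [map_smul, Finsupp.smul_apply, smul_eq_mul] at h1
    exact (hp.dvd_or_dvd ⟨_, h1⟩).resolve_left hg
  rw [← b.linearCombination_repr a, Finsupp.linearCombination_apply, Finsupp.sum]
  refine Finset.dvd_sum fun i _ => ?_
  rw [Algebra.smul_def]
  exact Dvd.dvd.mul_right (map_dvd _ (key i)) _

lemma dvd_of_common_factor {F L : Type*} [Field F] [Field L] [Algebra F L] {d : ℕ}
    {p g : MvPolynomial (Fin d) F} (hp : Irreducible p) {h : MvPolynomial (Fin d) L}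
    (hh : ¬ IsUnit h) (h1 : h ∣ MvPolynomial.map (algebraMap F L) p)
    (h2 : h ∣ MvPolynomial.map (algebraMap F L) g) : p ∣ g := by
  by_contra hg
  have : Module.Free (MvPolynomial (Fin d) F) (MvPolynomial (Fin d) L) :=
    Module.Free.of_equiv (Algebra.IsPushout.equiv F (MvPolynomial (Fin d) F) L
      (MvPolynomial (Fin d) L)).toLinearEquiv
  obtain ⟨p', hp'⟩ := h1
  obtain ⟨g', hg'⟩ := h2
  have h3 : MvPolynomial.map (algebraMap F L) p ∣ p' := by
    refine dvd_of_dvd_algebraMap_mul (S := MvPolynomial (Fin d) L) hp.prime hg ⟨g', ?_⟩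
    change MvPolynomial.map (algebraMap F L) g * p' = MvPolynomial.map (algebraMap F L) p * g'
    rw [hp', hg']; ring
  have hp0 : MvPolynomial.map (algebraMap F L) p ≠ 0 := by
    intro h0
    exact hp.ne_zero (MvPolynomial.map_injective _ (algebraMap F L).injective (by simpa using h0))
  obtain ⟨u, hu⟩ := h3
  apply hh
  refine IsUnit.of_mul_eq_one u ?_
  apply mul_left_cancel₀ hp0
  calc _ = h * (MvPolynomial.map (algebraMap F L) p * u) := by ring
    _ = _ := by rw [← hu, ← hp', mul_one]

/-- Substitute zero for the variable `i`. -/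
noncomputable def killVar {K : Type*} [Field K] {d : ℕ} (i : Fin d) :
    MvPolynomial (Fin d) K →ₐ[K] MvPolynomial (Fin d) K :=
  MvPolynomial.bind₁ (Function.update MvPolynomial.X i 0)

lemma killVar_eq_self {K : Type*} [Field K] {d : ℕ} (i : Fin d) {h : MvPolynomial (Fin d) K}
    (hi : h.degreeOf i = 0) : killVar i h = h := by
  have hi' : i ∉ h.vars := by simp [MvPolynomial.mem_vars_iff_degreeOf_ne_zero, hi]
  have := MvPolynomial.hom_congr_vars (f₁ := (killVar i : _ →ₐ[K] _).toRingHom)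
    (f₂ := RingHom.id (MvPolynomial (Fin d) K)) (p₁ := h) (p₂ := h)
    (by ext1 c; simp [killVar]) (by
      intro j hj _
      have : j ≠ i := by rintro rfl; exact hi' hj
      simp [killVar, this]) rfl
  simpa using this

lemma degreeOf_killVar {K : Type*} [Field K] {d : ℕ} (i : Fin d) (h : MvPolynomial (Fin d) K) :
    (killVar i h).degreeOf i = 0 := by
  by_contra hne
  rw [← ne_eq, ← MvPolynomial.mem_vars_iff_degreeOf_ne_zero] at hne
  have := MvPolynomial.vars_bind₁ _ _ hne
  simp only [Finset.mem_biUnion] at this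
  obtain ⟨j, -, hj⟩ := this
  by_cases hji : j = i
  · subst hji; simp at hj
  · simp [hji] at hj; exact hji hj.symm

lemma X_dvd_of_killVar {K : Type*} [Field K] {d : ℕ} (i : Fin d) {h : MvPolynomial (Fin d) K}
    (hi : killVar i h = 0) : MvPolynomial.X i ∣ h := by
  rw [← Ideal.mem_span_singleton, ← Ideal.Quotient.eq_zero_iff_mem]
  let I := Ideal.span {(MvPolynomial.X i : MvPolynomial (Fin d) K)}
  have h1 : (Ideal.Quotient.mkₐ K I).comp (killVar i) = Ideal.Quotient.mkₐ K I := by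
    apply MvPolynomial.algHom_ext
    intro j
    by_cases hji : j = i
    · subst hji
      have : Ideal.Quotient.mk I (MvPolynomial.X j) = 0 :=
        Ideal.Quotient.eq_zero_iff_mem.2 (Ideal.mem_span_singleton_self _)
      simp [killVar, this]
    · simp [killVar, hji]
  have h2 := DFunLike.congr_fun h1 h
  simp only [AlgHom.comp_apply, hi, map_zero] at h2
  exact h2.symm

lemma killVar_map {F L : Type*} [Field F] [Field L] [Algebra F L] {d : ℕ} (i : Fin d)
    (p : MvPolynomial (Fin d) F) : killVar i (MvPolynomial.map (algebraMap F L) p) =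
      MvPolynomial.map (algebraMap F L) (killVar i p) := by
  unfold killVar
  rw [MvPolynomial.map_bind₁]
  congr 2
  funext j
  by_cases hji : j = i
  · subst hji; simp
  · simp [hji]

end Helpers


/-- Let `L ⊇ F` be an algebraic field extension, `f ∈ F[x₁,…,x_d]`
square-free, and `h ∈ L[x₁,…,x_d]` irreducible with `h² ∣ f` in `L[x₁,…,x_d]`. If
`f = f₁⋯f_k` with each `f_i ∈ F[x₁,…,x_d]` irreducible, then `h²` divides some `f_j` in
`L[x₁,…,x_d]`, and every variable occurring in that `f_j` occurs in `h`. -/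
theorem sq_divisor_in_extension_divides_a_factor (F L : Type*) [Field F] [Field L]
    [Algebra F L] [Algebra.IsAlgebraic F L] (d k : ℕ)
    (f : MvPolynomial (Fin d) F) (hf : Squarefree f)
    (h : MvPolynomial (Fin d) L) (hirr : Irreducible h)
    (hdvd : h ^ 2 ∣ MvPolynomial.map (algebraMap F L) f)
    (fs : Fin k → MvPolynomial (Fin d) F)
    (hfs : ∀ i, Irreducible (fs i)) (hprod : f = ∏ i, fs i) :
    ∃ j : Fin k,
      h ^ 2 ∣ MvPolynomial.map (algebraMap F L) (fs j) ∧
      ∀ i : Fin d, 0 < MvPolynomial.degreeOf i (fs j) → 0 < MvPolynomial.degreeOf i h := by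
  have hhp : Prime h := hirr.prime
  have hmap : MvPolynomial.map (algebraMap F L) f
      = ∏ i, MvPolynomial.map (algebraMap F L) (fs i) := by rw [hprod, map_prod]
  have h1 : h ∣ ∏ i, MvPolynomial.map (algebraMap F L) (fs i) :=
    hmap ▸ (dvd_pow_self h two_ne_zero).trans hdvd
  obtain ⟨j, -, hj⟩ := (hhp.dvd_finset_prod_iff _).1 h1
  refine ⟨j, ?_, ?_⟩
  · rw [hmap, ← Finset.mul_prod_erase _ _ (Finset.mem_univ j)] at hdvd
    refine hhp.pow_dvd_of_dvd_mul_right 2 ?_ hdvd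
    intro hB
    obtain ⟨l, hl, hl'⟩ := (hhp.dvd_finset_prod_iff _).1 hB
    have hd : fs j ∣ fs l := dvd_of_common_factor (hfs j) hirr.not_isUnit hj hl'
    refine (hfs j).not_isUnit (hf _ ?_)
    rw [hprod, ← Finset.mul_prod_erase _ _ (Finset.mem_univ j)]
    exact mul_dvd_mul_left _ (hd.trans (Finset.dvd_prod_of_mem fs hl))
  · intro i hi
    by_contra hne
    have hi0 : h.degreeOf i = 0 := by omega
    have hk : h ∣ MvPolynomial.map (algebraMap F L) (killVar i (fs j)) := by
      rw [← killVar_map]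
      have := map_dvd (killVar i) hj
      rwa [killVar_eq_self i hi0] at this
    obtain ⟨c, hc⟩ := dvd_of_common_factor (hfs j) hirr.not_isUnit hj hk
    by_cases hz : killVar i (fs j) = 0
    · have hX : Prime (MvPolynomial.X i : MvPolynomial (Fin d) L) := MvPolynomial.X_prime
      have hXF : Prime (MvPolynomial.X i : MvPolynomial (Fin d) F) := MvPolynomial.X_prime
      have hass := hXF.irreducible.associated_of_dvd (hfs j) (X_dvd_of_killVar i hz)
      have h2 : h ∣ MvPolynomial.X i := by
        have := hj.trans (map_dvd (MvPolynomial.map (algebraMap F L)) hass.symm.dvd)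
        rwa [MvPolynomial.map_X] at this
      obtain ⟨e, he⟩ := (hirr.associated_of_dvd hX.irreducible h2).symm.dvd
      have h3 := killVar_eq_self i hi0
      rw [he] at h3
      simp only [map_mul] at h3
      have h4 : killVar i (MvPolynomial.X i : MvPolynomial (Fin d) L) = 0 := by simp [killVar]
      rw [h4, zero_mul, ← he] at h3
      exact hirr.ne_zero h3.symm
    · have hc0 : c ≠ 0 := by rintro rfl; simp at hc; exact hz hc
      have := degreeOf_killVar i (fs j)
      rw [hc, MvPolynomial.degreeOf_mul_eq (hfs j).ne_zero hc0] at this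
      omega
end

section
/- Let D be a unique factorization domain, let a, b, c ∈ D with gcd(a,b) = 1, and let Ψ : D[x₁] → D[x₁,x₂] be the D-algebra homomorphism with Ψ(x₁) = a·x₁ + b·x₂ + c. If f ∈ D[x₁] is primitive (the only elements of D dividing all coefficients of f are units), then the greatest common divisor in D of the coefficients of Ψ(f) ∈ D[x₁,x₂] is 1, i.e. Ψ(f) is primitive over D. -/
open Polynomial in
lemma comp_linear_aux {K : Type*} [CommRing K] [IsDomain K] (g : K[X]) (a c : K) (ha : a ≠ 0)
    (h : g.comp (C a * X + C c) = 0) : g = 0 := by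
  rcases comp_eq_zero_iff.1 h with h | ⟨_, h⟩
  · exact h
  · have := congrArg natDegree h
    rw [natDegree_linear ha, natDegree_C] at this
    omega

open Polynomial in
lemma subst_aux {D K : Type*} [CommRing D] [CommRing K] [IsDomain K] (φ : D →+* K) (a b c : D)
    (hab : φ a ≠ 0 ∨ φ b ≠ 0) (f : D[X])
    (h : ∀ m, φ ((Polynomial.eval₂ MvPolynomial.C
          (MvPolynomial.C a * MvPolynomial.X 0 + MvPolynomial.C b * MvPolynomial.X 1 +
            MvPolynomial.C c) f : MvPolynomial (Fin 2) D).coeff m) = 0) : f.map φ = 0 := by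
  set P := (Polynomial.eval₂ MvPolynomial.C
          (MvPolynomial.C a * MvPolynomial.X 0 + MvPolynomial.C b * MvPolynomial.X 1 +
            MvPolynomial.C c) f : MvPolynomial (Fin 2) D) with hP
  have h0 : ∀ v : Fin 2 → K[X], MvPolynomial.eval₂Hom (C.comp φ) v P = 0 := by
    intro v
    rw [MvPolynomial.coe_eval₂Hom, MvPolynomial.eval₂_eq]
    refine Finset.sum_eq_zero fun m _ => ?_
    simp [h m]
  have h1 : ∀ v : Fin 2 → K[X],
      (f.map φ).comp (C (φ a) * v 0 + C (φ b) * v 1 + C (φ c)) = 0 := by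
    intro v
    have := h0 v
    rw [hP, Polynomial.hom_eval₂] at this
    rw [Polynomial.comp, Polynomial.eval₂_map, ← this]
    congr 1
    · ext x
      simp
    · simp
  rcases hab with ha | hb
  · exact comp_linear_aux _ _ (φ c) ha (by simpa using h1 ![X, 0])
  · exact comp_linear_aux _ _ (φ c) hb (by simpa using h1 ![0, X])

/-- Let `D` be a UFD, `a, b, c ∈ D` with `gcd(a,b) = 1`, and let
`Ψ : D[x₁] → D[x₁,x₂]` be the `D`-algebra homomorphism `x₁ ↦ a·x₁ + b·x₂ + c`. If
`f ∈ D[x₁]` is primitive, then `Ψ(f)` is primitive over `D` (the only elements of `D`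
dividing all coefficients of `Ψ(f)` are units). -/
theorem primitive_of_linear_subst (D : Type*) [CommRing D] [IsDomain D]
    [UniqueFactorizationMonoid D] (a b c : D) (hab : IsRelPrime a b)
    (f : Polynomial D) (hf : ∀ r : D, (∀ i, r ∣ f.coeff i) → IsUnit r) :
    ∀ r : D,
      (∀ m, r ∣ (Polynomial.eval₂ MvPolynomial.C
          (MvPolynomial.C a * MvPolynomial.X 0 + MvPolynomial.C b * MvPolynomial.X 1 +
            MvPolynomial.C c) f : MvPolynomial (Fin 2) D).coeff m) →
      IsUnit r := by
  intro r hr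
  by_contra hu
  obtain ⟨p, hpu, hpP, hpr⟩ : ∃ p : D, ¬ IsUnit p ∧ (Ideal.span {p}).IsPrime ∧ p ∣ r := by
    by_cases h0 : r = 0
    · refine ⟨0, not_isUnit_zero, ?_, by simp [h0]⟩
      rw [Ideal.span_singleton_zero]
      exact Ideal.isPrime_bot
    · obtain ⟨p, hp, hpr⟩ := WfDvdMonoid.exists_irreducible_factor hu h0
      exact ⟨p, hp.not_isUnit, (Ideal.span_singleton_prime hp.ne_zero).2 hp.prime, hpr⟩
  have hz : ∀ x : D, Ideal.Quotient.mk (Ideal.span {p}) x = 0 ↔ p ∣ x := fun x => by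
    rw [Ideal.Quotient.eq_zero_iff_mem, Ideal.mem_span_singleton]
  have hf0 := subst_aux (Ideal.Quotient.mk (Ideal.span {p})) a b c (by
    by_contra! hcon
    exact hpu (hab ((hz a).1 hcon.1) ((hz b).1 hcon.2))) f
    (fun m => (hz _).2 (hpr.trans (hr m)))
  refine hpu (hf p fun i => (hz _).1 ?_)
  rw [← Polynomial.coeff_map, hf0, Polynomial.coeff_zero]
end

section
/- Let D be a unique factorization domain, let a, b, c ∈ D with gcd(a,b) = 1, and let Ψ : D[x₁] → D[x₁,x₂] be the D-algebra homomorphism with Ψ(x₁) = a·x₁ + b·x₂ + c. If f ∈ D[x₁] is irreducible in D[x₁], then Ψ(f) is irreducible in D[x₁,x₂]. -/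
open Polynomial in
theorem aux_inj (R : Type*) [CommRing R] [IsDomain R] (a b c : R) (h : a ≠ 0 ∨ b ≠ 0)
    (g : Polynomial R)
    (hg : (Polynomial.eval₂ MvPolynomial.C
        (MvPolynomial.C a * MvPolynomial.X 0 + MvPolynomial.C b * MvPolynomial.X 1 +
          MvPolynomial.C c) g : MvPolynomial (Fin 2) R) = 0) : g = 0 := by
  have key : ∀ a : R, a ≠ 0 → g.comp (C a * X + C c) = 0 → g = 0 := by
    intro a ha h
    rcases Polynomial.comp_eq_zero_iff.1 h with h | ⟨_, h⟩
    · exact h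
    · have := congrArg (fun p => p.coeff 1) h
      simp [coeff_C, coeff_X] at this
      exact absurd this ha
  rcases h with h | h
  · apply key a h
    have := congrArg (MvPolynomial.eval₂Hom (C : R →+* R[X]) ![X, 0]) hg
    rw [Polynomial.hom_eval₂] at this
    simpa [Polynomial.comp] using this
  · apply key b h
    have := congrArg (MvPolynomial.eval₂Hom (C : R →+* R[X]) ![0, X]) hg
    rw [Polynomial.hom_eval₂] at this
    simpa [Polynomial.comp] using this

theorem aux_X0 (K : Type*) [Field K] (f : Polynomial K) (hf : Irreducible f) :
    Irreducible (Polynomial.aeval (MvPolynomial.X 0 : MvPolynomial (Fin 2) K) f) := by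
  have h1 : Prime ((MvPolynomial.uniqueAlgEquiv K ({0} : Set (Fin 2))).symm f) :=
    (MulEquiv.prime_iff (MvPolynomial.uniqueAlgEquiv K ({0} : Set (Fin 2))).symm).2 hf.prime
  have h2 := ((MvPolynomial.prime_rename_iff ({0} : Set (Fin 2))).2 h1).irreducible
  suffices h : Polynomial.aeval (MvPolynomial.X 0 : MvPolynomial (Fin 2) K) f =
      MvPolynomial.rename Subtype.val
        ((MvPolynomial.uniqueAlgEquiv K ({0} : Set (Fin 2))).symm f) by
    rw [h]; exact h2
  change _ = (MvPolynomial.rename Subtype.val :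
    MvPolynomial ({0} : Set (Fin 2)) K →ₐ[K] MvPolynomial (Fin 2) K).toRingHom
    (Polynomial.eval₂ MvPolynomial.C (MvPolynomial.X default) f)
  rw [Polynomial.hom_eval₂, Polynomial.aeval_def]
  congr 1
  · ext1 x
    simp [MvPolynomial.algebraMap_eq]
  · simp

theorem aux_field (K : Type*) [Field K] (a b c : K) (h : a ≠ 0 ∨ b ≠ 0)
    (f : Polynomial K) (hf : Irreducible f) :
    Irreducible (Polynomial.aeval 
        (MvPolynomial.C a * MvPolynomial.X 0 + MvPolynomial.C b * MvPolynomial.X 1 +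
          MvPolynomial.C c : MvPolynomial (Fin 2) K) f) := by
  have key : ∀ e : MvPolynomial (Fin 2) K ≃ₐ[K] MvPolynomial (Fin 2) K,
      e (MvPolynomial.X 0) = (MvPolynomial.C a * MvPolynomial.X 0 +
        MvPolynomial.C b * MvPolynomial.X 1 + MvPolynomial.C c) → 
      Irreducible (Polynomial.aeval 
        (MvPolynomial.C a * MvPolynomial.X 0 + MvPolynomial.C b * MvPolynomial.X 1 +
          MvPolynomial.C c : MvPolynomial (Fin 2) K) f) := by
    intro e he
    have := (MulEquiv.irreducible_iff e).2 (aux_X0 K f hf)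
    rwa [← Polynomial.aeval_algHom_apply, he] at this
  rcases h with h | h
  · have hh : (MvPolynomial.C a * MvPolynomial.C a⁻¹ : MvPolynomial (Fin 2) K) = 1 := by
      rw [← MvPolynomial.C_mul, mul_inv_cancel₀ h, MvPolynomial.C_1]
    refine key (AlgEquiv.ofAlgHom
      (MvPolynomial.aeval ![MvPolynomial.C a * MvPolynomial.X 0 +
        MvPolynomial.C b * MvPolynomial.X 1 + MvPolynomial.C c, MvPolynomial.X 1])
      (MvPolynomial.aeval ![MvPolynomial.C a⁻¹ * (MvPolynomial.X 0 -
        MvPolynomial.C b * MvPolynomial.X 1 - MvPolynomial.C c), MvPolynomial.X 1]) ?_ ?_) ?_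
    · ext i : 1
      fin_cases i
      · simp [MvPolynomial.algHom_C, -MvPolynomial.C_mul]
        linear_combination (MvPolynomial.X 0) * hh
      · simp
    · ext i : 1
      fin_cases i
      · simp [MvPolynomial.algHom_C]
        linear_combination (MvPolynomial.X 0 -
          MvPolynomial.C b * MvPolynomial.X 1 - MvPolynomial.C c) * hh
      · simp
    · simp
  · have hh : (MvPolynomial.C b * MvPolynomial.C b⁻¹ : MvPolynomial (Fin 2) K) = 1 := by
      rw [← MvPolynomial.C_mul, mul_inv_cancel₀ h, MvPolynomial.C_1]
    refine key (AlgEquiv.ofAlgHom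
      (MvPolynomial.aeval ![MvPolynomial.C a * MvPolynomial.X 0 +
        MvPolynomial.C b * MvPolynomial.X 1 + MvPolynomial.C c, MvPolynomial.X 0])
      (MvPolynomial.aeval ![MvPolynomial.X 1, MvPolynomial.C b⁻¹ * (MvPolynomial.X 0 -
        MvPolynomial.C a * MvPolynomial.X 1 - MvPolynomial.C c)]) ?_ ?_) ?_
    · ext i : 1
      fin_cases i
      · simp
      · simp [MvPolynomial.algHom_C]
        linear_combination (MvPolynomial.X 1) * hh
    · ext i : 1
      fin_cases i
      · simp [MvPolynomial.algHom_C]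
        linear_combination (MvPolynomial.X 0 -
          MvPolynomial.C a * MvPolynomial.X 1 - MvPolynomial.C c) * hh
      · simp
    · simp

/-- Let `D` be a UFD, `a, b, c ∈ D` with `gcd(a,b) = 1`, and let
`Ψ : D[x₁] → D[x₁,x₂]` be the `D`-algebra homomorphism `x₁ ↦ a·x₁ + b·x₂ + c`. If
`f ∈ D[x₁]` is irreducible, then `Ψ(f)` is irreducible in `D[x₁,x₂]`. -/
theorem irreducible_of_linear_subst (D : Type*) [CommRing D] [IsDomain D]
    [UniqueFactorizationMonoid D] (a b c : D) (hab : IsRelPrime a b)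
    (f : Polynomial D) (hf : Irreducible f) :
    Irreducible
      (Polynomial.eval₂ MvPolynomial.C
        (MvPolynomial.C a * MvPolynomial.X 0 + MvPolynomial.C b * MvPolynomial.X 1 +
          MvPolynomial.C c) f : MvPolynomial (Fin 2) D) := by
  by_cases hdeg : f.natDegree = 0
  · obtain ⟨p, rfl⟩ := Polynomial.natDegree_eq_zero.1 hdeg
    rw [Polynomial.eval₂_C]
    exact ((MvPolynomial.prime_C_iff (Fin 2)).2 (Polynomial.prime_C_iff.1 hf.prime)).irreducible
  let K := FractionRing D
  have hinj : Function.Injective (algebraMap D K) := IsFractionRing.injective D K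
  have hab0 : a ≠ 0 ∨ b ≠ 0 := by
    by_contra! h
    rw [h.1, h.2] at hab
    exact not_isUnit_zero (hab dvd_rfl dvd_rfl)
  have hab1 : algebraMap D K a ≠ 0 ∨ algebraMap D K b ≠ 0 := by
    simpa using hab0
  have hfK : Irreducible (f.map (algebraMap D K)) :=
    (Polynomial.IsPrimitive.irreducible_iff_irreducible_map_fraction_map
      (hf.isPrimitive hdeg)).1 hf
  have hK := aux_field K _ _ (algebraMap D K c) hab1 _ hfK
  set F := (Polynomial.eval₂ MvPolynomial.C
        (MvPolynomial.C a * MvPolynomial.X 0 + MvPolynomial.C b * MvPolynomial.X 1 +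
          MvPolynomial.C c) f : MvPolynomial (Fin 2) D) with hF
  have hmap : MvPolynomial.map (algebraMap D K) F = Polynomial.aeval 
        (MvPolynomial.C (algebraMap D K a) * MvPolynomial.X 0 + 
          MvPolynomial.C (algebraMap D K b) * MvPolynomial.X 1 +
          MvPolynomial.C (algebraMap D K c) : MvPolynomial (Fin 2) K)
          (f.map (algebraMap D K)) := by
    rw [hF, Polynomial.hom_eval₂, Polynomial.aeval_def, Polynomial.eval₂_map]
    congr 1
    · ext1 x; simp [MvPolynomial.algebraMap_eq]
    · simp
  rw [← hmap] at hK
  have hconst : ∀ d : D, MvPolynomial.C d ∣ F → IsUnit d := by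
    intro d hd
    by_contra hu
    have hd0 : d ≠ 0 := by
      rintro rfl
      rw [MvPolynomial.C_0, zero_dvd_iff] at hd
      rw [hd, map_zero] at hK
      exact hK.ne_zero rfl
    obtain ⟨p, hp, hpd⟩ := WfDvdMonoid.exists_irreducible_factor hu hd0
    have hpF : MvPolynomial.C p ∣ F := (map_dvd MvPolynomial.C hpd).trans hd
    have hpp := hp.prime
    let I := Ideal.span {p}
    have hI : I.IsPrime := (Ideal.span_singleton_prime hpp.ne_zero).2 hpp
    let q := Ideal.Quotient.mk I
    have hq : ∀ x, q x = 0 ↔ p ∣ x := fun x => by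
      rw [Ideal.Quotient.eq_zero_iff_mem, Ideal.mem_span_singleton]
    have h1 : MvPolynomial.map q F = 0 := by
      obtain ⟨G, hG⟩ := hpF
      rw [hG, map_mul, MvPolynomial.map_C, (hq p).2 dvd_rfl, MvPolynomial.C_0, zero_mul]
    have h2 : f.map q = 0 := by
      refine aux_inj (D ⧸ I) (q a) (q b) (q c) ?_ _ ?_
      · by_contra! h
        exact hp.not_isUnit (hab ((hq _).1 h.1) ((hq _).1 h.2))
      · rw [← h1, hF, Polynomial.hom_eval₂, Polynomial.eval₂_map]
        congr 1
        · ext1 x; simp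
        · simp
    have h3 : Polynomial.C p ∣ f := by
      rw [Polynomial.C_dvd_iff_dvd_coeff]
      intro i
      rw [← hq, ← Polynomial.coeff_map, h2, Polynomial.coeff_zero]
    exact hp.not_isUnit ((hf.isPrimitive hdeg) p h3)
  have hunit : ∀ g : MvPolynomial (Fin 2) D, g ∣ F → 
      IsUnit (MvPolynomial.map (algebraMap D K) g) → IsUnit g := by
    intro g hg hu
    have ht := (MvPolynomial.isUnit_iff_totalDegree_of_isReduced.1 hu).2
    rw [MvPolynomial.totalDegree, MvPolynomial.support_map_of_injective _ hinj,
      ← MvPolynomial.totalDegree] at ht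
    rw [MvPolynomial.totalDegree_eq_zero_iff_eq_C] at ht
    rw [ht] at hg ⊢
    exact (hconst _ hg).map MvPolynomial.C
  refine ⟨fun h => hK.not_isUnit (h.map _), fun g h hgh => ?_⟩
  have := hK.isUnit_or_isUnit (a := MvPolynomial.map (algebraMap D K) g)
    (b := MvPolynomial.map (algebraMap D K) h) (by rw [hgh, map_mul])
  exact this.imp (hunit g ⟨h, hgh⟩) (hunit h ⟨g, by rw [hgh, mul_comm]⟩)
end

section
/- Let F be a field of positive characteristic p. Let f ∈ F(t, x₁) be a rational function, and let a, b, c ∈ F(t) with a ≠ 0 and b/a ∉ F(t^p). If the rational function f(t, a(t)·x₁ + b(t)·x₂ + c(t)) lies in the subfield F(t^p, x₁, x₂) of F(t, x₁, x₂), then f lies in the subfield F(t^p, x₁^p) of F(t, x₁). -/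
/-- The inclusion of constants `F → F(t)`. -/
noncomputable def ratC (F : Type) [Field F] : F →+* RatFunc F := RatFunc.C

/-- The inclusion `F(t) → F(t)(x₁) = F(t,x₁)`. -/
noncomputable def ratC2 (F : Type) [Field F] : RatFunc F →+* RatFunc (RatFunc F) := RatFunc.C

/-- The inclusion `F(t,x₁) → F(t,x₁)(x₂) = F(t,x₁,x₂)`. -/
noncomputable def ratC3 (F : Type) [Field F] :
    RatFunc (RatFunc F) →+* RatFunc (RatFunc (RatFunc F)) := RatFunc.C

noncomputable instance auxIntAlg {K : Type} [Field K] : Algebra ℤ (RatFunc K) := Ring.toIntAlgebra _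

open Polynomial in
theorem aux_exists_der {K : Type} [Field K] (d : Derivation ℤ K K) (g : RatFunc K) :
    ∃ D : Derivation ℤ (RatFunc K) (RatFunc K),
      (∀ k, D (RatFunc.C k) = RatFunc.C (d k)) ∧ D RatFunc.X = g := by
  let σ : K →+* DualNumber (RatFunc K) :=
    { toFun := fun k => TrivSqZeroExt.inl (RatFunc.C k) + TrivSqZeroExt.inr (RatFunc.C (d k))
      map_one' := by ext <;> simp
      map_zero' := by ext <;> simp
      map_add' := by intro x y; ext <;> simp
      map_mul' := by
        intro x y
        ext
        · simp
        · simp [mul_comm] }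
  let ψ : K[X] →+* DualNumber (RatFunc K) :=
    Polynomial.eval₂RingHom σ (TrivSqZeroExt.inl RatFunc.X + TrivSqZeroExt.inr g)
  have hψ : ∀ P, (ψ P).fst = algebraMap K[X] (RatFunc K) P := by
    intro P
    have : ((TrivSqZeroExt.fstHom ℤ (RatFunc K) (RatFunc K)).toRingHom.comp ψ)
        = algebraMap K[X] (RatFunc K) := by
      apply Polynomial.ringHom_ext
      · intro k; simp [ψ, σ, RatFunc.algebraMap_C]
      · simp [ψ, RatFunc.algebraMap_X]
    exact congrArg (fun h => h P) this
  have hu : ∀ y : nonZeroDivisors K[X], IsUnit (ψ y) := by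
    intro y
    rw [TrivSqZeroExt.isUnit_iff_isUnit_fst, hψ, isUnit_iff_ne_zero]
    simp
  let Φ : RatFunc K →+* DualNumber (RatFunc K) := IsLocalization.lift (M := nonZeroDivisors K[X]) hu
  have hΦ : ∀ P, Φ (algebraMap K[X] (RatFunc K) P) = ψ P := fun P => IsLocalization.lift_eq hu P
  have hfst : ∀ x, (Φ x).fst = x := by
    intro x
    have : ((TrivSqZeroExt.fstHom ℤ (RatFunc K) (RatFunc K)).toRingHom.comp Φ)
        = RingHom.id _ := by
      apply IsLocalization.ringHom_ext (nonZeroDivisors K[X])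
      refine RingHom.ext fun P => ?_
      simp [hΦ, hψ]
    exact congrArg (fun h => h x) this
  refine ⟨Derivation.mk' (AddMonoidHom.toIntLinearMap
    { toFun := fun x => (Φ x).snd
      map_zero' := by simp
      map_add' := by intro x y; simp }) ?_, ?_, ?_⟩
  · intro x y
    simp [hfst]
    exact mul_comm _ _
  · intro k
    have := hΦ (Polynomial.C k)
    rw [RatFunc.algebraMap_C] at this
    simp [this, ψ, σ]
  · have := hΦ (Polynomial.X)
    rw [RatFunc.algebraMap_X] at this
    simp [this, ψ]

/-- The subfield of constants of a derivation. -/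
def auxConst {L : Type} [Field L] (D : Derivation ℤ L L) : Subfield L where
  carrier := {x | D x = 0}
  mul_mem' := by intro x y hx hy; simp_all
  one_mem' := by simp
  add_mem' := by intro x y hx hy; simp_all
  zero_mem' := by simp
  neg_mem' := by intro x hx; simp_all
  inv_mem' := by intro x hx; simp_all [Derivation.leibniz_inv]

theorem mem_auxConst {L : Type} [Field L] (D : Derivation ℤ L L) (x : L) :
    x ∈ auxConst D ↔ D x = 0 := Iff.rfl

theorem aux_poly_mem {K : Type} [Field K] (S : Subfield (RatFunc K)) (P : Polynomial K)
    (hC : ∀ n, RatFunc.C (P.coeff n) ∈ S) (hX : RatFunc.X ∈ S) :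
    algebraMap (Polynomial K) (RatFunc K) P ∈ S := by
  rw [P.as_sum_range_C_mul_X_pow, map_sum]
  refine sum_mem fun i _ => ?_
  rw [map_mul, map_pow, RatFunc.algebraMap_C, RatFunc.algebraMap_X]
  exact mul_mem (hC i) (pow_mem hX _)

theorem aux_top {K : Type} [Field K] (S : Subfield (RatFunc K))
    (hC : ∀ k, RatFunc.C k ∈ S) (hX : RatFunc.X ∈ S) (f : RatFunc K) : f ∈ S := by
  rw [← RatFunc.num_div_denom f]
  exact div_mem (aux_poly_mem S _ (fun n => hC _) hX) (aux_poly_mem S _ (fun n => hC _) hX)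

/-- The set where the chain rule holds is a subfield. -/
theorem aux_chain {K L : Type} [Field K] [Field L] (φ : RatFunc K →+* L)
    (D : Derivation ℤ L L) (d e : Derivation ℤ (RatFunc K) (RatFunc K)) (z : L)
    (hC : ∀ k, D (φ (RatFunc.C k)) = φ (d (RatFunc.C k)) + φ (e (RatFunc.C k)) * z)
    (hX : D (φ RatFunc.X) = φ (d RatFunc.X) + φ (e RatFunc.X) * z) (f : RatFunc K) :
    D (φ f) = φ (d f) + φ (e f) * z := by
  let S : Subfield (RatFunc K) :=
    { carrier := {f | D (φ f) = φ (d f) + φ (e f) * z}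
      mul_mem' := by
        intro x y hx hy
        simp only [Set.mem_ofPred_eq] at *
        simp only [map_mul, Derivation.leibniz, hx, hy, smul_eq_mul, map_add]
        ring
      one_mem' := by simp
      add_mem' := by
        intro x y hx hy
        simp only [Set.mem_ofPred_eq] at *
        simp only [hx, hy, map_add]
        ring
      zero_mem' := by simp
      neg_mem' := by
        intro x hx
        simp only [Set.mem_ofPred_eq] at *
        simp only [hx, map_neg]
        ring
      inv_mem' := by
        intro x hx
        simp only [Set.mem_ofPred_eq] at *
        simp only [map_inv₀, Derivation.leibniz_inv, hx, smul_eq_mul, map_mul, map_neg, map_pow]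
        ring }
  exact aux_top S hC hX f

/-- Polynomials killed by `d/dX` with coefficients in `T`. -/
theorem aux_expand_s14 {K : Type} [Field K] (p : ℕ) [CharP K p] (hp : 0 < p)
    (S : Subfield (RatFunc K)) (P : Polynomial K) (h : Polynomial.derivative P = 0)
    (hC : ∀ n, RatFunc.C (P.coeff n) ∈ S) (hX : RatFunc.X ^ p ∈ S) :
    algebraMap (Polynomial K) (RatFunc K) P ∈ S := by
  have : Fact p.Prime := ⟨(CharP.char_is_prime_or_zero K p).resolve_right hp.ne'⟩
  rw [P.as_sum_range_C_mul_X_pow, map_sum]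
  refine sum_mem fun i _ => ?_
  rw [map_mul, map_pow, RatFunc.algebraMap_C, RatFunc.algebraMap_X]
  by_cases hi : p ∣ i
  · obtain ⟨j, rfl⟩ := hi
    rw [pow_mul]
    exact mul_mem (hC _) (pow_mem hX _)
  · have : P.coeff i = 0 := by
      rw [← Polynomial.expand_contract p h hp.ne', Polynomial.coeff_expand hp, if_neg hi]
    simp [this]

theorem aux_D_poly {K : Type} [Field K] (d : Derivation ℤ K K)
    (D : Derivation ℤ (RatFunc K) (RatFunc K))
    (hC : ∀ k, D (RatFunc.C k) = RatFunc.C (d k)) (hX : D RatFunc.X = 0) (P : Polynomial K) :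
    D (algebraMap _ _ P) = algebraMap (Polynomial K) (RatFunc K)
      (P.sum fun n a => Polynomial.C (d a) * Polynomial.X ^ n) := by
  conv_lhs => rw [P.as_sum_support_C_mul_X_pow]
  simp [Polynomial.sum, hC, hX, RatFunc.algebraMap_C, RatFunc.algebraMap_X, Derivation.leibniz_pow]
  exact Finset.sum_congr rfl fun _ _ => mul_comm _ _

theorem aux_coeff {K : Type} [Field K] (d : Derivation ℤ K K)
    (D : Derivation ℤ (RatFunc K) (RatFunc K))
    (hC : ∀ k, D (RatFunc.C k) = RatFunc.C (d k)) (hX : D RatFunc.X = 0) (P : Polynomial K)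
    (h : D (algebraMap _ _ P) = 0) (n : ℕ) : d (P.coeff n) = 0 := by
  rw [aux_D_poly d D hC hX, map_eq_zero_iff _ (RatFunc.algebraMap_injective K)] at h
  have := congrArg (fun Q => Polynomial.coeff Q n) h
  simp only [Polynomial.sum, Polynomial.finsetSum_coeff, Polynomial.coeff_C_mul_X_pow,
    Polynomial.coeff_zero] at this
  by_cases hn : P.coeff n = 0
  · simp [hn]
  · simpa [hn] using this

theorem aux_D_der {K : Type} [Field K]
    (D : Derivation ℤ (RatFunc K) (RatFunc K))
    (hC : ∀ k, D (RatFunc.C k) = 0) (hX : D RatFunc.X = 1) (P : Polynomial K) :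
    D (algebraMap _ _ P) = algebraMap (Polynomial K) (RatFunc K) (Polynomial.derivative P) := by
  induction P using Polynomial.induction_on' with
  | add p q hp hq => simp [hp, hq]
  | monomial n a =>
    rw [← Polynomial.C_mul_X_pow_eq_monomial]
    simp [hC, hX, RatFunc.algebraMap_C, RatFunc.algebraMap_X, Derivation.leibniz_pow,
      Polynomial.derivative_X_pow]

theorem aux_pow_const {L : Type} [Field L] (p : ℕ) [CharP L p] (D : Derivation ℤ L L) (x : L) :
    D (x ^ p) = 0 := by
  simp [Derivation.leibniz_pow]

/-- Reduction to polynomials: constants of `d/dX` that are in `A`, a subfield containing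
all `p`-th powers. -/
theorem aux_kernel {K : Type} [Field K] (p : ℕ) [CharP K p] (hp : 0 < p)
    (A S : Subfield (RatFunc K)) (hA : ∀ x, x ^ p ∈ A)
    (D : Derivation ℤ (RatFunc K) (RatFunc K))
    (hC : ∀ k, D (RatFunc.C k) = 0) (hX : D RatFunc.X = 1)
    (hcoef : ∀ P : Polynomial K, algebraMap (Polynomial K) (RatFunc K) P ∈ A →
      ∀ n, RatFunc.C (P.coeff n) ∈ S) (hXS : RatFunc.X ^ p ∈ S)
    (f : RatFunc K) (hf : f ∈ A) (hDf : D f = 0) : f ∈ S := by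
  have : CharP (RatFunc K) p := charP_of_injective_algebraMap (RatFunc.C_injective (K := K)) p
  have key : ∀ P : Polynomial K, algebraMap (Polynomial K) (RatFunc K) P ∈ A →
      D (algebraMap (Polynomial K) (RatFunc K) P) = 0 →
      algebraMap (Polynomial K) (RatFunc K) P ∈ S := by
    intro P hP hDP
    rw [aux_D_der D hC hX, map_eq_zero_iff _ (RatFunc.algebraMap_injective K)] at hDP
    exact aux_expand_s14 p hp S P hDP (hcoef P hP) hXS
  have hd0 : algebraMap (Polynomial K) (RatFunc K) f.denom ≠ 0 := by
    simpa using f.denom_ne_zero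
  have e1 : algebraMap (Polynomial K) (RatFunc K) (f.denom ^ p) =
    (algebraMap (Polynomial K) (RatFunc K) f.denom) ^ p := by simp
  have e2 : algebraMap (Polynomial K) (RatFunc K) (f.num * f.denom ^ (p - 1)) =
      f * (algebraMap (Polynomial K) (RatFunc K) f.denom) ^ p := by
    have h1 : algebraMap (Polynomial K) (RatFunc K) f.num
        = f * algebraMap (Polynomial K) (RatFunc K) f.denom := by
      exact (div_eq_iff hd0).1 (RatFunc.num_div_denom f)
    obtain ⟨q, rfl⟩ : ∃ q, p = q + 1 := ⟨p - 1, by omega⟩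
    rw [map_mul, h1, map_pow, Nat.add_sub_cancel]
    ring
  have m1 := key _ (e1 ▸ hA _) (by rw [e1]; exact aux_pow_const p D _)
  have m2 := key (f.num * f.denom ^ (p - 1)) (by rw [e2]; exact mul_mem hf (hA _))
    (by rw [e2, Derivation.leibniz, aux_pow_const p D, hDf]; simp)
  rw [e2] at m2
  rw [e1] at m1
  have := div_mem m2 m1
  rwa [mul_div_cancel_right₀ _ (pow_ne_zero _ hd0)] at this

theorem aux_hom {K L : Type} [Field K] [Field L] (σ : K →+* L) (y : L)
    (hinj : ∀ P : Polynomial K, P ≠ 0 → P.eval₂ σ y ≠ 0) :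
    ∃ φ : RatFunc K →+* L, (∀ f, RatFunc.eval σ y f = φ f) ∧ (∀ k, φ (RatFunc.C k) = σ k) ∧
      φ RatFunc.X = y := by
  have hmon : nonZeroDivisors (Polynomial K) ≤
      (nonZeroDivisors L).comap (Polynomial.eval₂RingHom σ y) := by
    intro P hP
    rw [Submonoid.mem_comap, mem_nonZeroDivisors_iff_ne_zero]
    exact hinj P (nonZeroDivisors.ne_zero hP)
  refine ⟨RatFunc.liftRingHom (Polynomial.eval₂RingHom σ y) hmon, ?_, ?_, ?_⟩
  · intro f
    rw [RatFunc.liftRingHom_apply]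
    rfl
  · intro k
    rw [← RatFunc.algebraMap_C]
    simp
  · rw [← RatFunc.algebraMap_X]
    simp

theorem aux_const_comp {K L : Type} [Field K] [Field L] (φ : RatFunc K →+* L)
    (E : Derivation ℤ L L) (hC : ∀ k, E (φ (RatFunc.C k)) = 0) (hX : E (φ RatFunc.X) = 0)
    (g : RatFunc K) : E (φ g) = 0 := by
  have : g ∈ (auxConst E).comap φ := aux_top _ hC hX g
  exact this

/-- Let `F` be a field of characteristic `p > 0`. Identify
`F(t,x₁)` with `RatFunc (RatFunc F)` (innermost variable `t`, then `x₁`) and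
`F(t,x₁,x₂)` with `RatFunc (RatFunc (RatFunc F))` (innermost `t`, then `x₁`, outermost `x₂`).
Let `f ∈ F(t,x₁)` and `a, b, c ∈ F(t)` with `a ≠ 0` and `b/a ∉ F(t^p)`. If
`f(t, a(t)x₁ + b(t)x₂ + c(t))` lies in the subfield `F(t^p, x₁, x₂)` of `F(t,x₁,x₂)`, then
`f` lies in the subfield `F(t^p, x₁^p)` of `F(t,x₁)`. -/
theorem mem_Ftp_x1p_of_subst (F : Type) [Field F] (p : ℕ) [CharP F p] (hp : 0 < p)
    (f : RatFunc (RatFunc F)) (a b c : RatFunc F) (ha : a ≠ 0)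
    (hba : b / a ∉ Subfield.closure (Set.range (ratC F) ∪ {RatFunc.X ^ p}))
    (hsubst :
      RatFunc.eval ((ratC3 F).comp (ratC2 F))
        (ratC3 F (ratC2 F a * RatFunc.X) + ratC3 F (ratC2 F b) * RatFunc.X +
          ratC3 F (ratC2 F c)) f
      ∈ Subfield.closure
          (Set.range (((ratC3 F).comp (ratC2 F)).comp (ratC F))
            ∪ {ratC3 F (ratC2 F (RatFunc.X ^ p)), ratC3 F RatFunc.X, RatFunc.X})) :
    f ∈ Subfield.closure
        (Set.range ((ratC2 F).comp (ratC F))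
          ∪ {ratC2 F (RatFunc.X ^ p), RatFunc.X ^ p}) := by
  have hprime : p.Prime := (CharP.char_is_prime_or_zero F p).resolve_right hp.ne'
  have c1 : CharP (RatFunc F) p := charP_of_injective_algebraMap (RatFunc.C_injective (K := F)) p
  have c2 : CharP (RatFunc (RatFunc F)) p :=
    charP_of_injective_algebraMap (RatFunc.C_injective (K := RatFunc F)) p
  obtain ⟨d0, d0C, d0X⟩ := aux_exists_der (0 : Derivation ℤ F F) 1
  obtain ⟨d1, d1C, d1X⟩ := aux_exists_der d0 0
  obtain ⟨D, DC, DX⟩ := aux_exists_der d1 0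
  obtain ⟨e1, e1C, e1X⟩ := aux_exists_der (0 : Derivation ℤ (RatFunc F) (RatFunc F)) (ratC2 F b)
  obtain ⟨E, EC, EX⟩ := aux_exists_der e1 (-(ratC3 F (ratC2 F a)))
  obtain ⟨dx, dxC, dxX⟩ := aux_exists_der (0 : Derivation ℤ (RatFunc F) (RatFunc F)) 1
  have d0C' : ∀ k, d0 (RatFunc.C k) = 0 := fun k => by simp [d0C]
  have dxC' : ∀ k, dx (RatFunc.C k) = 0 := fun k => by simp [dxC]
  have ker0 : ∀ k, d0 k = 0 → k ∈ Subfield.closure (Set.range (ratC F) ∪ {RatFunc.X ^ p}) := by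
    intro k hk
    refine aux_kernel p hp ⊤ _ (fun _ => Subfield.mem_top _) d0 d0C' d0X (fun P _ n => ?_) ?_ k
      (Subfield.mem_top _) hk
    · exact Subfield.subset_closure (Or.inl ⟨_, rfl⟩)
    · exact Subfield.subset_closure (Or.inr rfl)
  have hb : b ≠ 0 := by
    rintro rfl
    exact hba (by simp [zero_mem])
  set σ := (ratC3 F).comp (ratC2 F) with hσ
  set y := ratC3 F (ratC2 F a * RatFunc.X) + ratC3 F (ratC2 F b) * RatFunc.X +
          ratC3 F (ratC2 F c) with hy
  have hev : ∀ P : Polynomial (RatFunc F), P.eval₂ σ y = algebraMap _ _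
      ((P.map (ratC2 F)).comp (Polynomial.C (ratC2 F b) * Polynomial.X +
        Polynomial.C (ratC2 F a * RatFunc.X + ratC2 F c))) := by
    intro P
    have : Polynomial.eval₂RingHom σ y = (algebraMap (Polynomial (RatFunc (RatFunc F))) _).comp
        ((Polynomial.compRingHom (Polynomial.C (ratC2 F b) * Polynomial.X +
        Polynomial.C (ratC2 F a * RatFunc.X + ratC2 F c))).comp
          (Polynomial.mapRingHom (ratC2 F))) := by
      apply Polynomial.ringHom_ext
      · intro k
        simp [σ, RatFunc.algebraMap_C, ratC3]
      · simp [y, RatFunc.algebraMap_C, RatFunc.algebraMap_X, ratC3]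
        ring
    exact congrArg (fun h => h P) this
  have hinj : ∀ P : Polynomial (RatFunc F), P ≠ 0 → P.eval₂ σ y ≠ 0 := by
    intro P hP h
    rw [hev, map_eq_zero_iff _ (RatFunc.algebraMap_injective _)] at h
    have hb' : ratC2 F b ≠ 0 := (map_ne_zero _).2 hb
    rw [Polynomial.comp_eq_zero_iff] at h
    rcases h with h | ⟨_, h⟩
    · exact hP ((Polynomial.map_eq_zero _).1 h)
    · have := congrArg (fun Q => Polynomial.coeff Q 1) h
      simp at this
      exact hb this
  obtain ⟨φ, hφev', hφC, hφX⟩ := aux_hom σ y hinj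
  have hφev := hφev' f
  have Dσ : ∀ k, D (σ k) = σ (d0 k) := by
    intro k
    simp only [σ, RingHom.comp_apply, ratC3, ratC2, DC, d1C]
  have Eσ : ∀ k, E (σ k) = 0 := by
    intro k
    simp [σ, ratC3, ratC2, EC, e1C]
  have hyσ : y = σ a * ratC3 F RatFunc.X + σ b * RatFunc.X + σ c := by
    simp [y, σ]
  have Dx1 : D (ratC3 F RatFunc.X) = 0 := by simp [ratC3, DC, d1X]
  have Ex1 : E (ratC3 F RatFunc.X) = σ b := by
    simp only [ratC3, EC, e1X]; rfl
  have EX' : E RatFunc.X = - σ a := EX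
  have Dy : D y = σ (d0 a) * ratC3 F RatFunc.X + σ (d0 b) * RatFunc.X + σ (d0 c) := by
    simp only [hyσ, map_add, Derivation.leibniz, Dσ, Dx1, DX, smul_eq_mul]
    ring
  have Ey : E y = 0 := by
    simp only [hyσ, map_add, Derivation.leibniz, Eσ, Ex1, EX', smul_eq_mul]
    ring
  have Eφ : ∀ g, E (φ g) = 0 := aux_const_comp φ E (fun k => by rw [hφC, Eσ]) (by rw [hφX, Ey])
  have hD : D (φ f) = 0 := by
    rw [← hφev, ← mem_auxConst]
    refine (Subfield.closure_le.2 ?_) hsubst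
    rintro x (⟨k, rfl⟩ | rfl | rfl | rfl)
    · change D (σ (RatFunc.C k)) = 0
      rw [Dσ, d0C', map_zero]
    · change D (σ (RatFunc.X ^ p)) = 0
      rw [Dσ, aux_pow_const p d0, map_zero]
    · exact Dx1
    · exact DX
  have hch : D (φ f) = φ (d1 f) + φ (dx f) * D y := by
    apply aux_chain
    · intro k
      rw [hφC, Dσ, d1C, dxC', hφC]; simp
    · rw [hφX, d1X, dxX]; simp
  have hdx : dx f = 0 := by
    by_contra hne
    have hne' : φ (dx f) ≠ 0 := (map_ne_zero _).2 hne
    have h1 : D y = φ (-(d1 f) / dx f) := by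
      rw [map_div₀, map_neg, eq_div_iff hne']
      rw [hD] at hch
      linear_combination -hch
    have h2 : E (D y) = 0 := by rw [h1, Eφ]
    rw [Dy] at h2
    simp only [map_add, Derivation.leibniz, Eσ, Ex1, EX', smul_eq_mul] at h2
    have h3 : σ (d0 a * b - d0 b * a) = σ 0 := by
      simp only [map_sub, map_mul, map_zero]
      linear_combination h2
    have h4 := σ.injective h3
    apply hba
    apply ker0
    rw [Derivation.leibniz_div]
    have : a * d0 b - b * d0 a = 0 := by linear_combination -h4
    simp [this]
  have hd1 : d1 f = 0 := by
    rw [hD, hdx] at hch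
    have : φ (d1 f) = 0 := by simpa using hch.symm
    exact (map_eq_zero _).1 this
  refine aux_kernel p hp (auxConst d1) _ (fun x => ?_) dx dxC' dxX (fun P hP n => ?_) ?_ f hd1 hdx
  · exact aux_pow_const p d1 x
  · have hk := ker0 _ (aux_coeff d0 d1 d1C d1X P hP n)
    have : Subfield.closure (Set.range (ratC F) ∪ {RatFunc.X ^ p}) ≤
      (Subfield.closure (Set.range ((ratC2 F).comp (ratC F))
          ∪ {ratC2 F (RatFunc.X ^ p), RatFunc.X ^ p})).comap (ratC2 F) := by
      rw [Subfield.closure_le]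
      rintro x (⟨k, rfl⟩ | rfl)
      · exact Subfield.subset_closure (Or.inl ⟨k, rfl⟩)
      · exact Subfield.subset_closure (Or.inr (Or.inl rfl))
    exact this hk
  · exact Subfield.subset_closure (Or.inr (Or.inr rfl))
end
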